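/- arXiv:1805.08965 — 5 statements merged into one kernel-verified Lean document; each statement's English description precedes it below -/
import Mathlib

section
/- Let Π be the HNN extension of a group G relative to an isomorphism φ between subgroups A and B of G. If A is an RS-subgroup of G or B is an RS-subgroup of G, then Π is a cut-group. -/
/-- A group `G` is a *cut-group* if every central unit of the integral group ring `ℤ[G]`
is trivial, i.e. of the form `±g` for some `g ∈ G`. -/
def IsCutGroup (G : Type*) [Group G] : Prop :=
  ∀ u : (MonoidAlgebra ℤ G)ˣ,
    (u : MonoidAlgebra ℤ G) ∈ Subring.center (MonoidAlgebra ℤ G) →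
    ∃ g : G, (u : MonoidAlgebra ℤ G) = MonoidAlgebra.of ℤ G g ∨
      (u : MonoidAlgebra ℤ G) = -(MonoidAlgebra.of ℤ G g)

/-- A torsion element `x` of a group `G` is an *RS-element* of `G` if for every positive
integer `j` coprime to the order of `x`, `x ^ j` is conjugate in `G` to `x` or to `x⁻¹`. -/
def IsRSElement {G : Type*} [Group G] (x : G) : Prop :=
  ∀ j : ℕ, 0 < j → Nat.Coprime j (orderOf x) → (IsConj (x ^ j) x ∨ IsConj (x ^ j) x⁻¹)

/-- A subgroup `A` of `G` is an *RS-subgroup* of `G` if every torsion element of `A`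
is an RS-element of `G`. -/
def IsRSSubgroup {G : Type*} [Group G] (A : Subgroup G) : Prop :=
  ∀ a ∈ A, IsOfFinOrder a → IsRSElement a

/-!
Let `u` be a central unit of `ℤ[Π]`. Its support lies in the FC-center of `Π`, and the projection
of the FC-center onto its torsion-free abelian quotient grades the center of its group ring. That
center is reduced and has no idempotents except `0` and `1`, so `u` is homogeneous. Hence
`w = u * star u`, the product of `u` with its image under the standard involution, is supported on
torsion elements, which generate a finite group `N` by Dietzmann's lemma. If all torsion elements
of the FC-center are RS-elements, the eigenvalues of `w` on `ℚ̄[N]` are Galois invariant algebraic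
units, that is `±1`, and the trace of the regular representation bounds the coefficient of `w` at
`1` by `1`. That coefficient is the sum of the squares of the coefficients of `u`, so `u` is
trivial.

In an HNN extension, a torsion element of the FC-center has finite normal closure. By Britton's
lemma a normal subgroup not contained in the base group has elements of unbounded length in the
stable letter `t`, so this closure lies in the base group and, being stable under conjugation by
`t` and `t⁻¹`, in `A ⊓ B`.
-/

open scoped MonoidAlgebra commutatorElement

namespace GroupRing

open MonoidAlgebra

section Involution

variable {R G : Type*} [CommSemiring R] [Group G]

/-- The standard involution `∑ a_g g ↦ ∑ a_g g⁻¹` of a group ring; the coefficients are not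
conjugated. -/
noncomputable scoped instance : StarRing R[G] where
  star x := mapDomain (·⁻¹) x
  star_involutive x := by
    simp [MonoidAlgebra.mapDomain, ← Finsupp.mapDomain_comp]
  star_add x y := mapDomain_add _ x y
  star_mul x y := by
    induction x using MonoidAlgebra.induction_linear with
    | zero => simp
    | add x x' hx hx' => simp only [add_mul, mul_add, mapDomain_add, hx, hx']
    | single g r =>
      induction y using MonoidAlgebra.induction_linear with
      | zero => simp
      | add y y' hy hy' => simp only [add_mul, mul_add, mapDomain_add, hy, hy']
      | single h s => simp [single_mul_single, mul_comm]

lemma coeff_star (x : R[G]) (g : G) : (star x).coeff g = x.coeff g⁻¹ :=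
  Finsupp.mapDomain_equiv_apply (f := Equiv.inv G) x.coeff g

lemma coeff_mul_star_self_one (x : R[G]) :
    (x * star x).coeff 1 = ∑ g ∈ x.coeff.support, x.coeff g ^ 2 := by
  simp [coeff_mul_apply_left, Finsupp.sum, coeff_star, sq]

end Involution

section Ordered

variable {R G : Type*} [CommRing R] [LinearOrder R] [IsStrictOrderedRing R] [Group G]

lemma sum_sq_le_coeff_mul_star_self_one (x : R[G]) (s : Finset G) :
    ∑ g ∈ s, x.coeff g ^ 2 ≤ (x * star x).coeff 1 := by
  classical
  calc ∑ g ∈ s, x.coeff g ^ 2 ≤ ∑ g ∈ s ∪ x.coeff.support, x.coeff g ^ 2 :=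
        Finset.sum_le_sum_of_subset_of_nonneg Finset.subset_union_left fun _ _ _ ↦ sq_nonneg _
    _ = ∑ g ∈ x.coeff.support, x.coeff g ^ 2 :=
        (Finset.sum_subset Finset.subset_union_right fun g _ hg ↦ by simpa using hg).symm
    _ = (x * star x).coeff 1 := (coeff_mul_star_self_one x).symm

lemma sq_coeff_le_coeff_mul_star_self_one (x : R[G]) (g : G) :
    x.coeff g ^ 2 ≤ (x * star x).coeff 1 := by
  simpa using sum_sq_le_coeff_mul_star_self_one x {g}

lemma eq_zero_of_mul_star_self_eq_zero {x : R[G]} (h : x * star x = 0) : x = 0 := by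
  ext g
  simpa [h, sq_nonpos_iff] using sq_coeff_le_coeff_mul_star_self_one x g

end Ordered

section Center

variable {R G : Type*} [Group G]

lemma mem_center_iff_coeff [CommRing R] {x : R[G]} :
    x ∈ Subring.center R[G] ↔ ∀ g k, x.coeff (g * k * g⁻¹) = x.coeff k := by
  have commute_iff (g : G) :
      single g (1 : R) * x = x * single g 1 ↔ ∀ k, x.coeff (g * k * g⁻¹) = x.coeff k := by
    simp only [MonoidAlgebra.ext_iff, Finsupp.ext_iff, coeff_single_mul_apply,
      coeff_mul_single_apply, one_mul, mul_one]
    refine ⟨fun h k ↦ ?_, fun h k ↦ ?_⟩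
    · simpa using (h (g * k)).symm
    · simpa using (h (g⁻¹ * k)).symm
  rw [Subring.mem_center_iff]
  refine ⟨fun h g ↦ (commute_iff g).1 (h _), fun h y ↦ ?_⟩
  induction y using MonoidAlgebra.induction_on with
  | of g => exact (commute_iff g).2 (h g)
  | add a b ha hb => rw [add_mul, mul_add, ha, hb]
  | smul r a ha => rw [smul_mul_assoc, mul_smul_comm, ha]

lemma coeff_eq_of_isConj [CommRing R] {x : R[G]} (hx : x ∈ Subring.center R[G]) {g h : G}
    (hgh : IsConj g h) : x.coeff g = x.coeff h := by
  obtain ⟨c, rfl⟩ := isConj_iff.1 hgh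
  exact (mem_center_iff_coeff.1 hx c g).symm

instance [CommRing R] [LinearOrder R] [IsStrictOrderedRing R] :
    IsReduced (Subring.center R[G]) := by
  refine (isReduced_iff_pow_one_lt 2 one_lt_two).2 fun ⟨x, hx⟩ hsq ↦ Subtype.ext ?_
  have hsq : x * x = 0 := by simpa [sq] using congrArg Subtype.val hsq
  have hcomm : Commute (star x) x := Subring.mem_center_iff.1 hx _
  have hselfAdjoint : (x * star x) * star (x * star x) = 0 := by
    rw [star_mul, star_star, hcomm.mul_mul_mul_comm, hsq, zero_mul]
  exact eq_zero_of_mul_star_self_eq_zero (eq_zero_of_mul_star_self_eq_zero hselfAdjoint)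

end Center

section Int

variable {G : Type*} [Group G] {x : ℤ[G]}

lemma eq_single_of_coeff_mul_star_self_one_le_one (h : (x * star x).coeff 1 ≤ 1) {g : G}
    (hg : x.coeff g ≠ 0) : x = single g (x.coeff g) := by
  classical
  ext k
  rw [coeff_single, Finsupp.single_apply]
  split_ifs with hgk
  · rw [hgk]
  by_contra hk
  have hsum := sum_sq_le_coeff_mul_star_self_one x {g, k}
  rw [Finset.sum_pair hgk] at hsum
  linarith [sq_pos_of_ne_zero hg, sq_pos_of_ne_zero hk]

/-- Since `e (1 - star e)` is annihilated by its own adjoint, a central idempotent `e` equals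
`e * star e`, and its coefficient at `1` is a sum of squares which includes its own square. -/
lemma eq_zero_or_eq_one_of_isIdempotentElem (hx : x ∈ Subring.center ℤ[G])
    (he : IsIdempotentElem x) : x = 0 ∨ x = 1 := by
  have hcomm : Commute (1 - star x) (1 - x) :=
    Subring.mem_center_iff.1 (sub_mem (one_mem _) hx) _
  have hstar : x * star x = x := by
    refine (sub_eq_zero.1 (eq_zero_of_mul_star_self_eq_zero ?_)).symm
    rw [← mul_one_sub, star_mul, star_sub, star_one, star_star, hcomm.mul_mul_mul_comm,
      he.mul_one_sub_self, zero_mul]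
  have hle : x.coeff 1 ^ 2 ≤ x.coeff 1 := by
    simpa [hstar] using sq_coeff_le_coeff_mul_star_self_one x 1
  by_cases h1 : x.coeff 1 = 0
  · left
    ext g
    simpa [hstar, h1, sq_nonpos_iff] using sq_coeff_le_coeff_mul_star_self_one x g
  · right
    have h1 : x.coeff 1 = 1 := by
      have := sq_pos_of_ne_zero h1
      nlinarith
    have hsingle : x = single 1 (x.coeff 1) :=
      eq_single_of_coeff_mul_star_self_one_le_one (by rw [hstar, h1]) (by simp [h1])
    rw [hsingle, h1, one_def]

lemma exists_eq_of_or_eq_neg_of (hx : x ≠ 0) (h : (x * star x).coeff 1 ≤ 1) :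
    ∃ g, x = of ℤ G g ∨ x = -of ℤ G g := by
  obtain ⟨g, hg⟩ : ∃ g, x.coeff g ≠ 0 := by
    by_contra! hzero
    exact hx (MonoidAlgebra.ext (Finsupp.ext hzero))
  have hsq : x.coeff g ^ 2 ≤ 1 := (sq_coeff_le_coeff_mul_star_self_one x g).trans h
  rw [eq_single_of_coeff_mul_star_self_one_le_one h hg]
  refine ⟨g, ?_⟩
  rcases Int.abs_le_one_iff.1 ((sq_le_one_iff_abs_le_one _).1 hsq) with hzero | hone | hneg
  · exact absurd hzero hg
  · simp [hone]
  · simp [hneg]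

end Int

/-! ### Homogeneity of central units -/

section UniqueProducts

instance (Q : Type*) [CommGroup Q] [IsMulTorsionFree Q] : TwoUniqueProds Q :=
  have : TwoUniqueSums (Additive Q) :=
    .of_injective_addHom (DivisibleHull.coeAddMonoidHom (Additive Q)).toAddHom
      DivisibleHull.coe_injective inferInstance
  inferInstanceAs (TwoUniqueProds (Multiplicative (Additive Q)))

variable {Z Q : Type*}

lemma mul_eq_one_of_uniqueMul [Semiring Z] [NoZeroDivisors Z] [Monoid Q] {U V : Z[Q]}
    (hUV : U * V = 1) {a b : Q} (ha : a ∈ U.coeff.support) (hb : b ∈ V.coeff.support)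
    (hab : UniqueMul U.coeff.support V.coeff.support a b) : a * b = 1 := by
  classical
  by_contra hne
  have hcoeff : (U * V).coeff (a * b) = U.coeff a * V.coeff b := coeff_mul_mul_of_uniqueMul hab
  rw [hUV, one_def, coeff_single, Finsupp.single_apply, if_neg (Ne.symm hne)] at hcoeff
  rw [Finsupp.mem_support_iff] at ha hb
  exact mul_ne_zero ha hb hcoeff.symm

lemma mul_eq_one_of_coeff_ne_zero [Semiring Z] [NoZeroDivisors Z] [Monoid Q] [TwoUniqueProds Q]
    {U V : Z[Q]} (hUV : U * V = 1) {a b : Q} (ha : U.coeff a ≠ 0) (hb : V.coeff b ≠ 0) :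
    a * b = 1 := by
  rw [← Finsupp.mem_support_iff] at ha hb
  have hU : 0 < U.coeff.support.card := Finset.card_pos.2 ⟨a, ha⟩
  have hV : 0 < V.coeff.support.card := Finset.card_pos.2 ⟨b, hb⟩
  have hcard : ¬ 1 < U.coeff.support.card * V.coeff.support.card := by
    intro hcard
    obtain ⟨p, hp, p', hp', hne, hup, hup'⟩ := TwoUniqueProds.uniqueMul_of_one_lt_card hcard
    rw [Finset.mem_product] at hp hp'
    have hprod : p.1 * p.2 = p'.1 * p'.2 :=
      (mul_eq_one_of_uniqueMul hUV hp.1 hp.2 hup).trans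
        (mul_eq_one_of_uniqueMul hUV hp'.1 hp'.2 hup').symm
    exact hne (Prod.ext_iff.2 (hup' hp.1 hp.2 hprod))
  refine mul_eq_one_of_uniqueMul hUV ha hb fun x y hx hy _ ↦ ⟨?_, ?_⟩
  · exact Finset.card_le_one.1 (by nlinarith) _ hx _ ha
  · exact Finset.card_le_one.1 (by nlinarith) _ hy _ hb

lemma sum_coeff_mul_coeff_inv [Semiring Z] [Group Q] {U V : Z[Q]} (hUV : U * V = 1) :
    ∑ a ∈ U.coeff.support, U.coeff a * V.coeff a⁻¹ = 1 := by
  simpa [coeff_mul_apply_left, Finsupp.sum] using congrArg (fun W : Z[Q] ↦ W.coeff 1) hUV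

variable [CommRing Z] [IsReduced Z] {U V : Z[Q]}

lemma coeff_mul_coeff_eq_zero [Monoid Q] [TwoUniqueProds Q] (hUV : U * V = 1) {a b : Q}
    (hab : a * b ≠ 1) : U.coeff a * V.coeff b = 0 := by
  rw [← Ideal.mem_bot, ← Ideal.zero_eq_bot, ← nilradical_eq_zero Z, nilradical_eq_sInf,
    Ideal.mem_sInf]
  intro P (hP : P.IsPrime)
  have hmod : mapRingHom Q (Ideal.Quotient.mk P) U * mapRingHom Q (Ideal.Quotient.mk P) V = 1 := by
    rw [← map_mul, hUV, map_one]
  rw [← Ideal.Quotient.eq_zero_iff_mem, map_mul, ← coeff_mapRingHom, ← coeff_mapRingHom]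
  by_contra hne
  exact hab (mul_eq_one_of_coeff_ne_zero hmod (left_ne_zero_of_mul hne) (right_ne_zero_of_mul hne))

variable [Group Q] [TwoUniqueProds Q]

/-- The elements `U_a V_{a⁻¹}` are orthogonal idempotents with sum `1`. -/
lemma isIdempotentElem_coeff_mul_coeff_inv (hUV : U * V = 1) (a : Q) :
    IsIdempotentElem (U.coeff a * V.coeff a⁻¹) := by
  have horth (b : Q) (hb : b ≠ a) : U.coeff a * V.coeff a⁻¹ * (U.coeff b * V.coeff b⁻¹) = 0 := by
    have := coeff_mul_coeff_eq_zero hUV (a := b) (b := a⁻¹) (by rwa [Ne, mul_inv_eq_one])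
    linear_combination U.coeff a * V.coeff b⁻¹ * this
  by_cases ha : U.coeff a = 0
  · simp [ha, IsIdempotentElem]
  calc U.coeff a * V.coeff a⁻¹ * (U.coeff a * V.coeff a⁻¹)
      = U.coeff a * V.coeff a⁻¹ * ∑ b ∈ U.coeff.support, U.coeff b * V.coeff b⁻¹ := by
        rw [Finset.mul_sum, Finset.sum_eq_single a (fun b _ ↦ horth b) (by simp [ha])]
    _ = U.coeff a * V.coeff a⁻¹ := by rw [sum_coeff_mul_coeff_inv hUV, mul_one]

theorem exists_forall_ne_coeff_eq_zero [Nontrivial Z]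
    (hidem : ∀ e : Z, IsIdempotentElem e → e = 0 ∨ e = 1) (hUV : U * V = 1) :
    ∃ a, ∀ b ≠ a, U.coeff b = 0 := by
  have hsum : ∑ b ∈ U.coeff.support, U.coeff b * V.coeff b⁻¹ ≠ 0 := by
    rw [sum_coeff_mul_coeff_inv hUV]
    exact one_ne_zero
  obtain ⟨a, -, ha⟩ := Finset.exists_ne_zero_of_sum_ne_zero hsum
  have ha := (hidem _ (isIdempotentElem_coeff_mul_coeff_inv hUV a)).resolve_left ha
  refine ⟨a, fun b hb ↦ ?_⟩
  have := coeff_mul_coeff_eq_zero hUV (a := b) (b := a⁻¹) (by rwa [Ne, mul_inv_eq_one])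
  linear_combination U.coeff a * this - U.coeff b * ha

end UniqueProducts

section Grading

variable {R D Q : Type*}

/-- The coaction `∑ a_g g ↦ ∑ q(g) ⊗ a_g g` of `R[Q]` on `R[D]` encoding the grading of `R[D]`
induced by `q : D →* Q`: the coefficient at `h` is the homogeneous component of degree `h`. -/
noncomputable def coaction [Semiring R] [Monoid D] [Monoid Q] (q : D →* Q) : R[D] →+* R[D][Q] :=
  curryRingEquiv.toRingHom.comp (mapDomainRingHom R (q.prod (MonoidHom.id D)))

lemma coeff_coeff_coaction [Semiring R] [Monoid D] [Monoid Q] (q : D →* Q) (x : R[D]) (h : Q)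
    (g : D) [Decidable (q g = h)] :
    ((coaction q x).coeff h).coeff g = if q g = h then x.coeff g else 0 := by
  induction x using MonoidAlgebra.induction_linear with
  | zero => simp
  | add x y hx hy => simp only [map_add, coeff_add, Finsupp.add_apply, hx, hy]; split_ifs <;> simp
  | single k r =>
    classical
    have hk : coaction q (single k r) = single (q k) (single k r) := by simp [coaction]
    rw [hk, coeff_single, coeff_single, Finsupp.single_apply]
    by_cases hkg : k = g
    · subst hkg
      split_ifs <;> simp
    · split_ifs <;> simp [hkg]

variable [Group D] [CommGroup Q]

lemma coeff_coaction_mem_center [CommRing R] (q : D →* Q) {x : R[D]}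
    (hx : x ∈ Subring.center R[D]) (h : Q) :
    (coaction q x).coeff h ∈ Subring.center R[D] := by
  classical
  rw [mem_center_iff_coeff] at hx ⊢
  intro g k
  have hq : q (g * k * g⁻¹) = q k := by simp
  rw [coeff_coeff_coaction, coeff_coeff_coaction, hx, hq]

lemma exists_mapRingHom_eq_coaction [CommRing R] (q : D →* Q) {x : R[D]}
    (hx : x ∈ Subring.center R[D]) :
    ∃ X : (Subring.center R[D])[Q],
      mapRingHom Q (Subring.center R[D]).subtype X = coaction q x := by
  have : coaction q x ∈ Set.range
      (MonoidAlgebra.map (M := Q) (Subring.center R[D]).subtype.toAddMonoidHom) := by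
    rw [range_map]
    exact fun h ↦ ⟨⟨_, coeff_coaction_mem_center q hx h⟩, rfl⟩
  exact this

theorem exists_forall_coeff_ne_zero_eq [TwoUniqueProds Q] (q : D →* Q) {u v : ℤ[D]}
    (hu : u ∈ Subring.center ℤ[D]) (hv : v ∈ Subring.center ℤ[D]) (huv : u * v = 1) :
    ∃ h : Q, ∀ g, u.coeff g ≠ 0 → q g = h := by
  classical
  obtain ⟨U, hU⟩ := exists_mapRingHom_eq_coaction q hu
  obtain ⟨V, hV⟩ := exists_mapRingHom_eq_coaction q hv
  have hinj : Function.Injective (mapRingHom Q (Subring.center ℤ[D]).subtype) :=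
    map_injective (Subring.center ℤ[D]).subtype.toAddMonoidHom Subtype.val_injective
  have hUV : U * V = 1 := hinj (by rw [map_mul, hU, hV, ← map_mul, huv, map_one, map_one])
  have hidem (e : Subring.center ℤ[D]) (he : IsIdempotentElem e) : e = 0 ∨ e = 1 :=
    (eq_zero_or_eq_one_of_isIdempotentElem e.2 (congrArg Subtype.val he)).imp
      Subtype.ext Subtype.ext
  obtain ⟨h, hh⟩ := exists_forall_ne_coeff_eq_zero hidem hUV
  refine ⟨h, fun g hg ↦ ?_⟩
  by_contra hne
  have hcoeff := coeff_coeff_coaction q u (q g) g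
  rw [← hU, coeff_mapRingHom, hh _ hne, if_pos rfl] at hcoeff
  exact hg (by simpa using hcoeff.symm)

end Grading

end GroupRing

/-! ### The FC-center -/

section FCCenter

variable {G : Type*} [Group G]

/-- The FC-center of `G`: the subgroup of the elements with only finitely many conjugates. -/
def fcCenter (G : Type*) [Group G] : Subgroup G where
  carrier := {x | (conjugatesOf x).Finite}
  one_mem' := by
    have : conjugatesOf (1 : G) = {1} := by ext; simp [conjugatesOf, isConj_iff, eq_comm]
    simp [this]
  mul_mem' {x y} hx hy := by
    refine (hx.mul hy).subset fun z hz ↦ ?_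
    obtain ⟨c, rfl⟩ := isConj_iff.1 hz
    exact Set.mem_mul.2 ⟨c * x * c⁻¹, isConj_iff.2 ⟨c, rfl⟩, c * y * c⁻¹, isConj_iff.2 ⟨c, rfl⟩,
      conj_mul⟩
  inv_mem' {x} hx := by
    refine hx.inv.subset fun z hz ↦ ?_
    obtain ⟨c, rfl⟩ := isConj_iff.1 hz
    exact isConj_iff.2 ⟨c, by simp [mul_assoc]⟩

namespace fcCenter

lemma mem_iff {x : G} : x ∈ fcCenter G ↔ (conjugatesOf x).Finite := Iff.rfl

instance : (fcCenter G).Normal where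
  conj_mem x hx g := by
    rwa [mem_iff, ← (isConj_iff.2 ⟨g, rfl⟩ : IsConj x (g * x * g⁻¹)).conjugatesOf_eq]

lemma finiteIndex_centralizer {x : G} (hx : x ∈ fcCenter G) :
    (Subgroup.centralizer {x}).FiniteIndex := by
  have horbit : MulAction.orbit (ConjAct G) x = conjugatesOf x := by
    ext y
    rw [ConjAct.mem_orbit_conjAct, isConj_comm]
    rfl
  have hindex := MulAction.index_stabilizer (ConjAct G) x
  rw [horbit] at hindex
  have : (MulAction.stabilizer (ConjAct G) x).FiniteIndex :=
    ⟨by rw [hindex]; exact Set.ncard_ne_zero_of_mem mem_conjugatesOf_self hx⟩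
  rw [ConjAct.stabilizer_eq_centralizer] at this
  exact this

lemma finiteIndex_center_closure {S : Set G} (hS : S.Finite) (hSG : S ⊆ fcCenter G) :
    (Subgroup.center (Subgroup.closure S)).FiniteIndex := by
  have : Finite S := hS
  have hcentralizer : Subgroup.centralizer S = ⨅ s : S, Subgroup.centralizer {(s : G)} := by
    ext x
    simp [Subgroup.mem_iInf, Subgroup.mem_centralizer_iff]
  have : (Subgroup.centralizer S).FiniteIndex := by
    rw [hcentralizer]
    exact Subgroup.finiteIndex_iInf fun s ↦ finiteIndex_centralizer (hSG s.2)
  refine Subgroup.finiteIndex_of_le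
    (H := (Subgroup.centralizer S).subgroupOf (Subgroup.closure S)) fun x hx ↦ ?_
  rw [Subgroup.mem_subgroupOf, ← Subgroup.centralizer_closure] at hx
  exact Subgroup.mem_center_iff.2 fun g ↦ Subtype.ext (hx g g.2)

end fcCenter

lemma commutatorElement_mul_mul_of_mem_center {z w : G} (hz : z ∈ Subgroup.center G)
    (hw : w ∈ Subgroup.center G) (a b : G) : ⁅a * z, b * w⁆ = ⁅a, b⁆ := by
  rw [Subgroup.mem_center_iff] at hz hw
  have hab : a * z * (b * w) = a * b * (z * w) := Commute.mul_mul_mul_comm (hz b).symm a w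
  have hba : b * w * (a * z) = b * a * (z * w) := by
    rw [Commute.mul_mul_mul_comm (hw a).symm b z, hw z]
  calc ⁅a * z, b * w⁆ = a * z * (b * w) * (b * w * (a * z))⁻¹ := by
        simp [commutatorElement_def, mul_assoc]
    _ = ⁅a, b⁆ := by simp [hab, hba, commutatorElement_def, mul_assoc]

lemma finite_commutatorSet_of_finiteIndex_center [(Subgroup.center G).FiniteIndex] :
    Finite (commutatorSet G) := by
  refine (Set.finite_range fun p : (G ⧸ Subgroup.center G) × (G ⧸ Subgroup.center G) ↦
    ⁅p.1.out, p.2.out⁆).subset ?_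
  rintro _ ⟨a, b, rfl⟩
  obtain ⟨z, hz⟩ := QuotientGroup.mk_out_eq_mul (Subgroup.center G) a
  obtain ⟨w, hw⟩ := QuotientGroup.mk_out_eq_mul (Subgroup.center G) b
  exact ⟨(a, b), by simp only [hz, hw, commutatorElement_mul_mul_of_mem_center z.2 w.2]⟩

namespace fcCenter

lemma finite_commutator_closure {S : Set G} (hS : S.Finite) (hSG : S ⊆ fcCenter G) :
    Finite (commutator (Subgroup.closure S)) :=
  have := finiteIndex_center_closure hS hSG
  have := finite_commutatorSet_of_finiteIndex_center (G := Subgroup.closure S)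
  inferInstance

/-- **Dietzmann's lemma**. -/
theorem finite_closure {S : Set G} (hS : S.Finite) (hSG : S ⊆ fcCenter G)
    (htor : ∀ x ∈ S, IsOfFinOrder x) : Finite (Subgroup.closure S) := by
  set K := Subgroup.closure S
  have : Finite (commutator K) := finite_commutator_closure hS hSG
  have : Group.FG K := (Group.fg_iff_subgroup_fg K).2 ⟨hS.toFinset, by simp [K]⟩
  have hfg : Group.FG (Abelianization K) := inferInstanceAs (Group.FG (K ⧸ commutator K))
  have hle : Subgroup.closure ((↑) ⁻¹' S : Set K) ≤
      (CommGroup.torsion (Abelianization K)).comap Abelianization.of :=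
    (Subgroup.closure_le _).2 fun x hx ↦
      MonoidHom.isOfFinOrder _ (Submonoid.isOfFinOrder_coe.1 (htor x hx))
  have htorsion : IsMulTorsion (Abelianization K) := fun y ↦ by
    obtain ⟨x, rfl⟩ := QuotientGroup.mk_surjective y
    exact hle (Subgroup.closure_closure_coe_preimage (k := S) ▸ Subgroup.mem_top x)
  have : Finite (Abelianization K) := CommGroup.finite_of_fg_isMulTorsion _ htorsion
  have : (commutator K).FiniteIndex := Subgroup.finiteIndex_iff_finite_quotient.2 this
  exact (Subgroup.finite_iff_finite_and_finiteIndex (commutator K)).2 ⟨inferInstance, this⟩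

lemma finite_normalClosure_singleton {x : G} (hx : x ∈ fcCenter G) (hx' : IsOfFinOrder x) :
    Finite (Subgroup.normalClosure {x}) := by
  have hconj : Group.conjugatesOfSet {x} = conjugatesOf x := by simp [Group.conjugatesOfSet]
  rw [Subgroup.normalClosure, hconj]
  refine finite_closure hx (fun y hy ↦ ?_) fun y hy ↦ ?_
  · rwa [SetLike.mem_coe, mem_iff, ← IsConj.conjugatesOf_eq hy]
  · obtain ⟨c, rfl⟩ := isConj_iff.1 hy
    exact (MulAut.conj c).toMonoidHom.isOfFinOrder hx'

lemma isOfFinOrder_commutatorElement {a b : G} (ha : a ∈ fcCenter G) (hb : b ∈ fcCenter G) :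
    IsOfFinOrder ⁅a, b⁆ := by
  have : Finite (commutator (Subgroup.closure {a, b})) :=
    finite_commutator_closure (by simp) (by simp [Set.pair_subset_iff, ha, hb])
  let a' : Subgroup.closure {a, b} := ⟨a, Subgroup.subset_closure (by simp)⟩
  let b' : Subgroup.closure {a, b} := ⟨b, Subgroup.subset_closure (by simp)⟩
  have hcomm : ⁅a', b'⁆ ∈ commutator (Subgroup.closure {a, b}) :=
    Subgroup.commutator_mem_commutator (Subgroup.mem_top _) (Subgroup.mem_top _)
  have := Submonoid.isOfFinOrder_coe.2
    (isOfFinOrder_of_finite (⟨_, hcomm⟩ : commutator (Subgroup.closure {a, b})))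
  exact Submonoid.isOfFinOrder_coe.2 this

lemma isOfFinOrder_mul {x y : G} (hx : x ∈ fcCenter G) (hy : y ∈ fcCenter G)
    (hx' : IsOfFinOrder x) (hy' : IsOfFinOrder y) : IsOfFinOrder (x * y) := by
  have : Finite (Subgroup.closure {x, y}) :=
    finite_closure (by simp) (by simp [Set.pair_subset_iff, hx, hy]) (by simp [hx', hy'])
  have hxy : x * y ∈ Subgroup.closure {x, y} :=
    mul_mem (Subgroup.subset_closure (by simp)) (Subgroup.subset_closure (by simp))
  exact Submonoid.isOfFinOrder_coe.2
    (isOfFinOrder_of_finite (⟨_, hxy⟩ : Subgroup.closure {x, y}))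

variable (G) in
/-- The elements of finite order of the FC-center, which form a subgroup. -/
def torsion : Subgroup (fcCenter G) where
  carrier := {x | IsOfFinOrder x}
  one_mem' := .one
  mul_mem' {x y} hx hy := Submonoid.isOfFinOrder_coe.1 <|
    isOfFinOrder_mul x.2 y.2 (Submonoid.isOfFinOrder_coe.2 hx) (Submonoid.isOfFinOrder_coe.2 hy)
  inv_mem' hx := hx.inv

lemma commutator_le_torsion : commutator (fcCenter G) ≤ torsion G :=
  Subgroup.commutator_le.2 fun a _ b _ ↦
    Submonoid.isOfFinOrder_coe.1 (isOfFinOrder_commutatorElement a.2 b.2)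

variable (G) in
/-- The torsion-free abelian quotient of the FC-center. -/
abbrev TorsionFreeQuotient : Type _ :=
  Abelianization (fcCenter G) ⧸ CommGroup.torsion (Abelianization (fcCenter G))

variable (G) in
/-- The projection of the FC-center onto its torsion-free abelian quotient. -/
def toTorsionFreeQuotient : fcCenter G →* TorsionFreeQuotient G :=
  (QuotientGroup.mk' _).comp Abelianization.of

lemma isOfFinOrder_of_toTorsionFreeQuotient_eq_one {x : fcCenter G}
    (hx : toTorsionFreeQuotient G x = 1) : IsOfFinOrder x := by
  obtain ⟨n, hn, hxn⟩ := isOfFinOrder_iff_pow_eq_one.1 ((QuotientGroup.eq_one_iff _).1 hx)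
  rw [← map_pow, ← MonoidHom.mem_ker, Abelianization.ker_of] at hxn
  exact (isOfFinOrder_pow.1 (commutator_le_torsion hxn)).resolve_right hn.ne'

end fcCenter

end FCCenter

/-! ### Eigenvalues of central units of finite group rings -/

section Trace

variable {L : Type*} [Field L]

lemma exists_coprime_forall_map_eq_pow (n : ℕ) [NeZero n] [HasEnoughRootsOfUnity L n]
    (σ : L ≃+* L) : ∃ j : ℕ, j.Coprime n ∧ ∀ z : L, z ^ n = 1 → σ z = z ^ j := by
  let χ := modularCyclotomicCharacter L (HasEnoughRootsOfUnity.natCard_rootsOfUnity L n) σ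
  refine ⟨(χ : ZMod n).val, ZMod.val_coe_unit_coprime χ, fun z hz ↦ ?_⟩
  exact modularCyclotomicCharacter.spec L (HasEnoughRootsOfUnity.natCard_rootsOfUnity L n) σ
    (rootsOfUnity.mkOfPowEq z hz).2

variable {V : Type*} [AddCommGroup V] [Module L V]

lemma isSemisimple_of_pow_eq_one {f : Module.End L V} {n : ℕ} (hn : (n : L) ≠ 0)
    (hf : f ^ n = 1) : f.IsSemisimple :=
  Module.End.isSemisimple_of_squarefree_aeval_eq_zero
    (Polynomial.X_pow_sub_one_separable_iff.2 hn).squarefree (by simp [hf])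

lemma pow_apply_of_mem_eigenspace {f : Module.End L V} {z : L} {v : V}
    (hv : v ∈ f.eigenspace z) (j : ℕ) : (f ^ j) v = z ^ j • v := by
  simpa using Module.End.aeval_apply_of_mem_apply_eq_smul (p := Polynomial.X ^ j)
    (Module.End.mem_eigenspace_iff.1 hv)

lemma trace_pow_eq_sum_eigenvalues [IsAlgClosed L] [FiniteDimensional L V]
    {f : Module.End L V} (hf : f.IsSemisimple) (j : ℕ) :
    LinearMap.trace L V (f ^ j) =
      ∑ z ∈ f.finite_hasEigenvalue.toFinset, z ^ j * (Module.finrank L (f.eigenspace z) : L) := by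
  classical
  have hinternal : DirectSum.IsInternal f.eigenspace :=
    DirectSum.isInternal_submodule_of_iSupIndep_of_iSup_eq_top
      f.eigenspaces_iSupIndep hf.iSup_eigenspace_eq_top
  have hmaps (z : L) : Set.MapsTo (f ^ j) (f.eigenspace z) (f.eigenspace z) := fun v hv ↦ by
    rw [pow_apply_of_mem_eigenspace hv]
    exact Submodule.smul_mem _ _ hv
  rw [LinearMap.trace_eq_sum_trace_restrict' hinternal f.finite_hasEigenvalue hmaps]
  refine Finset.sum_congr rfl fun z _ ↦ ?_
  have hrestrict : (f ^ j).restrict (hmaps z) = z ^ j • 1 :=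
    LinearMap.ext fun v ↦ Subtype.ext (pow_apply_of_mem_eigenspace v.2 j)
  rw [hrestrict, map_smul, LinearMap.trace_one, smul_eq_mul]

lemma map_trace_eq_trace_pow [IsAlgClosed L] [FiniteDimensional L V] {f : Module.End L V}
    {n : ℕ} (hn : (n : L) ≠ 0) (hf : f ^ n = 1) {σ : L →+* L} {j : ℕ}
    (hσ : ∀ z : L, z ^ n = 1 → σ z = z ^ j) :
    σ (LinearMap.trace L V f) = LinearMap.trace L V (f ^ j) := by
  have hss := isSemisimple_of_pow_eq_one hn hf
  have hroot {z : L} (hz : f.HasEigenvalue z) : z ^ n = 1 := by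
    obtain ⟨v, hv⟩ := hz.exists_hasEigenvector
    refine smul_left_injective L hv.2 ?_
    simp [← hv.pow_apply, hf]
  conv_lhs => rw [← pow_one f, trace_pow_eq_sum_eigenvalues hss, map_sum]
  rw [trace_pow_eq_sum_eigenvalues hss]
  refine Finset.sum_congr rfl fun z hz ↦ ?_
  rw [map_mul, pow_one, map_natCast, hσ z (hroot (by simpa using hz))]

lemma isIntegral_of_hasEigenvector {f : Module.End L V} (hf : IsIntegral ℤ f) {l : L} {v : V}
    (hv : f.HasEigenvector l v) : IsIntegral ℤ l := by
  obtain ⟨p, hp, hpf⟩ := hf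
  refine ⟨p, hp, ?_⟩
  have hpl := Module.End.aeval_apply_of_hasEigenvector (p := p.map (algebraMap ℤ L)) hv
  rw [Polynomial.aeval_map_algebraMap, Polynomial.aeval_def, hpf, LinearMap.zero_apply,
    Polynomial.eval_map, eq_comm] at hpl
  exact (smul_eq_zero.1 hpl).resolve_right hv.2

lemma eq_one_or_eq_neg_one_of_isIntegral [Algebra ℚ L] [IsGalois ℚ L] {l : L}
    (hl0 : l ≠ 0) (hfix : ∀ σ : L ≃ₐ[ℚ] L, σ l = l) (hl : IsIntegral ℤ l)
    (hinv : IsIntegral ℤ l⁻¹) : l = 1 ∨ l = -1 := by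
  obtain ⟨q, rfl⟩ := (InfiniteGalois.mem_range_algebraMap_iff_fixed l).2 hfix
  rw [← map_inv₀] at hinv
  have hinj := (algebraMap ℚ L).injective
  obtain ⟨a, rfl⟩ :=
    IsIntegrallyClosed.isIntegral_iff.1 ((isIntegral_algebraMap_iff hinj).1 hl)
  obtain ⟨b, hb⟩ :=
    IsIntegrallyClosed.isIntegral_iff.1 ((isIntegral_algebraMap_iff hinj).1 hinv)
  have hab : a * b = 1 := by
    have ha0 : algebraMap ℤ ℚ a ≠ 0 := fun h ↦ hl0 (by rw [h, map_zero])
    exact FaithfulSMul.algebraMap_injective ℤ ℚ (by rw [map_mul, hb, mul_inv_cancel₀ ha0, map_one])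
  rcases Int.eq_one_or_neg_one_of_mul_eq_one hab with rfl | rfl <;> simp

lemma le_finrank_of_trace_eq [CharZero L] [IsAlgClosed L] [FiniteDimensional L V]
    {f : Module.End L V} (hf : ∀ l, f.HasEigenvalue l → l = 1 ∨ l = -1) {a : ℤ}
    (ha : LinearMap.trace L V f = a) : a ≤ Module.finrank L V := by
  have hroots : ∀ z ∈ f.charpoly.roots, ∃ b : ℤ, b ≤ 1 ∧ (b : L) = z := fun z hz ↦ by
    rcases hf z ((f.hasEigenvalue_iff_isRoot_charpoly z).2 (Polynomial.isRoot_of_mem_roots hz))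
      with rfl | rfl
    · exact ⟨1, by simp⟩
    · exact ⟨-1, by simp⟩
  choose! b hb using hroots
  have hsum : a = (f.charpoly.roots.map b).sum := by
    rw [← Int.cast_inj (α := L), ← ha, Int.cast_multiset_sum, Multiset.map_map,
      Multiset.map_congr (f := Int.cast ∘ b) (g := id) rfl fun z hz ↦ (hb z hz).2, Multiset.map_id,
      Module.End.trace_eq_sum_roots_charpoly_of_splits (IsAlgClosed.splits _)]
  calc a ≤ (f.charpoly.roots.map b).card • 1 := hsum ▸ Multiset.sum_le_card_nsmul _ _ (by
        simpa only [Multiset.forall_mem_map_iff] using fun z hz ↦ (hb z hz).1)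
    _ = Module.finrank L V := by
        rw [Multiset.card_map, ← (IsAlgClosed.splits _).natDegree_eq_card_roots,
          f.charpoly_natDegree, nsmul_one]

end Trace

namespace GroupRing

open MonoidAlgebra

section Finite

variable {L N : Type*} [Field L] [Group N]

section Galois

variable [Finite N] [IsAlgClosed L] [CharZero L] {σ : L →+* L} {j : ℕ}

lemma map_eq_of_forall_smul_eq {V : Type*} [AddCommGroup V] [Module L V] [Module L[N] V]
    [IsScalarTower L L[N] V] [FiniteDimensional L V] [Nontrivial V]
    (hj : j.Coprime (Nat.card N)) (hσ : ∀ z : L, z ^ Nat.card N = 1 → σ z = z ^ j)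
    {w : L[N]} (hw : ∀ x, σ (w.coeff x) = w.coeff (x ^ j)) {l : L}
    (hl : ∀ v : V, w • v = l • v) : σ l = l := by
  have := Fintype.ofFinite N
  let τ (x : N) : L := LinearMap.trace L V (Algebra.lsmul L L V (of L N x))
  have hτ (x : N) : σ (τ x) = τ (x ^ j) := by
    simp only [τ, map_pow]
    refine map_trace_eq_trace_pow (n := Nat.card N) (by simp) ?_ hσ
    rw [← map_pow, ← map_pow, pow_card_eq_one', map_one, map_one]
  have hsum : ∑ x, w.coeff x * τ x = l * Module.finrank L V := by
    have hw_eq : w = ∑ x, w.coeff x • of L N x := by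
      ext x
      simp
    have hscalar : Algebra.lsmul L L V w = l • 1 := LinearMap.ext hl
    have htrace := congrArg (LinearMap.trace L V) hscalar
    rw [hw_eq, map_sum, map_sum] at htrace
    simpa only [map_smul, LinearMap.trace_one, smul_eq_mul] using htrace
  refine mul_right_cancel₀ (Nat.cast_ne_zero.2 (Module.finrank_pos (R := L) (M := V)).ne') ?_
  calc σ l * (Module.finrank L V : L) = ∑ x, w.coeff (x ^ j) * τ (x ^ j) := by
        rw [← map_natCast σ, ← map_mul, ← hsum, map_sum]
        simp only [map_mul, hw, hτ]
    _ = ∑ x, w.coeff x * τ x :=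
        (powCoprime hj.symm).sum_comp fun x ↦ w.coeff x * τ x
    _ = l * Module.finrank L V := hsum

lemma map_eq_of_mul_eq_smul (hj : j.Coprime (Nat.card N))
    (hσ : ∀ z : L, z ^ Nat.card N = 1 → σ z = z ^ j) {w : L[N]}
    (hw : ∀ x, σ (w.coeff x) = w.coeff (x ^ j)) (hwc : w ∈ Subring.center L[N]) {l : L}
    {v : L[N]} (hv0 : v ≠ 0) (hv : w * v = l • v) : σ l = l := by
  let E : Submodule L[N] L[N] := LinearMap.ker (LinearMap.toSpanSingleton L[N] L[N]
    (w - algebraMap L L[N] l))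
  have hmem (x : L[N]) : x ∈ E ↔ w * x = l • x := by
    rw [LinearMap.mem_ker, LinearMap.toSpanSingleton_apply, smul_eq_mul, mul_sub, sub_eq_zero,
      Subring.mem_center_iff.1 hwc, ← Algebra.commutes, ← Algebra.smul_def]
  have : Nontrivial E := ⟨⟨v, (hmem v).2 hv⟩, 0, fun h ↦ hv0 (congrArg Subtype.val h)⟩
  have : FiniteDimensional L E :=
    Module.Finite.of_injective (E.subtype.restrictScalars L) E.subtype_injective
  exact map_eq_of_forall_smul_eq (V := E) hj hσ hw fun x ↦ Subtype.ext ((hmem x).1 x.2)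

end Galois

variable (L N) in
/-- The action of the integral group ring of `N` on `L[N]` by left multiplication. -/
noncomputable def regularRep : ℤ[N] →+* Module.End L L[N] :=
  (Algebra.lsmul (A := L[N]) L L L[N]).toRingHom.comp (mapRingHom N (Int.castRingHom L))

lemma regularRep_apply (w : ℤ[N]) (v : L[N]) :
    regularRep L N w v = mapRingHom N (Int.castRingHom L) w * v :=
  rfl

lemma trace_regularRep [Finite N] (w : ℤ[N]) :
    LinearMap.trace L L[N] (regularRep L N w) = (Nat.card N * w.coeff 1 : ℤ) := by
  classical
  have := Fintype.ofFinite N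
  rw [LinearMap.trace_eq_matrix_trace L (MonoidAlgebra.basis N L), Matrix.trace]
  simp [LinearMap.toMatrix_apply, regularRep_apply, MonoidAlgebra.basis]

lemma isIntegral_of_hasEigenvector_regularRep [Finite N] {w : ℤ[N]} {l : L} {v : L[N]}
    (hv : (regularRep L N w).HasEigenvector l v) : IsIntegral ℤ l :=
  isIntegral_of_hasEigenvector
    ((Algebra.IsIntegral.isIntegral w).map (regularRep L N).toIntAlgHom) hv

lemma eq_one_or_eq_neg_one_of_hasEigenvector_regularRep [Finite N] [IsAlgClosed L] [Algebra ℚ L]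
    [IsGalois ℚ L] {u v : ℤ[N]} (hu : u ∈ Subring.center ℤ[N]) (hvu : v * u = 1)
    (hpow : ∀ (x : N) (j : ℕ), j.Coprime (Nat.card N) → u.coeff (x ^ j) = u.coeff x)
    {l : L} {y : L[N]} (hy : (regularRep L N u).HasEigenvector l y) : l = 1 ∨ l = -1 := by
  have : CharZero L := algebraRat.charZero L
  have hinv : l • regularRep L N v y = y := by
    rw [← map_smul, ← hy.apply_eq_smul, ← Module.End.mul_apply, ← map_mul, hvu, map_one,
      Module.End.one_apply]
  have hl0 : l ≠ 0 := by
    rintro rfl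
    exact hy.2 (by rw [← hinv, zero_smul])
  refine eq_one_or_eq_neg_one_of_isIntegral hl0 (fun σ ↦ ?_)
    (isIntegral_of_hasEigenvector_regularRep hy)
    (isIntegral_of_hasEigenvector_regularRep (w := v) (v := y)
      ⟨Module.End.mem_eigenspace_iff.2 ((eq_inv_smul_iff₀ hl0).2 hinv), hy.2⟩)
  obtain ⟨j, hj, hσ⟩ := exists_coprime_forall_map_eq_pow (Nat.card N) (σ : L ≃+* L)
  refine map_eq_of_mul_eq_smul (σ := (σ : L →+* L)) (w := mapRingHom N (Int.castRingHom L) u)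
    hj hσ (fun x ↦ ?_) ?_ hy.2 hy.apply_eq_smul
  · simp [hpow x j hj]
  · rw [mem_center_iff_coeff] at hu ⊢
    simp [hu]

/-- The regular representation identifies `Nat.card N * u.coeff 1` with a sum of `Nat.card N`
eigenvalues, each of them `±1`: the hypothesis on powers makes them invariant under
`Gal(ℚ̄/ℚ)`, so they are rational algebraic units. -/
theorem coeff_one_le_one_of_forall_coprime [Finite N] {u v : ℤ[N]}
    (hu : u ∈ Subring.center ℤ[N]) (hvu : v * u = 1)
    (hpow : ∀ (x : N) (j : ℕ), j.Coprime (Nat.card N) → u.coeff (x ^ j) = u.coeff x) :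
    u.coeff 1 ≤ 1 := by
  let L := AlgebraicClosure ℚ
  have : IsAlgClosure ℚ L := AlgebraicClosure.instIsAlgClosure ℚ
  have hle := le_finrank_of_trace_eq (f := regularRep L N u) (fun l hl ↦ by
    obtain ⟨y, hy⟩ := hl.exists_hasEigenvector
    exact eq_one_or_eq_neg_one_of_hasEigenvector_regularRep hu hvu hpow hy)
    (trace_regularRep u)
  have hcard : Module.finrank L L[N] = Nat.card N :=
    Module.finrank_eq_nat_card_basis (MonoidAlgebra.basis N L)
  rw [hcard] at hle
  simpa using hle

end Finite

/-! ### Trivial central units -/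

section Restriction

variable {R G : Type*} [Group G] {H : Subgroup G}

lemma coeff_mapDomainRingHom_subtype [Semiring R] (x : R[H]) (h : H) :
    (mapDomainRingHom R H.subtype x).coeff h = x.coeff h :=
  Finsupp.mapDomain_apply H.subtype_injective _ h

lemma exists_mapDomainRingHom_subtype_eq [Semiring R] {x : R[G]}
    (hx : ∀ g, x.coeff g ≠ 0 → g ∈ H) :
    ∃ y : R[H], mapDomainRingHom R H.subtype y = x :=
  ⟨comapDomain H.subtype H.subtype_injective x,
    mapDomain_comapDomain (fun g hg ↦ ⟨⟨g, hx g (by simpa using hg)⟩, rfl⟩) H.subtype_injective⟩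

lemma mem_center_of_mapDomainRingHom_subtype [CommRing R] {x : R[H]}
    (hx : mapDomainRingHom R H.subtype x ∈ Subring.center R[G]) : x ∈ Subring.center R[H] := by
  rw [mem_center_iff_coeff] at hx ⊢
  intro g k
  rw [← coeff_mapDomainRingHom_subtype, ← coeff_mapDomainRingHom_subtype]
  exact hx g k

lemma mul_eq_one_of_mapDomainRingHom_subtype [Semiring R] {x y : R[H]}
    (hxy : mapDomainRingHom R H.subtype x * mapDomainRingHom R H.subtype y = 1) : x * y = 1 :=
  mapDomain_injective H.subtype_injective
    (by rw [map_mul, hxy, map_one] :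
      mapDomainRingHom R H.subtype (x * y) = mapDomainRingHom R H.subtype 1)

end Restriction

section Center

variable {G : Type*} [Group G]

lemma mem_fcCenter_of_coeff_ne_zero {R : Type*} [CommRing R] {x : R[G]}
    (hx : x ∈ Subring.center R[G]) {g : G} (hg : x.coeff g ≠ 0) : g ∈ fcCenter G :=
  fcCenter.mem_iff.2 <| x.coeff.support.finite_toSet.subset fun h hh ↦ by
    simpa [← coeff_eq_of_isConj hx hh] using hg

variable {u v : ℤ[G]}

lemma isOfFinOrder_of_coeff_mul_star_self_ne_zero (hu : u ∈ Subring.center ℤ[G])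
    (hv : v ∈ Subring.center ℤ[G]) (huv : u * v = 1) {g : G} (hg : (u * star u).coeff g ≠ 0) :
    IsOfFinOrder g := by
  classical
  obtain ⟨u₀, rfl⟩ :=
    exists_mapDomainRingHom_subtype_eq fun _ hg ↦ mem_fcCenter_of_coeff_ne_zero hu hg
  obtain ⟨v₀, rfl⟩ :=
    exists_mapDomainRingHom_subtype_eq fun _ hg ↦ mem_fcCenter_of_coeff_ne_zero hv hg
  obtain ⟨h, hh⟩ := exists_forall_coeff_ne_zero_eq (fcCenter.toTorsionFreeQuotient G)
    (mem_center_of_mapDomainRingHom_subtype hu) (mem_center_of_mapDomainRingHom_subtype hv)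
    (mul_eq_one_of_mapDomainRingHom_subtype huv)
  obtain ⟨a, ha, b, hb, rfl⟩ := Finset.mem_mul.1
    (support_coeff_mul_subset _ _ (Finsupp.mem_support_iff.2 hg))
  rw [Finsupp.mem_support_iff] at ha hb
  rw [coeff_star] at hb
  lift a to fcCenter G using mem_fcCenter_of_coeff_ne_zero hu ha
  lift b to fcCenter G using inv_mem_iff.1 (mem_fcCenter_of_coeff_ne_zero hu hb)
  rw [← InvMemClass.coe_inv] at hb
  rw [coeff_mapDomainRingHom_subtype] at ha hb
  have hab : fcCenter.toTorsionFreeQuotient G (a * b) = 1 := by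
    rw [map_mul, hh a ha, ← hh b⁻¹ hb, map_inv, inv_mul_cancel]
  exact_mod_cast Submonoid.isOfFinOrder_coe.2
    (fcCenter.isOfFinOrder_of_toTorsionFreeQuotient_eq_one hab)

lemma coeff_pow_eq_of_isRSElement (hu : u ∈ Subring.center ℤ[G]) (hsa : IsSelfAdjoint u) {x : G}
    (hx : IsRSElement x) {j : ℕ} (hj : j.Coprime (orderOf x)) :
    u.coeff (x ^ j) = u.coeff x := by
  rcases j.eq_zero_or_pos with rfl | hj0
  · rw [orderOf_eq_one_iff.1 ((Nat.coprime_zero_left _).1 hj), one_pow]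
  rcases hx j hj0 hj with h | h
  · exact coeff_eq_of_isConj hu h
  · rw [coeff_eq_of_isConj hu h, ← coeff_star, hsa.star_eq]

lemma coeff_one_le_one_of_forall_isRSElement
    (hRS : ∀ x ∈ fcCenter G, IsOfFinOrder x → IsRSElement x)
    (hu : u ∈ Subring.center ℤ[G]) (hsa : IsSelfAdjoint u) (hv : v ∈ Subring.center ℤ[G])
    (hvu : v * u = 1) (hut : ∀ g, u.coeff g ≠ 0 → IsOfFinOrder g)
    (hvt : ∀ g, v.coeff g ≠ 0 → IsOfFinOrder g) : u.coeff 1 ≤ 1 := by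
  let S : Set G := {g | u.coeff g ≠ 0 ∨ v.coeff g ≠ 0}
  have hSfin : S.Finite :=
    (u.coeff.support.finite_toSet.union v.coeff.support.finite_toSet).subset fun g hg ↦ by
      simpa [S] using hg
  have hSfc : S ⊆ fcCenter G := fun g hg ↦
    hg.elim (mem_fcCenter_of_coeff_ne_zero hu) (mem_fcCenter_of_coeff_ne_zero hv)
  let N := Subgroup.closure S
  have : Finite N := fcCenter.finite_closure hSfin hSfc fun g hg ↦ hg.elim (hut g) (hvt g)
  have hNfc : N ≤ fcCenter G := (Subgroup.closure_le _).2 hSfc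
  obtain ⟨u₀, hu₀⟩ := exists_mapDomainRingHom_subtype_eq (H := N) (x := u)
    fun g hg ↦ Subgroup.subset_closure (Or.inl hg)
  obtain ⟨v₀, hv₀⟩ := exists_mapDomainRingHom_subtype_eq (H := N) (x := v)
    fun g hg ↦ Subgroup.subset_closure (Or.inr hg)
  clear_value N
  subst hu₀ hv₀
  rw [← N.coe_one, coeff_mapDomainRingHom_subtype]
  refine coeff_one_le_one_of_forall_coprime (mem_center_of_mapDomainRingHom_subtype hu)
    (mul_eq_one_of_mapDomainRingHom_subtype hvu) fun x j hj ↦ ?_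
  have hx : IsRSElement (x : G) := hRS x (hNfc x.2)
    (Submonoid.isOfFinOrder_coe.2 (isOfFinOrder_of_finite x))
  rw [← coeff_mapDomainRingHom_subtype, ← coeff_mapDomainRingHom_subtype]
  refine coeff_pow_eq_of_isRSElement hu hsa hx (hj.coprime_dvd_right ?_)
  rw [Subgroup.orderOf_coe]
  exact orderOf_dvd_natCard x

end Center

end GroupRing

open GroupRing in
theorem isCutGroup_of_forall_isRSElement {G : Type*} [Group G]
    (hRS : ∀ x ∈ fcCenter G, IsOfFinOrder x → IsRSElement x) : IsCutGroup G := by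
  intro u hu
  have hv : ((u⁻¹ : ℤ[G]ˣ) : ℤ[G]) ∈ Subring.center ℤ[G] := Set.units_inv_mem_center hu
  have hu_star := Set.star_mem_center hu
  have hv_star := Set.star_mem_center hv
  refine exists_eq_of_or_eq_neg_of u.ne_zero <|
    coeff_one_le_one_of_forall_isRSElement hRS (mul_mem hu hu_star) (.mul_star_self _)
      (mul_mem hv hv_star) ?_
      (fun _ ↦ isOfFinOrder_of_coeff_mul_star_self_ne_zero hu hv u.mul_inv)
      (fun _ ↦ isOfFinOrder_of_coeff_mul_star_self_ne_zero hv hu u.inv_mul)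
  have hcomm : Commute (star ((u⁻¹ : ℤ[G]ˣ) : ℤ[G])) u := Subring.mem_center_iff.1 hu _
  rw [hcomm.mul_mul_mul_comm, u.inv_mul, ← star_mul, u.mul_inv, star_one, one_mul]

/-! ### Finite normal subgroups of HNN extensions -/

section HNNExtension

open HNNExtension HNNExtension.NormalWord

variable {G : Type*} [Group G] {A B : Subgroup G} (φ : A ≃* B)

lemma exists_reducedWord_prod_eq (x : HNNExtension G A B φ) :
    ∃ w : ReducedWord G A B, w.prod φ = x := by
  obtain ⟨d⟩ := TransversalPair.nonempty G A B
  exact ⟨(x • (empty : NormalWord d)).toReducedWord, by rw [prod_smul, prod_empty, mul_one]⟩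

variable {φ}

/-- The sequence of exponents `±1` of the stable letter in the reduced words representing an
element of an HNN extension; by Britton's lemma it does not depend on the reduced word. -/
noncomputable def stableSigns (x : HNNExtension G A B φ) : List ℤˣ :=
  (exists_reducedWord_prod_eq φ x).choose.toList.map Prod.fst

lemma stableSigns_prod (w : ReducedWord G A B) :
    stableSigns (w.prod φ) = w.toList.map Prod.fst :=
  (ReducedWord.map_fst_eq_and_of_prod_eq φ (exists_reducedWord_prod_eq φ (w.prod φ)).choose_spec).1

lemma stableSigns_t_zpow (u : ℤˣ) : stableSigns (t ^ (u : ℤ) : HNNExtension G A B φ) = [u] := by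
  simpa [ReducedWord.prod] using stableSigns_prod (φ := φ) ⟨1, [(u, 1)], by simp⟩

lemma mem_range_of_of_stableSigns_eq_nil {x : HNNExtension G A B φ} (hx : stableSigns x = []) :
    x ∈ (of : G →* HNNExtension G A B φ).range := by
  obtain ⟨w, rfl⟩ := exists_reducedWord_prod_eq φ x
  rw [stableSigns_prod, List.map_eq_nil_iff] at hx
  exact ⟨w.head, by simp [ReducedWord.prod, hx]⟩

lemma stableSigns_mul_of (x : HNNExtension G A B φ) (g : G) :
    stableSigns (x * of g) = stableSigns x := by
  obtain ⟨⟨h, l, hl⟩, rfl⟩ := exists_reducedWord_prod_eq φ x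
  rcases l.eq_nil_or_concat' with rfl | ⟨l, ⟨e, k⟩, rfl⟩
  · trans stableSigns ((⟨h * g, [], hl⟩ : ReducedWord G A B).prod φ)
    · simp [ReducedWord.prod]
    · simp [stableSigns_prod]
  · have hl' : (l ++ [(e, k * g)]).IsChain fun a b ↦ a.2 ∈ toSubgroup A B a.1 → a.1 = b.1 := by
      simpa [List.isChain_append] using hl
    trans stableSigns ((⟨h, _, hl'⟩ : ReducedWord G A B).prod φ)
    · simp [ReducedWord.prod, mul_assoc]
    · simp [stableSigns_prod]

lemma stableSigns_mul {x y : HNNExtension G A B φ}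
    (hxy : ∀ a ∈ (stableSigns x).getLast?, ∀ b ∈ (stableSigns y).head?, a = b) :
    stableSigns (x * y) = stableSigns x ++ stableSigns y := by
  obtain ⟨⟨h, l, hl⟩, rfl⟩ := exists_reducedWord_prod_eq φ y
  rw [← stableSigns_mul_of x h, stableSigns_prod] at hxy ⊢
  obtain ⟨w, hw⟩ := exists_reducedWord_prod_eq φ (x * of h)
  rw [← hw, stableSigns_prod] at hxy ⊢
  have hchain : (w.toList ++ l).IsChain fun a b ↦ a.2 ∈ toSubgroup A B a.1 → a.1 = b.1 := by
    refine List.isChain_append.2 ⟨w.chain, hl, fun a ha b hb _ ↦ hxy _ ?_ _ ?_⟩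
    · exact List.getLast?_map ▸ Option.mem_map_of_mem _ ha
    · exact List.head?_map ▸ Option.mem_map_of_mem _ hb
  have hprod : x * (⟨h, l, hl⟩ : ReducedWord G A B).prod φ =
      (⟨w.head, _, hchain⟩ : ReducedWord G A B).prod φ := by
    rw [ReducedWord.prod, ← mul_assoc, ← hw]
    simp [ReducedWord.prod, mul_assoc]
  rw [hprod, stableSigns_prod, List.map_append]

/-- If the first and the last sign of `x` agree then `x * x` is longer than `x`; otherwise the
conjugate of `x` by `t ^ e`, where `e` is the first sign, is. -/
lemma exists_mem_length_stableSigns_lt (N : Subgroup (HNNExtension G A B φ)) [N.Normal]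
    {x : HNNExtension G A B φ} (hx : x ∈ N) (hne : stableSigns x ≠ []) :
    ∃ y ∈ N, (stableSigns x).length < (stableSigns y).length := by
  have hhead := List.head?_eq_some_head hne
  have hlast := List.getLast?_eq_some_getLast hne
  set e := (stableSigns x).head hne
  set e' := (stableSigns x).getLast hne
  by_cases hee' : e' = e
  · refine ⟨x * x, mul_mem hx hx, ?_⟩
    rw [stableSigns_mul (by simp [hhead, hlast, hee']), List.length_append]
    exact Nat.lt_add_of_pos_right (List.length_pos_iff.2 hne)
  · have hneg : e' = -e := Int.units_ne_iff_eq_neg.1 hee'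
    have hinv : stableSigns ((t : HNNExtension G A B φ) ^ (e : ℤ))⁻¹ = [-e] := by
      simpa using stableSigns_t_zpow (φ := φ) (-e)
    have hleft : stableSigns (t ^ (e : ℤ) * x) = e :: stableSigns x := by
      rw [stableSigns_mul] <;> simp [stableSigns_t_zpow, hhead]
    refine ⟨t ^ (e : ℤ) * x * (t ^ (e : ℤ))⁻¹, Subgroup.Normal.conj_mem ‹_› x hx _, ?_⟩
    rw [stableSigns_mul] <;> simp [hleft, hinv, List.getLast?_cons, hlast, hneg]

theorem le_range_of_of_finite_of_normal (N : Subgroup (HNNExtension G A B φ)) [N.Normal]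
    [Finite N] : N ≤ (of : G →* HNNExtension G A B φ).range := by
  obtain ⟨m, hm, hmax⟩ := Set.exists_max_image (N : Set (HNNExtension G A B φ))
    (fun x ↦ (stableSigns x).length) (Set.toFinite _) ⟨1, one_mem N⟩
  have hm_nil : stableSigns m = [] := by
    by_contra hne
    obtain ⟨y, hy, hlt⟩ := exists_mem_length_stableSigns_lt N hm hne
    exact hlt.not_ge (hmax y hy)
  refine fun x hx ↦ mem_range_of_of_stableSigns_eq_nil (List.length_eq_zero_iff.1 ?_)
  simpa [hm_nil] using hmax x hx

lemma mem_toSubgroup_of_conj_mem_range_of {u : ℤˣ} {g : G}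
    (h : t ^ (u : ℤ) * of g * (t ^ (u : ℤ))⁻¹ ∈ (of : G →* HNNExtension G A B φ).range) :
    g ∈ toSubgroup A B u := by
  by_contra hg
  let w : ReducedWord G A B := ⟨1, [(u, g), (-u, 1)], by simp [hg]⟩
  have hw : w.prod φ = t ^ (u : ℤ) * of g * (t ^ (u : ℤ))⁻¹ := by
    simp [ReducedWord.prod, w, mul_assoc]
  exact List.cons_ne_nil _ _ (ReducedWord.toList_eq_nil_of_mem_of_range φ w (hw ▸ h))

theorem le_map_of_inf_of_finite_of_normal (N : Subgroup (HNNExtension G A B φ)) [hN : N.Normal]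
    [Finite N] : N ≤ (A ⊓ B).map of := by
  intro x hx
  obtain ⟨g, rfl⟩ := le_range_of_of_finite_of_normal N hx
  have hg (u : ℤˣ) : g ∈ toSubgroup A B u :=
    mem_toSubgroup_of_conj_mem_range_of (le_range_of_of_finite_of_normal N (hN.conj_mem _ hx _))
  exact ⟨g, Subgroup.mem_inf.2 ⟨hg 1, toSubgroup_neg_one A B ▸ hg (-1)⟩, rfl⟩

end HNNExtension

section RS

variable {G H : Type*} [Group G] [Group H]

lemma IsRSElement.map_of_injective {f : G →* H} (hf : Function.Injective f) {x : G}
    (hx : IsRSElement x) : IsRSElement (f x) := by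
  intro j hj0 hj
  rw [orderOf_injective f hf] at hj
  simpa only [map_pow, map_inv] using
    (hx j hj0 hj).imp (MonoidHom.map_isConj f) (MonoidHom.map_isConj f)

lemma IsRSSubgroup.mono {K L : Subgroup G} (hKL : K ≤ L) (hL : IsRSSubgroup L) :
    IsRSSubgroup K :=
  fun x hx ↦ hL x (hKL hx)

end RS

theorem isCutGroup_hnnExtension_general {G : Type*} [Group G] (A B : Subgroup G) (φ : A ≃* B)
    (hRS : IsRSSubgroup (A ⊓ B)) : IsCutGroup (HNNExtension G A B φ) := by
  refine isCutGroup_of_forall_isRSElement fun x hx hx' ↦ ?_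
  have := fcCenter.finite_normalClosure_singleton hx hx'
  obtain ⟨g, hg, rfl⟩ := le_map_of_inf_of_finite_of_normal (Subgroup.normalClosure {x})
    (Subgroup.subset_normalClosure rfl)
  have hg' : IsOfFinOrder g := (HNNExtension.of_injective φ).isOfFinOrder_iff.1 hx'
  exact (hRS g hg hg').map_of_injective (HNNExtension.of_injective φ)

/-- If `Π` is the HNN extension of a group `G` over isomorphic subgroups `A` and `B`
(with isomorphism `φ : A ≃* B`) and one of `A` or `B` is an RS-subgroup of `G`,
then `Π` is a cut-group. -/
theorem isCutGroup_hnnExtension {G : Type*} [Group G] (A B : Subgroup G) (φ : A ≃* B)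
    (hRS : IsRSSubgroup A ∨ IsRSSubgroup B) :
    IsCutGroup (HNNExtension G A B φ) :=
  isCutGroup_hnnExtension_general A B φ (hRS.elim (.mono inf_le_left) (.mono inf_le_right))
end

section
/- Let n ≥ 2 be an even integer and let G = ℤ ⋊ C_n be the semidirect product of the infinite cyclic group ℤ by the cyclic group C_n of order n, where a fixed generator of C_n acts on ℤ by inversion (negation); equivalently, G = ⟨a, b | bⁿ = 1, bab⁻¹ = a⁻¹⟩. Then G is a cut-group if and only if n ∈ {2, 4, 6, 8, 12}. -/
/-- The relations of the infinite metacyclic group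
`G = ⟨a, b | bⁿ = 1, b a b⁻¹ = a⁻¹⟩ ≅ ℤ ⋊ Cₙ` (with a generator of `Cₙ` acting on `ℤ`
by inversion), where `a` and `b` are the generators indexed by `true` and `false`. -/
def metacyclicRelsZSemidirectCn (n : ℕ) : Set (FreeGroup Bool) :=
  {FreeGroup.of false ^ n,
   FreeGroup.of false * FreeGroup.of true * (FreeGroup.of false)⁻¹ * FreeGroup.of true}

open Finset
open scoped MonoidAlgebra ComplexConjugate

variable {A G H : Type*}

/-! ### Trivial units and central elements -/

/-- `x` is, up to sign, an element of the group `G`: the property required of the central units in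
`IsCutGroup`. -/
def IsTrivialUnit [Group G] (x : ℤ[G]) : Prop :=
  ∃ g : G, x = MonoidAlgebra.of ℤ G g ∨ x = -MonoidAlgebra.of ℤ G g

theorem IsTrivialUnit.mapDomain [Group G] [Group H] {x : ℤ[G]} (hx : IsTrivialUnit x)
    (f : G →* H) : IsTrivialUnit (x.mapDomain f) := by
  obtain ⟨g, rfl | rfl⟩ := hx
  · exact ⟨f g, .inl (by simp [MonoidAlgebra.mapDomain_single])⟩
  · exact ⟨f g, .inr (by
      simpa [MonoidAlgebra.mapDomain_single] using
        map_neg (MonoidAlgebra.mapDomainRingHom ℤ f) (MonoidAlgebra.of ℤ G g))⟩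

theorem isTrivialUnit_mapDomain_iff [Group G] [Group H] {f : G →* H}
    (hf : Function.Injective f) {x : ℤ[G]} :
    IsTrivialUnit (x.mapDomain f) ↔ IsTrivialUnit x := by
  refine ⟨fun ⟨h, hx⟩ => ?_, fun hx => hx.mapDomain f⟩
  obtain ⟨g, rfl⟩ : h ∈ Set.range f := by
    by_contra hh
    have h0 : (x.mapDomain f).coeff h = 0 := by
      simpa using Finsupp.mapDomain_of_notMem_range x.coeff h hh
    rcases hx with hx | hx <;> simp [hx] at h0
  have hof : MonoidAlgebra.of ℤ H (f g) = (MonoidAlgebra.of ℤ G g).mapDomain f := by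
    simp [MonoidAlgebra.mapDomain_single]
  have hneg : -(MonoidAlgebra.of ℤ G g).mapDomain f = (-MonoidAlgebra.of ℤ G g).mapDomain f :=
    (map_neg (MonoidAlgebra.mapDomainRingHom ℤ f) _).symm
  rw [hof, hneg] at hx
  exact ⟨g, hx.imp (MonoidAlgebra.mapDomain_injective hf ·)
    (MonoidAlgebra.mapDomain_injective hf ·)⟩

theorem isCutGroup_iff_of_comm [CommGroup A] :
    IsCutGroup A ↔ ∀ x y : ℤ[A], x * y = 1 → IsTrivialUnit x :=
  ⟨fun h x y hxy => h (.mkOfMulEqOne x y hxy) (by simp), fun h u _ => h u _ u.mul_inv⟩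

theorem IsCutGroup.of_mulEquiv [Group G] [Group H] (hG : IsCutGroup G) (e : G ≃* H) :
    IsCutGroup H := by
  intro u hu
  have hsurj := (MonoidAlgebra.mapDomainRingEquiv ℤ e.symm).surjective
  refine (isTrivialUnit_mapDomain_iff (f := e.symm.toMonoidHom) e.symm.injective).1 ?_
  refine hG (Units.map (MonoidAlgebra.mapDomainRingEquiv ℤ e.symm) u) ?_
  rw [Subring.mem_center_iff] at hu
  rw [Subring.mem_center_iff, hsurj.forall]
  intro x
  simp [← map_mul, hu]

theorem isCutGroup_congr [Group G] [Group H] (e : G ≃* H) : IsCutGroup G ↔ IsCutGroup H :=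
  ⟨fun h => h.of_mulEquiv e, fun h => h.of_mulEquiv e.symm⟩

theorem commute_mapDomain {R : Type*} [CommSemiring R] [Monoid A] [Monoid G] {f : A →* G}
    (hf : ∀ a g, Commute (f a) g) (x : R[A]) (y : R[G]) : Commute (x.mapDomain f) y := by
  induction x using MonoidAlgebra.induction_on with
  | of a =>
    simpa [MonoidAlgebra.mapDomain_single] using MonoidAlgebra.of_commute (R := R) (hf a) y
  | add x₁ x₂ hx₁ hx₂ => simpa only [MonoidAlgebra.mapDomain_add] using hx₁.add_left hx₂
  | smul r x hx => simpa only [MonoidAlgebra.mapDomain_smul] using hx.smul_left r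

theorem IsCutGroup.of_injective_of_forall_commute [CommGroup A] [Group G] (hG : IsCutGroup G)
    {f : A →* G} (hf : Function.Injective f) (hcomm : ∀ a g, Commute (f a) g) :
    IsCutGroup A := by
  intro u _
  refine (isTrivialUnit_mapDomain_iff hf).1
    (hG (Units.map (MonoidAlgebra.mapDomainRingHom ℤ f : ℤ[A] →* ℤ[G]) u) ?_)
  exact Subring.mem_center_iff.2 fun y => (commute_mapDomain hcomm _ y).symm.eq

theorem coeff_conj_of_mem_center {R : Type*} [Ring R] [Group G] {x : R[G]}
    (hx : x ∈ Subring.center R[G]) (g h : G) : x.coeff (h * g * h⁻¹) = x.coeff g := by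
  have := congr_arg (fun y : R[G] => y.coeff (h * g)) (Subring.mem_center_iff.1 hx (.single h 1))
  simpa using this.symm

theorem finite_conjugatesOf_of_coeff_ne_zero {R : Type*} [Ring R] [Group G] {x : R[G]}
    (hx : x ∈ Subring.center R[G]) {g : G} (hg : x.coeff g ≠ 0) : (conjugatesOf g).Finite := by
  refine x.coeff.support.finite_toSet.subset fun k hk => ?_
  obtain ⟨h, rfl⟩ := isConj_iff.1 hk
  simpa [coeff_conj_of_mem_center hx] using hg

theorem IsCutGroup.of_forall_finite_conjugatesOf_mem_range [CommGroup A] [Group G]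
    (hA : IsCutGroup A) {f : A →* G} (hf : Function.Injective f)
    (hrange : ∀ g : G, (conjugatesOf g).Finite → g ∈ f.range) : IsCutGroup G := by
  intro u hu
  have hlift : ∀ x ∈ Subring.center ℤ[G], ∃ x' : ℤ[A], x'.mapDomain f = x := fun x hx =>
    ⟨x.comapDomain f hf, MonoidAlgebra.mapDomain_comapDomain (fun g hg =>
      hrange g (finite_conjugatesOf_of_coeff_ne_zero hx (Finsupp.mem_support_iff.1 hg))) hf⟩
  obtain ⟨x, hx⟩ := hlift _ hu
  obtain ⟨y, hy⟩ := hlift ↑u⁻¹ (Set.units_inv_mem_center hu)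
  have hxy : x * y = 1 := MonoidAlgebra.mapDomain_injective hf (by
    rw [MonoidAlgebra.mapDomain_mul, MonoidAlgebra.mapDomain_one, hx, hy, u.mul_inv])
  exact hx ▸ (isCutGroup_iff_of_comm.1 hA x y hxy).mapDomain f

/-! ### Products of a torsion-free abelian group and a finite abelian group -/

theorem uniqueProds_of_isMulTorsionFree [CommGroup G] [IsMulTorsionFree G] : UniqueProds G where
  uniqueMul_of_nonempty {A B} hA hB := by
    classical
    let K := Subgroup.closure (↑(A ∪ B) : Set G)
    have hAK : ∀ x ∈ A, x ∈ K := fun x hx => Subgroup.subset_closure (by simp [hx])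
    have hBK : ∀ x ∈ B, x ∈ K := fun x hx => Subgroup.subset_closure (by simp [hx])
    have : Monoid.FG K := Group.fg_iff_monoid_fg.1 ((Group.fg_iff_subgroup_fg K).2 ⟨_, rfl⟩)
    have : IsMulTorsionFree K := K.subtype_injective.isMulTorsionFree K.subtype
    obtain ⟨a, ha, b, hb, hab⟩ := UniqueProds.uniqueMul_of_nonempty
      (A := A.subtype (· ∈ K)) (B := B.subtype (· ∈ K))
      (hA.elim fun x hx => ⟨⟨x, hAK x hx⟩, by simpa using hx⟩)
      (hB.elim fun x hx => ⟨⟨x, hBK x hx⟩, by simpa using hx⟩)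
    refine ⟨a, by simpa using ha, b, by simpa using hb, ?_⟩
    rw [← Finset.subtype_map_of_mem hAK, ← Finset.subtype_map_of_mem hBK]
    exact (UniqueMul.mulHom_map_iff (.subtype (· ∈ K)) fun _ _ => rfl).2 hab

theorem exists_eq_single_of_mul_eq_one {R : Type*} [Semiring R] [NoZeroDivisors R] [Nontrivial R]
    [Group G] [TwoUniqueProds G] {x y : R[G]} (hxy : x * y = 1) :
    ∃ g, x = .single g (x.coeff g) ∧ x.coeff g * y.coeff g⁻¹ = 1 := by
  have one_of_unique : ∀ a ∈ x.coeff.support, ∀ b ∈ y.coeff.support,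
      UniqueMul x.coeff.support y.coeff.support a b → a * b = 1 := by
    intro a ha b hb hu
    by_contra hab
    have := MonoidAlgebra.coeff_mul_mul_of_uniqueMul hu
    simp_all [MonoidAlgebra.one_def]
  have hcard : x.coeff.support.card * y.coeff.support.card ≤ 1 := by
    by_contra! hcard
    obtain ⟨⟨a, b⟩, hab, ⟨c, d⟩, hcd, hne, hu, hv⟩ := TwoUniqueProds.uniqueMul_of_one_lt_card hcard
    rw [mem_product] at hab hcd
    have := hu hcd.1 hcd.2
      ((one_of_unique c hcd.1 d hcd.2 hv).trans (one_of_unique a hab.1 b hab.2 hu).symm)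
    simp_all
  have hypos : 0 < y.coeff.support.card := by
    simpa [card_pos] using right_ne_zero_of_mul_eq_one hxy
  obtain ⟨g, r, hgr⟩ := Finsupp.card_support_le_one'.1 (by nlinarith : x.coeff.support.card ≤ 1)
  obtain rfl : x = .single g r := MonoidAlgebra.coeff_injective hgr
  refine ⟨g, by simp, ?_⟩
  simpa [MonoidAlgebra.one_def] using congr_arg (fun z : R[G] => z.coeff 1) hxy

theorem exists_eq_add_mul_of_mem_adjoin {R S : Type*} [CommRing R] [CommRing S] [Algebra R S]
    {ζ : S} {t n : R} (hζ : ζ ^ 2 = algebraMap R S t * ζ - algebraMap R S n) {z : S}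
    (hz : z ∈ Algebra.adjoin R {ζ}) :
    ∃ x y : R, z = algebraMap R S x + algebraMap R S y * ζ := by
  induction hz using Algebra.adjoin_induction with
  | mem z hz => exact ⟨0, 1, by simpa using hz⟩
  | algebraMap x => exact ⟨x, 0, by simp⟩
  | add z w _ _ hz hw =>
    obtain ⟨x, y, rfl⟩ := hz
    obtain ⟨x', y', rfl⟩ := hw
    exact ⟨x + x', y + y', by simp only [map_add]; ring⟩
  | mul z w _ _ hz hw =>
    obtain ⟨x, y, rfl⟩ := hz
    obtain ⟨x', y', rfl⟩ := hw
    refine ⟨x * x' - y * y' * n, x * y' + x' * y + y * y' * t, ?_⟩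
    simp only [map_add, map_sub, map_mul]
    linear_combination algebraMap R S y * algebraMap R S y' * hζ

theorem exists_normSq_eq_intCast {ζ : ℂ} {t n : ℤ} (ht : 2 * ζ.re = t) (hn : Complex.normSq ζ = n)
    {z : ℂ} (hz : z ∈ Algebra.adjoin ℤ {ζ}) : ∃ k : ℤ, Complex.normSq z = k := by
  rw [Complex.normSq_apply] at hn
  have hζ : ζ ^ 2 = algebraMap ℤ ℂ t * ζ - algebraMap ℤ ℂ n := by
    apply Complex.ext <;> simp [sq, ← ht, ← hn] <;> ring
  obtain ⟨x, y, rfl⟩ := exists_eq_add_mul_of_mem_adjoin hζ hz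
  refine ⟨x ^ 2 + t * x * y + n * y ^ 2, ?_⟩
  simp [Complex.normSq_apply, ← ht, ← hn]
  ring

theorem norm_eq_one_of_mul_eq_one_of_mem_adjoin {ζ : ℂ} {t n : ℤ} (ht : 2 * ζ.re = t)
    (hn : Complex.normSq ζ = n) {z w : ℂ} (hz : z ∈ Algebra.adjoin ℤ {ζ})
    (hw : w ∈ Algebra.adjoin ℤ {ζ}) (hzw : z * w = 1) : ‖z‖ = 1 := by
  obtain ⟨k, hk⟩ := exists_normSq_eq_intCast ht hn hz
  obtain ⟨l, hl⟩ := exists_normSq_eq_intCast ht hn hw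
  have hk0 : 0 ≤ k := by exact_mod_cast hk ▸ Complex.normSq_nonneg z
  have hkl : k * l = 1 := by
    have := congr_arg Complex.normSq hzw
    rw [map_mul, hk, hl, map_one] at this
    exact_mod_cast this
  have hk1 : k = 1 := Int.eq_one_of_mul_eq_one_right hk0 hkl
  rw [hk1, Complex.normSq_eq_norm_sq] at hk
  exact (pow_eq_one_iff_of_nonneg (norm_nonneg z) two_ne_zero).1 (by simpa using hk)

theorem exists_isPrimitiveRoot_two_mul_re_eq_intCast {e : ℕ} (he : e = 4 ∨ e = 6) :
    ∃ (ζ : ℂ) (t : ℤ), IsPrimitiveRoot ζ e ∧ 2 * ζ.re = t := by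
  have hre (e : ℕ) :
      (Complex.exp (2 * Real.pi * Complex.I / e)).re = Real.cos (2 * Real.pi / e) := by
    rw [← Complex.exp_ofReal_mul_I_re]
    push_cast
    ring_nf
  rcases he with rfl | rfl
  · refine ⟨_, 0, Complex.isPrimitiveRoot_exp 4 (by norm_num), ?_⟩
    rw [hre, show 2 * Real.pi / (4 : ℕ) = Real.pi / 2 by push_cast; ring]
    simp
  · refine ⟨_, 1, Complex.isPrimitiveRoot_exp 6 (by norm_num), ?_⟩
    rw [hre, show 2 * Real.pi / (6 : ℕ) = Real.pi / 3 by push_cast; ring]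
    simp

theorem norm_eq_one_of_mul_eq_one_of_mem_adjoin_pow_eq_one {e : ℕ} (he : e = 4 ∨ e = 6) {z w : ℂ}
    (hz : z ∈ Algebra.adjoin ℤ {ζ : ℂ | ζ ^ e = 1}) (hw : w ∈ Algebra.adjoin ℤ {ζ : ℂ | ζ ^ e = 1})
    (hzw : z * w = 1) : ‖z‖ = 1 := by
  have : NeZero e := ⟨by lia⟩
  obtain ⟨ζ, t, hζ, ht⟩ := exists_isPrimitiveRoot_two_mul_re_eq_intCast he
  have hle : Algebra.adjoin ℤ {ζ : ℂ | ζ ^ e = 1} ≤ Algebra.adjoin ℤ {ζ} := by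
    refine Algebra.adjoin_le fun ξ hξ => ?_
    obtain ⟨i, -, rfl⟩ := hζ.eq_pow_of_pow_eq_one hξ
    exact pow_mem (Algebra.self_mem_adjoin_singleton ℤ ζ) i
  have hn : Complex.normSq ζ = (1 : ℤ) := by
    simp [Complex.normSq_eq_norm_sq, hζ.norm'_eq_one (NeZero.ne e)]
  exact norm_eq_one_of_mul_eq_one_of_mem_adjoin ht hn (hle hz) (hle hw) hzw

theorem sum_norm_sq_sum_mul_addChar [AddCommGroup A] [Fintype A] (c : A → ℂ) :
    ∑ ψ : AddChar A ℂ, ‖∑ a, c a * ψ a‖ ^ 2 =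
      Fintype.card A * ∑ a, ‖c a‖ ^ 2 := by
  classical
  have hexpand (ψ : AddChar A ℂ) : ((‖∑ a, c a * ψ a‖ ^ 2 : ℝ) : ℂ) =
      ∑ a, ∑ b, c a * conj (c b) * ψ (a - b) := by
    push_cast
    rw [← Complex.mul_conj', map_sum, sum_mul_sum]
    refine sum_congr rfl fun a _ => sum_congr rfl fun b _ => ?_
    rw [map_mul, sub_eq_add_neg, AddChar.map_add_eq_mul, AddChar.map_neg_eq_conj]
    ring
  have horth (a b : A) : ∑ ψ : AddChar A ℂ, ψ (a - b) =
      if a = b then (Fintype.card A : ℂ) else 0 := by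
    simp [AddChar.sum_apply_eq_ite, sub_eq_zero]
  have h : ((∑ ψ : AddChar A ℂ, ‖∑ a, c a * ψ a‖ ^ 2 : ℝ) : ℂ) =
      (Fintype.card A * ∑ a, ‖c a‖ ^ 2 : ℝ) := by
    calc
      _ = ∑ a, ∑ b, c a * conj (c b) *
            ∑ ψ : AddChar A ℂ, ψ (a - b) := by
        rw [Complex.ofReal_sum]
        simp_rw [hexpand, mul_sum]
        rw [sum_comm]
        exact sum_congr rfl fun a _ => sum_comm
      _ = _ := by simp [horth, Complex.mul_conj', mul_sum, mul_comm]
  exact_mod_cast h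

theorem isTrivialUnit_of_sum_sq_coeff_le_one [Group G] {x : ℤ[G]} (hx : x ≠ 0)
    (hsum : ∑ g ∈ x.coeff.support, x.coeff g ^ 2 ≤ 1) : IsTrivialUnit x := by
  have hcard : (x.coeff.support.card : ℤ) ≤ ∑ g ∈ x.coeff.support, x.coeff g ^ 2 := by
    rw [Finset.cast_card]
    exact sum_le_sum fun g hg =>
      Int.add_one_le_of_lt (sq_pos_of_ne_zero (Finsupp.mem_support_iff.1 hg))
  obtain ⟨g, r, hgr⟩ := Finsupp.card_support_le_one'.1 (by lia : x.coeff.support.card ≤ 1)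
  obtain rfl : x = .single g r := MonoidAlgebra.coeff_injective hgr
  have hr : r ≠ 0 := by simpa using hx
  have hr1 : r ^ 2 ≤ 1 := by simpa [Finsupp.support_single, hr] using hsum
  have hsign : r = 1 ∨ r = -1 := by
    rw [sq_le_one_iff_abs_le_one, abs_le] at hr1
    lia
  refine ⟨g, hsign.imp ?_ ?_⟩ <;> rintro rfl <;> simp

section

variable {N k R : Type*} [Monoid N] [Monoid A] [CommSemiring k] [Semiring R] [Algebra k R]

/-- The algebra homomorphism `k[N × A] → R[N]` that evaluates the second factor at the character
`ψ : A →* R`. -/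
noncomputable def evalSnd (ψ : A →* R) : k[N × A] →ₐ[k] R[N] :=
  MonoidAlgebra.lift k R[N] (N × A)
    { toFun := fun p => .single p.1 (ψ p.2)
      map_one' := by simp [MonoidAlgebra.one_def]
      map_mul' := by simp [MonoidAlgebra.single_mul_single] }

theorem coeff_evalSnd [Fintype A] (ψ : A →* R) (x : k[N × A]) (n : N) :
    (evalSnd ψ x).coeff n = ∑ a, x.coeff (n, a) • ψ a := by
  classical
  induction x using MonoidAlgebra.induction_linear with
  | zero => simp
  | add x y hx hy => simp [hx, hy, add_smul, sum_add_distrib]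
  | single p r =>
    obtain ⟨m, b⟩ := p
    by_cases hmn : m = n <;> simp [evalSnd, Finsupp.single_apply, hmn, ite_smul]

end

section

variable {N : Type*}

theorem sum_norm_sq_coeff_evalSnd_le_one [Group N] [TwoUniqueProds N] [Monoid A] [Finite A]
    {e : ℕ} (he : e = 4 ∨ e = 6) {ψ : A →* ℂ} (hψ : ∀ a, ψ a ^ e = 1) {x y : ℤ[N × A]}
    (hxy : x * y = 1) (S : Finset N) : ∑ n ∈ S, ‖(evalSnd ψ x).coeff n‖ ^ 2 ≤ 1 := by
  classical
  have := Fintype.ofFinite A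
  have hmem (x : ℤ[N × A]) (n : N) :
      (evalSnd ψ x).coeff n ∈ Algebra.adjoin ℤ {ζ : ℂ | ζ ^ e = 1} := by
    rw [coeff_evalSnd]
    refine Subalgebra.sum_mem _ fun a _ => Subalgebra.smul_mem _ (Algebra.subset_adjoin ?_) _
    exact hψ a
  have hmul : evalSnd ψ x * evalSnd ψ y = 1 := by rw [← map_mul, hxy, map_one]
  obtain ⟨g, hg, hunit⟩ := exists_eq_single_of_mul_eq_one hmul
  have hnorm := norm_eq_one_of_mul_eq_one_of_mem_adjoin_pow_eq_one he (hmem x g) (hmem y g⁻¹) hunit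
  rw [hg]
  simp only [MonoidAlgebra.coeff_single, Finsupp.single_apply]
  by_cases hgS : g ∈ S <;> simp [apply_ite, hgS, hnorm]

variable [CommGroup A]

theorem sum_norm_sq_coeff_evalSnd_addChar [Monoid N] [Fintype A] (x : ℤ[N × A]) (n : N) :
    ∑ ψ : AddChar (Additive A) ℂ,
        ‖(evalSnd (ψ.toMonoidHom.comp (MulEquiv.multiplicativeAdditive A).symm.toMonoidHom)
          x).coeff n‖ ^ 2 =
      Fintype.card A * ∑ a, (x.coeff (n, a) : ℝ) ^ 2 := by
  simp_rw [coeff_evalSnd, zsmul_eq_mul]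
  simpa [← Additive.ofMul.sum_comp] using
    sum_norm_sq_sum_mul_addChar fun a : Additive A => (x.coeff (n, a.toMul) : ℂ)

theorem sum_sq_coeff_le_one_of_mul_eq_one [Group N] [TwoUniqueProds N] [Fintype A] {e : ℕ}
    (he : e = 4 ∨ e = 6) (hA : ∀ a : A, a ^ e = 1) {x y : ℤ[N × A]} (hxy : x * y = 1)
    (S : Finset N) : ∑ n ∈ S, ∑ a, x.coeff (n, a) ^ 2 ≤ 1 := by
  have hcard : Fintype.card A * ∑ n ∈ S, ∑ a, (x.coeff (n, a) : ℝ) ^ 2 ≤ Fintype.card A * 1 := by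
    calc
      _ = ∑ ψ : AddChar (Additive A) ℂ, ∑ n ∈ S,
            ‖(evalSnd (ψ.toMonoidHom.comp (MulEquiv.multiplicativeAdditive A).symm.toMonoidHom)
              x).coeff n‖ ^ 2 := by
        rw [mul_sum, sum_comm]
        simp only [sum_norm_sq_coeff_evalSnd_addChar]
      _ ≤ ∑ ψ : AddChar (Additive A) ℂ, 1 := by
        refine sum_le_sum fun ψ _ => sum_norm_sq_coeff_evalSnd_le_one he (fun a => ?_) hxy S
        rw [← map_pow, hA, map_one]
      _ = _ := by simp [AddChar.card_eq (α := Additive A)]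
  have hpos : (0 : ℝ) < Fintype.card A := by exact_mod_cast Fintype.card_pos
  exact_mod_cast le_of_mul_le_mul_left hcard hpos

theorem isCutGroup_prod [CommGroup N] [IsMulTorsionFree N] [Finite A]
    (hA : Monoid.exponent A ∣ 4 ∨ Monoid.exponent A ∣ 6) : IsCutGroup (N × A) := by
  classical
  have := Fintype.ofFinite A
  have := uniqueProds_of_isMulTorsionFree (G := N)
  have := UniqueProds.toTwoUniqueProds_of_group (G := N)
  obtain ⟨e, he, hexp⟩ : ∃ e, (e = 4 ∨ e = 6) ∧ ∀ a : A, a ^ e = 1 := by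
    simp only [Monoid.exponent_dvd_iff_forall_pow_eq_one] at hA
    exact hA.elim (⟨4, .inl rfl, ·⟩) (⟨6, .inr rfl, ·⟩)
  refine isCutGroup_iff_of_comm.2 fun x y hxy =>
    isTrivialUnit_of_sum_sq_coeff_le_one (left_ne_zero_of_mul_eq_one hxy) ?_
  let S := x.coeff.support.image Prod.fst
  calc
    _ ≤ ∑ p ∈ S ×ˢ univ, x.coeff p ^ 2 := by
      refine sum_le_sum_of_subset_of_nonneg (fun p hp => ?_) fun _ _ _ => sq_nonneg _
      simpa [S] using ⟨p.2, by simpa using hp⟩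
    _ ≤ 1 := by
      rw [sum_product]
      exact sum_sq_coeff_le_one_of_mul_eq_one he hexp hxy S

end

/-! ### Hoechsmann units of cyclic groups -/

theorem geom_sum_mul_eq {R : Type*} [Semiring R] (z : R) (k l : ℕ) :
    ∑ i ∈ range (k * l), z ^ i = (∑ i ∈ range k, z ^ i) * ∑ j ∈ range l, (z ^ k) ^ j := by
  induction l with
  | zero => simp
  | succ l ih =>
    rw [mul_add, mul_one, sum_range_add, ih, sum_range_succ, mul_add, ← pow_mul,
      sum_mul _ _ (z ^ _)]
    simp only [← pow_add, add_comm (k * l)]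

section

variable {R : Type*} [CommRing R]

theorem geom_sum_pow_mul_geom_sum {z : R} {m : ℕ} (hz : z ^ m = 1) (j k : ℕ) :
    (∑ i ∈ range k, (z ^ j) ^ i) * ∑ i ∈ range m, z ^ i = k * ∑ i ∈ range m, z ^ i := by
  have hfix : z * ∑ i ∈ range m, z ^ i = ∑ i ∈ range m, z ^ i := by
    linear_combination mul_geom_sum z m + hz
  have hpow (n : ℕ) : z ^ n * ∑ i ∈ range m, z ^ i = ∑ i ∈ range m, z ^ i := by
    induction n with
    | zero => simp
    | succ n ih => rw [pow_succ, mul_assoc, hfix, ih]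
  simp [sum_mul, ← pow_mul, hpow]

theorem geom_sum_mul_geom_sum_sub_mul_eq_one {z : R} {m k l q : ℕ} (hz : z ^ m = 1)
    (hkl : k * l = 1 + m * q) :
    ((∑ i ∈ range k, z ^ i) * ∑ i ∈ range l, z ^ i - q * ∑ i ∈ range m, z ^ i) *
      ((∑ i ∈ range k, (z ^ l) ^ i) * ∑ i ∈ range l, (z ^ k) ^ i - q * ∑ i ∈ range m, z ^ i) =
    1 := by
  set σ := ∑ i ∈ range m, z ^ i with hσ
  set s := ∑ i ∈ range k, z ^ i
  set t := ∑ i ∈ range l, z ^ i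
  set s' := ∑ i ∈ range k, (z ^ l) ^ i
  set t' := ∑ i ∈ range l, (z ^ k) ^ i
  have hsum : ∑ i ∈ range (k * l), z ^ i = 1 + q * σ := by
    rw [hkl, add_comm, geom_sum_succ, geom_sum_mul_eq, hz, ← hσ, one_geom_sum]
    linear_combination q * (mul_geom_sum z m + hz)
  have hst' : s * t' = 1 + q * σ := by rw [← geom_sum_mul_eq, hsum]
  have hts' : t * s' = 1 + q * σ := by rw [← geom_sum_mul_eq, mul_comm l, hsum]
  have hσσ : σ * σ = m * σ := by simpa using geom_sum_pow_mul_geom_sum hz 1 m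
  have hcast : (k * l : R) = 1 + m * q := by exact_mod_cast congr_arg (Nat.cast : ℕ → R) hkl
  have hstσ : s * t * σ = (1 + m * q) * σ := by
    have hsσ : s * σ = k * σ := by simpa using geom_sum_pow_mul_geom_sum hz 1 k
    have htσ : t * σ = l * σ := by simpa using geom_sum_pow_mul_geom_sum hz 1 l
    rw [mul_assoc, htσ, mul_left_comm, hsσ, ← hcast]
    ring
  have hst'σ : s' * t' * σ = (1 + m * q) * σ := by
    rw [mul_assoc, geom_sum_pow_mul_geom_sum hz k l, mul_left_comm,
      geom_sum_pow_mul_geom_sum hz l k, ← hcast]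
    ring
  calc
    _ = s * t' * (t * s') - q * (s * t * σ) - q * (s' * t' * σ) + q ^ 2 * (σ * σ) := by ring
    _ = 1 := by
      rw [hst', hts', hstσ, hst'σ]
      linear_combination 2 * q ^ 2 * hσσ

end

theorem exists_mul_eq_one_add_mul {m : ℕ} (hm0 : m ≠ 0) (hm : ¬(m ∣ 4 ∨ m ∣ 6)) :
    ∃ k l q : ℕ, k * l = 1 + m * q ∧ 2 ≤ k ∧ k + 2 ≤ m ∧ 2 ≤ l ∧ l + 2 ≤ m := by
  have hm5 : 5 ≤ m := by
    by_contra! h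
    interval_cases m <;> simp_all
  have hm6 : m ≠ 6 := by rintro rfl; simp at hm
  obtain ⟨k, hcop, hk, hkm⟩ : ∃ k, k.Coprime m ∧ 2 ≤ k ∧ k + 2 ≤ m := by
    rcases m.even_or_odd' with ⟨j, rfl | rfl⟩
    · rcases j.even_or_odd with hj | hj
      · refine ⟨j + 1, .mul_right ?_ (by simp), by lia, by lia⟩
        exact (hj.add_one).coprime_two_right
      · refine ⟨j + 2, .mul_right ?_ ?_, by lia, by lia⟩
        · exact (hj.add_even even_two).coprime_two_right
        · simpa using hj.coprime_two_left
    · exact ⟨2, by simp, le_rfl, by lia⟩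
  obtain ⟨l, hlm, hl⟩ := Nat.exists_mul_mod_eq_one_of_coprime hcop (by lia)
  have hkl := Nat.mod_add_div (k * l) m
  refine ⟨k, l, k * l / m, by lia, hk, hkm, ?_, ?_⟩
  · by_contra! h
    interval_cases l
    · simp at hl
    · rw [mul_one, Nat.mod_eq_of_lt (by lia)] at hl
      lia
  · by_contra! h
    obtain rfl : m = l + 1 := by lia
    have hdvd : l + 1 ∣ k + 1 := by
      refine (Nat.dvd_add_right (Nat.dvd_mul_right (l + 1) (k * l / (l + 1)))).1 (Dvd.intro k ?_)
      lia
    have := Nat.le_of_dvd (by lia) hdvd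
    lia

theorem sin_lt_sin_of_lt_of_lt_pi_sub {θ x : ℝ} (hθ : -(Real.pi / 2) ≤ θ) (hx : θ < x)
    (hx' : x < Real.pi - θ) : Real.sin θ < Real.sin x := by
  rcases le_total x (Real.pi / 2) with h | h
  · exact Real.sin_lt_sin_of_lt_of_le_pi_div_two hθ h hx
  · rw [← Real.sin_pi_sub x]
    exact Real.sin_lt_sin_of_lt_of_le_pi_div_two hθ (by linarith) (by linarith)

theorem one_lt_norm_geom_sum_exp {m k : ℕ} (hk : 2 ≤ k) (hkm : k + 2 ≤ m) :
    1 < ‖∑ i ∈ range k, Complex.exp (2 * Real.pi * Complex.I / m) ^ i‖ := by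
  set ζ := Complex.exp (2 * Real.pi * Complex.I / m)
  have hm : (0 : ℝ) < m := by exact_mod_cast (by lia : 0 < m)
  have hnorm (j : ℕ) (hj : j ≤ m) : ‖ζ ^ j - 1‖ = 2 * Real.sin (Real.pi * (j / m)) := by
    have hexp : ζ ^ j = Complex.exp (Complex.I * (2 * (Real.pi * (j / m)) : ℝ)) := by
      rw [← Complex.exp_nat_mul]
      push_cast
      ring_nf
    rw [hexp, Complex.norm_exp_I_mul_ofReal_sub_one, mul_div_cancel_left₀ _ two_ne_zero,
      Real.norm_of_nonneg]
    have : (j / m : ℝ) ≤ 1 := div_le_one_of_le₀ (by exact_mod_cast hj) hm.le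
    exact mul_nonneg two_pos.le (Real.sin_nonneg_of_nonneg_of_le_pi (by positivity)
      (mul_le_of_le_one_right Real.pi_pos.le this))
  have hsin : Real.sin (Real.pi * ((1 : ℕ) / m)) < Real.sin (Real.pi * (k / m)) := by
    refine sin_lt_sin_of_lt_of_lt_pi_sub ?_ ?_ ?_
    · have : 0 ≤ Real.pi * ((1 : ℕ) / m) := by positivity
      linarith [Real.pi_pos]
    · gcongr; lia
    · rw [← mul_one_sub]
      gcongr
      rw [lt_sub_iff_add_lt, ← add_div, div_lt_one hm]
      exact_mod_cast (by lia : k + 1 < m)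
  have hlt : ‖ζ - 1‖ < ‖ζ ^ k - 1‖ := by
    rw [hnorm k (by lia), ← pow_one ζ, hnorm 1 (by lia)]
    gcongr
  rw [← geom_sum_mul, norm_mul] at hlt
  exact one_lt_of_lt_mul_right₀ (norm_nonneg _) hlt

theorem IsTrivialUnit.norm_lift_eq_one [Group G] [Finite G] {x : ℤ[G]} (hx : IsTrivialUnit x)
    (χ : G →* ℂ) : ‖MonoidAlgebra.lift ℤ ℂ G χ x‖ = 1 := by
  have hχ (g : G) : ‖χ g‖ = 1 :=
    Complex.norm_eq_one_of_pow_eq_one (by rw [← map_pow, pow_card_eq_one', map_one])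
      (Nat.card_pos (α := G)).ne'
  obtain ⟨g, rfl | rfl⟩ := hx <;> simp [hχ]

theorem exists_monoidHom_apply_eq {M : Type*} [Group G] [Monoid M] {g : G} {ζ : M}
    (hg : ∀ x, x ∈ Subgroup.zpowers g) (hfin : orderOf g ≠ 0) (hζ : ζ ^ orderOf g = 1) :
    ∃ χ : G →* M, χ g = ζ := by
  let u : Mˣ := .ofPowEqOne ζ _ hζ hfin
  have hu : orderOf u ∣ orderOf g := orderOf_dvd_of_pow_eq_one (Units.pow_ofPowEqOne hζ hfin)
  exact ⟨(Units.coeHom M).comp (monoidHomOfForallMemZpowers hg hu), by simp [u]⟩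

theorem IsCutGroup.card_dvd_of_isCyclic [CommGroup A] [Finite A] [IsCyclic A]
    (hA : IsCutGroup A) : Nat.card A ∣ 4 ∨ Nat.card A ∣ 6 := by
  by_contra hcard
  obtain ⟨k, l, q, hkl, hk, hkm, hl, hlm⟩ := exists_mul_eq_one_add_mul Nat.card_pos.ne' hcard
  obtain ⟨g, hg⟩ := IsCyclic.exists_generator (α := A)
  rw [← orderOf_eq_card_of_forall_mem_zpowers hg] at *
  set m := orderOf g
  have hζ := Complex.isPrimitiveRoot_exp m (by lia)
  obtain ⟨χ, hχ⟩ := exists_monoidHom_apply_eq hg (by lia) hζ.pow_eq_one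
  have hgm : MonoidAlgebra.of ℤ A g ^ m = 1 := by rw [← map_pow, pow_orderOf_eq_one, map_one]
  have hu := isCutGroup_iff_of_comm.1 hA _ _ (geom_sum_mul_geom_sum_sub_mul_eq_one hgm hkl)
  have hnorm := hu.norm_lift_eq_one χ
  simp only [map_sub, map_mul, map_sum, map_pow, map_natCast, MonoidAlgebra.lift_of, hχ,
    hζ.geom_sum_eq_zero (by lia), mul_zero, sub_zero, norm_mul] at hnorm
  have hk' := one_lt_norm_geom_sum_exp hk hkm
  have hl' := one_lt_norm_geom_sum_exp hl hlm
  exact (one_lt_mul hk'.le hl').ne' hnorm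

/-! ### Semidirect products by a cyclic group -/

section

variable {N C : Type*} [Group N] [Group C] (φ : C →* MulAut N)

/-- The embedding of `N × φ.ker` in `N ⋊[φ] C`. When `N` is torsion-free abelian, its range
contains every element with finitely many conjugates. -/
def prodKerHom : N × φ.ker →* N ⋊[φ] C where
  toFun p := ⟨p.1, p.2⟩
  map_one' := rfl
  map_mul' p q := by
    have hp : φ p.2 = 1 := p.2.2
    ext <;> simp [hp]

theorem prodKerHom_injective : Function.Injective (prodKerHom φ) := fun _ _ h =>
  Prod.ext (congr_arg SemidirectProduct.left h)
    (Subtype.ext (congr_arg SemidirectProduct.right h))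

variable {φ}

theorem mem_range_prodKerHom {g : N ⋊[φ] C} : g ∈ (prodKerHom φ).range ↔ g.right ∈ φ.ker :=
  ⟨fun ⟨p, hp⟩ => hp ▸ p.2.2, fun hg => ⟨(g.left, ⟨g.right, hg⟩), rfl⟩⟩

end

section

variable {N C : Type*} [CommGroup N] [Group C] {φ : C →* MulAut N}

theorem inl_conj (g : N ⋊[φ] C) (s : N) :
    SemidirectProduct.inl s * g * (SemidirectProduct.inl s)⁻¹ =
      ⟨g.left * (s / φ g.right s), g.right⟩ := by
  ext <;> simp [div_eq_mul_inv, mul_comm s, mul_assoc]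

theorem right_mem_ker_of_finite_conjugatesOf [IsMulTorsionFree N] {g : N ⋊[φ] C}
    (hg : (conjugatesOf g).Finite) : g.right ∈ φ.ker := by
  by_contra hker
  obtain ⟨s, hs⟩ : ∃ s, φ g.right s ≠ s := by
    simpa [MonoidHom.mem_ker, DFunLike.ext_iff] using hker
  have hs' : s / φ g.right s ≠ 1 := by simpa [div_eq_one] using hs.symm
  refine Set.infinite_of_injective_forall_mem (f := fun k : ℕ =>
    (⟨g.left * (s / φ g.right s) ^ k, g.right⟩ : N ⋊[φ] C)) (fun i j hij => ?_) (fun k => ?_) hg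
  · refine injective_pow_iff_not_isOfFinOrder.2 (not_isOfFinOrder_of_isMulTorsionFree hs') ?_
    exact mul_left_cancel (congr_arg SemidirectProduct.left hij)
  · refine isConj_iff.2 ⟨SemidirectProduct.inl (s ^ k), ?_⟩
    rw [inl_conj, map_pow, div_pow]

end

section

variable {N C : Type*} [CommGroup C]

theorem commute_inr_of_mem_ker [Group N] {φ : C →* MulAut N} {c : C}
    (hc : c ∈ φ.ker) (g : N ⋊[φ] C) :
    Commute (SemidirectProduct.inr c) g := by
  rw [MonoidHom.mem_ker] at hc
  ext <;> simp [hc, mul_comm]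

theorem isCutGroup_semidirectProduct_iff [CommGroup N] [IsMulTorsionFree N] {φ : C →* MulAut N}
    [Finite φ.ker] [IsCyclic φ.ker] :
    IsCutGroup (N ⋊[φ] C) ↔ Nat.card φ.ker ∣ 4 ∨ Nat.card φ.ker ∣ 6 := by
  constructor
  · intro h
    refine IsCutGroup.card_dvd_of_isCyclic (h.of_injective_of_forall_commute
      (f := SemidirectProduct.inr.comp φ.ker.subtype) ?_ fun c => commute_inr_of_mem_ker c.2)
    exact SemidirectProduct.inr_injective.comp φ.ker.subtype_injective
  · intro h
    rw [← IsCyclic.exponent_eq_card] at h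
    exact (isCutGroup_prod (N := N) h).of_forall_finite_conjugatesOf_mem_range
      (prodKerHom_injective φ) fun _ hg =>
        mem_range_prodKerHom.2 (right_mem_ker_of_finite_conjugatesOf hg)

end

theorem card_ker_mul_orderOf_apply {C H : Type*} [Group C] [Group H] {c : C}
    (hc : ∀ x, x ∈ Subgroup.zpowers c) (φ : C →* H) :
    Nat.card φ.ker * orderOf (φ c) = Nat.card C := by
  have hrange : φ.range = Subgroup.zpowers (φ c) := by
    rw [MonoidHom.range_eq_map, ← (Subgroup.eq_top_iff' _).2 hc, MonoidHom.map_zpowers]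
  rw [← Subgroup.card_mul_index φ.ker, Subgroup.index_ker, hrange, Nat.card_zpowers]

theorem orderOf_mulEquiv_inv (N : Type*) [CommGroup N] [IsMulTorsionFree N] [Nontrivial N] :
    orderOf (MulEquiv.inv N : MulAut N) = 2 := by
  refine orderOf_eq_prime (MulEquiv.ext fun x => by simp [sq]) fun h => ?_
  obtain ⟨x, hx⟩ := exists_ne (1 : N)
  have hinv : x⁻¹ = x := DFunLike.congr_fun h x
  have hsq : x ^ 2 = 1 := by rw [sq, ← inv_eq_iff_mul_eq_one, hinv]
  exact hx ((pow_eq_one_iff_left two_ne_zero).1 hsq)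

theorem comp_eq_conj_comp_of_forall_mem_zpowers {N C G : Type*} [Group N] [Group C] [Group G]
    {φ : C →* MulAut N} {f : N →* G} {ψ : C →* G} {c : C} (hc : ∀ x, x ∈ Subgroup.zpowers c)
    (h : ∀ x, f (φ c x) = ψ c * f x * (ψ c)⁻¹) (d : C) :
    f.comp (φ d).toMonoidHom = (MulAut.conj (ψ d)).toMonoidHom.comp f := by
  suffices ∀ x, f (φ d x) = ψ d * f x * (ψ d)⁻¹ from MonoidHom.ext fun x => by simp [this]
  have hd := hc d
  rw [Subgroup.zpowers_eq_closure] at hd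
  induction hd using Subgroup.closure_induction with
  | mem d hd => rwa [Set.mem_singleton_iff.1 hd]
  | one => simp
  | mul d e _ _ hd he => simp [hd, he, mul_assoc]
  | inv d _ hd =>
    intro x
    have := hd ((φ d)⁻¹ x)
    rw [MulAut.apply_inv_self] at this
    simp [this, mul_assoc]

theorem presentedGroup_of_false_pow (n : ℕ) :
    (PresentedGroup.of false : PresentedGroup (metacyclicRelsZSemidirectCn n)) ^ n = 1 :=
  PresentedGroup.one_of_mem (x := FreeGroup.of false ^ n) (Set.mem_insert _ _)

theorem presentedGroup_of_false_conj_of_true (n : ℕ) :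
    (PresentedGroup.of false : PresentedGroup (metacyclicRelsZSemidirectCn n)) * .of true *
      (.of false)⁻¹ = (.of true)⁻¹ :=
  eq_inv_of_mul_eq_one_left <| PresentedGroup.one_of_mem
    (x := FreeGroup.of false * FreeGroup.of true * (FreeGroup.of false)⁻¹ * FreeGroup.of true)
    (Set.mem_insert_of_mem _ rfl)

section

variable {C : Type*} [Group C] {c : C} {φ : C →* MulAut (Multiplicative ℤ)}

/-- The homomorphism `⟨a, b⟩ → ℤ ⋊[φ] C` that sends `a` to the generator of `ℤ` and `b` to an
element `c` of `C` acting by inversion. -/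
def presentedGroupToSemidirectProduct (hφ : φ c = MulEquiv.inv (Multiplicative ℤ)) :
    PresentedGroup (metacyclicRelsZSemidirectCn (orderOf c)) →* Multiplicative ℤ ⋊[φ] C :=
  PresentedGroup.toGroup
    (f := fun i => bif i then SemidirectProduct.inl (.ofAdd 1) else SemidirectProduct.inr c) <| by
      rintro r (rfl | rfl)
      · rw [map_pow, FreeGroup.lift_apply_of, cond_false, ← map_pow, pow_orderOf_eq_one, map_one]
      · ext <;> simp [hφ]

/-- The inverse of `presentedGroupToSemidirectProduct` when `c` generates `C`. -/
noncomputable def semidirectProductToPresentedGroup (hc : ∀ x, x ∈ Subgroup.zpowers c)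
    (hφ : φ c = MulEquiv.inv (Multiplicative ℤ)) :
    Multiplicative ℤ ⋊[φ] C →* PresentedGroup (metacyclicRelsZSemidirectCn (orderOf c)) :=
  SemidirectProduct.lift (zpowersHom _ (.of true))
    (monoidHomOfForallMemZpowers hc (orderOf_dvd_of_pow_eq_one (presentedGroup_of_false_pow _)))
    (comp_eq_conj_comp_of_forall_mem_zpowers hc fun x => by
      rw [hφ]
      simp [monoidHomOfForallMemZpowers_apply_gen, ← conj_zpow,
        presentedGroup_of_false_conj_of_true])

/-- The presentation of `ℤ ⋊[φ] C` for a group `C` generated by an element `c` that acts by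
inversion. -/
noncomputable def presentedGroupEquivSemidirectProduct (hc : ∀ x, x ∈ Subgroup.zpowers c)
    (hφ : φ c = MulEquiv.inv (Multiplicative ℤ)) :
    PresentedGroup (metacyclicRelsZSemidirectCn (orderOf c)) ≃* Multiplicative ℤ ⋊[φ] C :=
  MonoidHom.toMulEquiv (presentedGroupToSemidirectProduct hφ)
    (semidirectProductToPresentedGroup hc hφ)
    (PresentedGroup.ext fun i => by
      cases i <;> simp [presentedGroupToSemidirectProduct, semidirectProductToPresentedGroup])
    (SemidirectProduct.hom_ext
      (MonoidHom.ext_mint (by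
        simp [presentedGroupToSemidirectProduct, semidirectProductToPresentedGroup]))
      ((MonoidHom.eq_iff_eq_on_generator hc _ _).2 (by
        simp [presentedGroupToSemidirectProduct, semidirectProductToPresentedGroup])))

end

theorem isCutGroup_presentedGroup_iff {n : ℕ} (hn : n ≠ 0) (heven : Even n) :
    IsCutGroup (PresentedGroup (metacyclicRelsZSemidirectCn n)) ↔ n ∣ 8 ∨ n ∣ 12 := by
  have : NeZero n := ⟨hn⟩
  obtain ⟨c, hc⟩ := IsCyclic.exists_generator (α := Multiplicative (ZMod n))
  have horder : orderOf c = n := by simp [orderOf_eq_card_of_forall_mem_zpowers hc]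
  have hinv := orderOf_mulEquiv_inv (Multiplicative ℤ)
  have hpow : (MulEquiv.inv (Multiplicative ℤ) : MulAut _) ^ orderOf c = 1 :=
    orderOf_dvd_iff_pow_eq_one.1 (by rw [hinv, horder]; exact heven.two_dvd)
  obtain ⟨φ, hφ⟩ := exists_monoidHom_apply_eq hc (by rwa [horder]) hpow
  have hker : Nat.card φ.ker * 2 = n := by
    simpa [hφ, hinv] using card_ker_mul_orderOf_apply hc φ
  have hcut := isCutGroup_congr (presentedGroupEquivSemidirectProduct hc hφ)
  rw [horder, isCutGroup_semidirectProduct_iff] at hcut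
  rw [hcut, ← Nat.mul_dvd_mul_iff_right two_pos, ← Nat.mul_dvd_mul_iff_right (b := 6) two_pos, hker]
  simp only [Nat.reduceMul]

/-- For an even integer `n ≥ 2`, the group
`G = ℤ ⋊ Cₙ = ⟨a, b | bⁿ = 1, b a b⁻¹ = a⁻¹⟩` is a cut-group if and only if
`n ∈ {2, 4, 6, 8, 12}`. -/
theorem isCutGroup_z_semidirect_cn_iff (n : ℕ) (hn : 2 ≤ n) (heven : Even n) :
    IsCutGroup (PresentedGroup (metacyclicRelsZSemidirectCn n)) ↔
      n ∈ ({2, 4, 6, 8, 12} : Set ℕ) := by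
  rw [isCutGroup_presentedGroup_iff (by lia) heven]
  constructor
  · intro h
    have hle : n ≤ 12 := h.elim (fun h => (Nat.le_of_dvd (by lia) h).trans (by lia))
      (Nat.le_of_dvd (by lia))
    interval_cases n <;> revert h heven <;> decide
  · rintro (rfl | rfl | rfl | rfl | rfl) <;> decide
end

section
/- Let m ≥ 3 be an integer, let r be a unit of ℤ/mℤ with r ≠ 1, and let G = (ℤ/mℤ) ⋊ ℤ be the semidirect product where the generator 1 ∈ ℤ acts on the additive group ℤ/mℤ by multiplication by r; equivalently, G = ⟨a, b | aᵐ = 1, bab⁻¹ = aʳ⟩. Then G is a cut-group if and only if the unit group (ℤ/mℤ)ˣ is generated by {−1, r}. -/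
/-- The relations of the infinite metacyclic group
`G = ⟨a, b | aᵐ = 1, b a b⁻¹ = aʳ⟩ ≅ (ℤ/mℤ) ⋊ ℤ` (with the generator `1 ∈ ℤ` acting on
`ℤ/mℤ` by multiplication by the unit `r`), where `a` and `b` are the generators indexed
by `true` and `false`. -/
def metacyclicRelsCmSemidirectZ (m : ℕ) (r : (ZMod m)ˣ) : Set (FreeGroup Bool) :=
  {FreeGroup.of true ^ m,
   FreeGroup.of false * FreeGroup.of true * (FreeGroup.of false)⁻¹ *
     (FreeGroup.of true ^ ((r : ZMod m).val))⁻¹}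

/-!
Let `H` act on `ℤ/m` through `φ : H → (ℤ/m)ˣ`, let `U` be generated by `-1` and the image of `φ`,
and let `ψ` be a primitive additive character of `ℤ/m` with values in `ℚ(ζₘ)`. Applying the discrete
Fourier transform along the fibers of `ℤ/m ⋊ H → H` at a frequency `j` gives a map
`ℤ[ℤ/m ⋊ H] → ℚ(ζₘ)[H]` that is multiplicative on central elements.

Suppose `U` is everything. If `H` has unique products, the transforms of a central unit at each `j`
are supported at a single element of `H`. The restriction `x` of the unit to a central fiber is
invariant under `φ`, hence the numbers `x̂(j) x̂(-j)` are invariant under the Galois group: they are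
integers, equal to zero or invertible. By Parseval, `x` takes at most one nonzero value, `±1`.

Suppose `U` is proper. Its fixed field is a totally real field other than `ℚ`, so it has a unit `w`
of infinite order, which may be taken congruent to `1` modulo `m`. This congruence provides an
integral function on `ℤ/m` whose transform is the conjugate `σ w` at the frequency of `σ`, and `1`
at the frequencies that are not invertible: as an element of the group ring, it is a central unit
of infinite order.
-/

namespace CutGroup

open Subgroup MonoidAlgebra NumberField

section Isomorphism

variable {G G' : Type*} [Group G] [Group G']

lemma isCutGroup_of_mulEquiv (e : G ≃* G') (h : IsCutGroup G) : IsCutGroup G' := by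
  intro u hu
  let E : MonoidAlgebra ℤ G' ≃ₐ[ℤ] MonoidAlgebra ℤ G := MonoidAlgebra.domCongr ℤ ℤ e.symm
  have hcentral : E u ∈ Subring.center (MonoidAlgebra ℤ G) := by
    rw [Subring.mem_center_iff] at hu ⊢
    intro v
    obtain ⟨w, rfl⟩ := E.surjective v
    rw [← map_mul, ← map_mul, hu w]
  obtain ⟨g, hg⟩ := h (Units.mapEquiv E.toMulEquiv u) hcentral
  have hEg : E (of ℤ G' (e g)) = of ℤ G g := by simp [E, of_apply]
  refine ⟨e g, hg.imp (fun hg => ?_) fun hg => ?_⟩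
  · exact E.injective (hg.trans hEg.symm)
  · exact E.injective (hg.trans (by rw [map_neg, hEg]))

lemma isCutGroup_iff_eq_single :
    IsCutGroup G ↔ ∀ u : (MonoidAlgebra ℤ G)ˣ, u.val ∈ Subring.center (MonoidAlgebra ℤ G) →
      ∃ g e, (e = 1 ∨ e = -1) ∧ u.val = single g e := by
  simp [IsCutGroup, of_apply, or_and_right, exists_or, single_neg]

lemma isCutGroup_congr (e : G ≃* G') : IsCutGroup G ↔ IsCutGroup G' :=
  ⟨isCutGroup_of_mulEquiv e, isCutGroup_of_mulEquiv e.symm⟩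

end Isomorphism

section UniqueProducts

variable {k H : Type*} [Semiring k] [NoZeroDivisors k] [Nontrivial k] [Group H] [TwoUniqueProds H]

/-
With at least two products of support elements, two of them are attained only once, so that
`p * q` has at least two elements in its support.
-/
lemma exists_eq_single_of_mul_eq_one {p q : MonoidAlgebra k H} (hpq : p * q = 1) :
    ∃ h a, p = single h a ∧ a * q.coeff h⁻¹ = 1 := by
  have hcard : ¬ 1 < p.coeff.support.card * q.coeff.support.card := by
    intro hcard
    obtain ⟨x, hx, y, hy, hxy, hux, huy⟩ := TwoUniqueProds.uniqueMul_of_one_lt_card hcard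
    rw [Finset.mem_product] at hx hy
    have eq_one : ∀ z : H × H, z.1 ∈ p.coeff.support → z.2 ∈ q.coeff.support →
        UniqueMul p.coeff.support q.coeff.support z.1 z.2 → z.1 * z.2 = 1 := by
      intro z hz₁ hz₂ hz
      have hne := mul_ne_zero (Finsupp.mem_support_iff.1 hz₁) (Finsupp.mem_support_iff.1 hz₂)
      rw [← coeff_mul_mul_of_uniqueMul hz, hpq] at hne
      by_contra h1
      exact hne (by simp [one_def, Ne.symm h1])
    have := hux hy.1 hy.2 ((eq_one y hy.1 hy.2 huy).trans (eq_one x hx.1 hx.2 hux).symm)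
    exact hxy (Prod.ext this.1.symm this.2.symm)
  have support_nonempty : ∀ f : MonoidAlgebra k H, f ≠ 0 → 0 < f.coeff.support.card := by
    intro f hf
    rwa [Finset.card_pos, Finsupp.support_nonempty_iff, Ne, coeff_eq_zero]
  have hp := support_nonempty p (left_ne_zero_of_mul_eq_one hpq)
  have hq := support_nonempty q (right_ne_zero_of_mul_eq_one hpq)
  obtain ⟨h, a, -, ha⟩ := Finsupp.card_support_eq_one'.1
    (show p.coeff.support.card = 1 by nlinarith)
  obtain rfl : p = single h a := coeff_injective (by simpa using ha)
  refine ⟨h, a, rfl, ?_⟩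
  simpa [coeff_single_mul_apply] using congrArg (fun f : MonoidAlgebra k H => f.coeff 1) hpq

end UniqueProducts

section SemidirectProduct

/-- The action of the units of a ring on its additive group, by multiplication, with the additive
group written multiplicatively as `SemidirectProduct` requires. -/
def unitsMulAut (R : Type*) [Ring R] : Rˣ →* MulAut (Multiplicative R) :=
  (MulAutMultiplicative R).symm.toMonoidHom.comp AddAut.mulLeft

@[simp]
lemma toAdd_unitsMulAut_apply {R : Type*} [Ring R] (r : Rˣ) (x : Multiplicative R) :
    (unitsMulAut R r x).toAdd = r * x.toAdd :=
  rfl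

/-- The semidirect product `R ⋊ H`, where `H` acts on the additive group of the ring `R` through a
homomorphism to the unit group of `R`. -/
abbrev UnitsSemidirect {R H : Type*} [Ring R] [Group H] (φ : H →* Rˣ) : Type _ :=
  Multiplicative R ⋊[(unitsMulAut R).comp φ] H

end SemidirectProduct

section IntegerFunctions

variable {ι : Type*} [Fintype ι]

lemma eq_zero_or_eq_single_of_sum_sq_le_one [DecidableEq ι] {x : ι → ℤ} (hx : ∑ i, x i ^ 2 ≤ 1) :
    x = 0 ∨ ∃ i e, (e = 1 ∨ e = -1) ∧ x = Pi.single i e := by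
  rw [or_iff_not_imp_left]
  intro hne
  obtain ⟨i, hi⟩ := Function.ne_iff.1 hne
  have hsplit := Finset.add_sum_erase Finset.univ (fun i => x i ^ 2) (Finset.mem_univ i)
  have hpos : 1 ≤ x i ^ 2 := Int.one_le_abs (pow_ne_zero 2 hi) |>.trans (by simp)
  have hrest : ∑ j ∈ Finset.univ.erase i, x j ^ 2 = 0 :=
    le_antisymm (by linarith) (Finset.sum_nonneg fun j _ => sq_nonneg _)
  refine ⟨i, x i, sq_eq_one_iff.1 (by linarith), funext fun j => ?_⟩
  by_cases hj : j = i
  · simp [hj]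
  · have := (Finset.sum_eq_zero_iff_of_nonneg fun j _ => sq_nonneg (x j)).1 hrest j (by simp [hj])
    simpa [hj] using this

end IntegerFunctions

section FourierTransform

lemma isIntegral_addChar {A K : Type*} [AddGroup A] [Finite A] [CommRing K] (ψ : AddChar A K)
    (i : A) : IsIntegral ℤ (ψ i) := by
  obtain ⟨n, hn, hi⟩ := isOfFinAddOrder_iff_nsmul_eq_zero.1 (isOfFinAddOrder_of_finite i)
  refine IsIntegral.of_pow hn ?_
  rw [← AddChar.map_nsmul_eq_pow, hi, AddChar.map_zero_eq_one]
  exact isIntegral_one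

variable {R K : Type*} [CommRing R] [Fintype R] [CommRing K] (ψ : AddChar R K)

/-- The discrete Fourier transform, with respect to the additive character `ψ`, of an integer-valued
function on a finite ring. -/
def fourier (x : R → ℤ) (j : R) : K :=
  ∑ i, (x i : K) * ψ (j * i)

lemma fourier_mul_unit {x y : R → ℤ} {t : Rˣ} (hxy : ∀ i, y (t * i) = x i) (j : R) :
    fourier ψ x (j * t) = fourier ψ y j := by
  unfold fourier
  rw [← Equiv.sum_comp t.mulLeft fun i => (y i : K) * ψ (j * i)]
  simp [hxy, mul_assoc]

lemma fourier_mul_fourier_neg_of_invariant {U : Subgroup Rˣ} (hU : zpowers (-1) ⊔ U = ⊤)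
    {x : R → ℤ} (hx : ∀ t ∈ U, ∀ i, x (t * i) = x i) (t : Rˣ) (j : R) :
    fourier ψ x (j * t) * fourier ψ x (-(j * t)) = fourier ψ x j * fourier ψ x (-j) := by
  obtain ⟨_, ⟨k, rfl⟩, s, hs, rfl⟩ := mem_sup.1 (hU ▸ mem_top t)
  have mul_s : ∀ j, fourier ψ x (j * s) = fourier ψ x j := fourier_mul_unit ψ (hx s hs)
  have neg_mul_s : fourier ψ x (-(j * s)) = fourier ψ x (-j) := by rw [← neg_mul, mul_s]
  rcases k.even_or_odd with hk | hk
  · simp [hk.neg_one_zpow, mul_s, neg_mul_s]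
  · simp [hk.neg_one_zpow, mul_s, neg_mul_s, mul_comm]

lemma fourier_single [DecidableEq R] (i : R) (e : ℤ) (j : R) :
    fourier ψ (Pi.single i e) j = e * ψ (j * i) := by
  rw [fourier, Finset.sum_eq_single i (by simp +contextual) (by simp), Pi.single_eq_same]

lemma isIntegral_fourier (x : R → ℤ) (j : R) : IsIntegral ℤ (fourier ψ x j) :=
  IsIntegral.sum _ fun i _ => (isIntegral_intCast (x i)).mul (isIntegral_addChar ψ _)

variable {ψ} [IsDomain K]

theorem sum_fourier_mul_addChar (hψ : ψ.IsPrimitive) (x : R → ℤ) (i : R) :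
    ∑ j, fourier ψ x j * ψ (-j * i) = Fintype.card R * x i := by
  classical
  calc ∑ j, fourier ψ x j * ψ (-j * i)
    _ = ∑ j, ∑ i', x i' * ψ (j * (i' - i)) := by
      refine Finset.sum_congr rfl fun j _ => ?_
      rw [fourier, Finset.sum_mul]
      refine Finset.sum_congr rfl fun i' _ => ?_
      rw [mul_assoc, ← AddChar.map_add_eq_mul]
      ring_nf
    _ = ∑ i', x i' * ∑ j, ψ (j * (i' - i)) := by
      rw [Finset.sum_comm]
      simp only [Finset.mul_sum]
    _ = Fintype.card R * x i := by
      simp [AddChar.sum_mulShift _ hψ, sub_eq_zero, mul_comm]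

theorem sum_fourier_mul_fourier_neg (hψ : ψ.IsPrimitive) (x : R → ℤ) :
    ∑ j, fourier ψ x j * fourier ψ x (-j) = Fintype.card R * ∑ i, (x i : K) ^ 2 := by
  calc ∑ j, fourier ψ x j * fourier ψ x (-j)
    _ = ∑ i, x i * ∑ j, fourier ψ x j * ψ (-j * i) := by
      simp only [Finset.mul_sum, fourier.eq_def ψ x (-_)]
      rw [Finset.sum_comm]
      exact Finset.sum_congr rfl fun i _ => Finset.sum_congr rfl fun j _ => by ring
    _ = Fintype.card R * ∑ i, (x i : K) ^ 2 := by
      rw [Finset.mul_sum]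
      refine Finset.sum_congr rfl fun i _ => ?_
      rw [sum_fourier_mul_addChar hψ]
      ring

lemma fourier_injective [CharZero K] (hψ : ψ.IsPrimitive) : Function.Injective (fourier ψ) := by
  intro x y hxy
  funext i
  have hcard : (Fintype.card R : K) ≠ 0 := Nat.cast_ne_zero.2 Fintype.card_ne_zero
  have : (Fintype.card R * x i : K) = Fintype.card R * y i := by
    rw [← sum_fourier_mul_addChar hψ, hxy, sum_fourier_mul_addChar hψ]
  exact_mod_cast mul_left_cancel₀ hcard this

end FourierTransform

section FiberwiseTransform

open Multiplicative (ofAdd toAdd)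
open SemidirectProduct (inl inr)

lemma coeff_conj_of_mem_center {k G : Type*} [Ring k] [Group G] {u : MonoidAlgebra k G}
    (hu : u ∈ Subring.center (MonoidAlgebra k G)) (g x : G) :
    u.coeff (g * x * g⁻¹) = u.coeff x := by
  have := congrArg (fun v : MonoidAlgebra k G => v.coeff (g * x))
    (Subring.mem_center_iff.1 hu (single g 1))
  simpa [coeff_single_mul_apply, coeff_mul_single_apply] using this.symm

variable {R K H : Type*} [CommRing R] [CommRing K] [Group H] {φ : H →* Rˣ}

/-- The restriction of an element of `ℤ[R ⋊ H]` to the fiber `R × {h}`. -/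
def slice (u : MonoidAlgebra ℤ (UnitsSemidirect φ)) (h : H) (i : R) : ℤ :=
  u.coeff ⟨ofAdd i, h⟩

lemma slice_conj_of_mem_center {u : MonoidAlgebra ℤ (UnitsSemidirect φ)}
    (hu : u ∈ Subring.center (MonoidAlgebra ℤ (UnitsSemidirect φ))) (k h : H) (i : R) :
    slice u (k * h * k⁻¹) (φ k * i) = slice u h i := by
  rw [slice, slice, ← coeff_conj_of_mem_center hu (inr k) ⟨ofAdd i, h⟩]
  congr 1
  ext <;> simp

lemma slice_mul_of_mem_center {u : MonoidAlgebra ℤ (UnitsSemidirect φ)}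
    (hu : u ∈ Subring.center (MonoidAlgebra ℤ (UnitsSemidirect φ))) {h : H} (hh : h ∈ center H)
    (k : H) (i : R) : slice u h (φ k * i) = slice u h i := by
  conv_rhs => rw [← slice_conj_of_mem_center hu k, mem_center_iff.1 hh k, mul_inv_cancel_right]

variable (ψ : AddChar R K)

/-- The fiberwise Fourier transform `ℤ[R ⋊ H] → K[H]` at the frequency `j`: the group element
`(i, h)` is sent to `ψ (j * i)` times `h`. -/
noncomputable def fiberFourier (j : R) : MonoidAlgebra ℤ (UnitsSemidirect φ) →+ MonoidAlgebra K H :=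
  liftNC (Int.castAddHom _) fun g => single g.right (ψ (j * g.left.toAdd))

@[simp]
lemma fiberFourier_single (j : R) (g : UnitsSemidirect φ) (n : ℤ) :
    fiberFourier ψ j (single g n) = single g.right (n * ψ (j * g.left.toAdd)) := by
  simp [fiberFourier, liftNC_single, ← zsmul_eq_mul, smul_single]

lemma coeff_fiberFourier [Fintype R] (j : R) (u : MonoidAlgebra ℤ (UnitsSemidirect φ)) (h : H) :
    (fiberFourier ψ j u).coeff h = fourier ψ (slice u h) j := by
  classical
  unfold fourier slice
  induction u using MonoidAlgebra.induction_linear with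
  | zero => simp
  | add u v hu hv => simp [hu, hv, add_mul, Finset.sum_add_distrib]
  | single g n =>
    rw [fiberFourier_single, Finset.sum_eq_single g.left.toAdd]
    · by_cases hg : g.right = h <;>
        simp [Finsupp.single_apply, SemidirectProduct.ext_iff, hg]
    · intro i _ hi
      have : g.left ≠ ofAdd i := fun hg => hi (congrArg toAdd hg).symm
      simp [SemidirectProduct.ext_iff, this]
    · simp

lemma fourier_slice_of_fiberFourier_eq_single [Fintype R] [DecidableEq H] {j : R}
    {u : MonoidAlgebra ℤ (UnitsSemidirect φ)} {h : H} {a : K}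
    (hu : fiberFourier ψ j u = single h a) (k : H) :
    fourier ψ (slice u k) j = if h = k then a else 0 := by
  rw [← coeff_fiberFourier, hu, coeff_single, Finsupp.single_apply]

lemma eq_of_fiberFourier_eq [Finite R] [IsDomain K] [CharZero K] {ψ : AddChar R K}
    (hψ : ψ.IsPrimitive) {u v : MonoidAlgebra ℤ (UnitsSemidirect φ)}
    (huv : ∀ j, fiberFourier ψ j u = fiberFourier ψ j v) : u = v := by
  cases nonempty_fintype R
  refine coeff_injective (Finsupp.ext fun g => ?_)
  have hslice : slice u g.right = slice v g.right := fourier_injective hψ <| funext fun j => by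
    rw [← coeff_fiberFourier, huv, coeff_fiberFourier]
  exact congrFun hslice g.left.toAdd

lemma fiberFourier_single_inl_mul (j i : R) (u : MonoidAlgebra ℤ (UnitsSemidirect φ)) :
    fiberFourier ψ j (single (inl (ofAdd i)) 1 * u) = ψ (j * i) • fiberFourier ψ j u := by
  induction u using MonoidAlgebra.induction_linear with
  | zero => simp
  | add u v hu hv => rw [mul_add, map_add, hu, hv, map_add, smul_add]
  | single g n =>
    simp [single_mul_single, smul_single, mul_add, AddChar.map_add_eq_mul, mul_left_comm]

lemma fiberFourier_mul_single_inr (j : R) (u : MonoidAlgebra ℤ (UnitsSemidirect φ)) (h : H)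
    (n : ℤ) :
    fiberFourier ψ j (u * single (inr h) n) = fiberFourier ψ j u * single h (n : K) := by
  induction u using MonoidAlgebra.induction_linear with
  | zero => simp
  | add u v hu hv => rw [add_mul, map_add, hu, hv, map_add, add_mul]
  | single g n => simp [single_mul_single, mul_right_comm]

lemma fiberFourier_one (j : R) :
    fiberFourier ψ j (1 : MonoidAlgebra ℤ (UnitsSemidirect φ)) = 1 := by
  simp [one_def]

/-
The translations by `R` can be moved to the left of a central element, where they do not meet the
action of `H`.
-/
lemma fiberFourier_mul_of_mem_center {v : MonoidAlgebra ℤ (UnitsSemidirect φ)}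
    (hv : v ∈ Subring.center (MonoidAlgebra ℤ (UnitsSemidirect φ))) (j : R)
    (u : MonoidAlgebra ℤ (UnitsSemidirect φ)) :
    fiberFourier ψ j (v * u) = fiberFourier ψ j v * fiberFourier ψ j u := by
  induction u using MonoidAlgebra.induction_linear with
  | zero => simp
  | add u w hu hw => rw [mul_add, map_add, hu, hw, map_add, mul_add]
  | single g n =>
    have hg : single g n = single (inl g.left) 1 * single (inr g.right) n := by
      simp [single_mul_single]
    calc fiberFourier ψ j (v * single g n)
      _ = fiberFourier ψ j (single (inl g.left) 1 * v * single (inr g.right) n) := by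
        rw [hg, ← mul_assoc, Subring.mem_center_iff.1 hv]
      _ = ψ (j * g.left.toAdd) • fiberFourier ψ j v * single g.right (n : K) := by
        rw [fiberFourier_mul_single_inr, ← ofAdd_toAdd g.left, fiberFourier_single_inl_mul]
        simp
      _ = fiberFourier ψ j v * fiberFourier ψ j (single g n) := by
        rw [fiberFourier_single, smul_mul_assoc, ← mul_smul_comm, smul_single, smul_eq_mul,
          mul_comm (n : K)]

variable [Fintype R]

/-- The element of `ℤ[R ⋊ H]` supported on `R` with the given coefficients. -/
noncomputable def ofCoeffs (φ : H →* Rˣ) (c : R → ℤ) : MonoidAlgebra ℤ (UnitsSemidirect φ) :=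
  ∑ i, single (inl (ofAdd i)) (c i)

lemma fiberFourier_ofCoeffs (c : R → ℤ) (j : R) :
    fiberFourier ψ j (ofCoeffs φ c) = single 1 (fourier ψ c j) := by
  simp only [ofCoeffs, fourier, map_sum, fiberFourier_single, SemidirectProduct.right_inl,
    SemidirectProduct.left_inl, toAdd_ofAdd]
  exact (map_sum (singleAddHom (1 : H)) _ _).symm

lemma ofCoeffs_mem_center {c : R → ℤ} (hc : ∀ h i, c (φ h * i) = c i) :
    ofCoeffs φ c ∈ Subring.center (MonoidAlgebra ℤ (UnitsSemidirect φ)) := by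
  rw [Subring.mem_center_iff]
  intro u
  induction u using MonoidAlgebra.induction_linear with
  | zero => simp
  | add u v hu hv => rw [add_mul, mul_add, hu, hv]
  | single g n =>
    rw [ofCoeffs, Finset.mul_sum, Finset.sum_mul]
    conv_rhs => rw [← Equiv.sum_comp (φ g.right).mulLeft]
    refine Finset.sum_congr rfl fun i _ => ?_
    rw [single_mul_single, single_mul_single, Units.mulLeft_apply, hc, mul_comm n]
    congr 1
    ext <;> simp [mul_comm]

end FiberwiseTransform

section Cyclotomic

open IsCyclotomicExtension.Rat (galEquivZMod)

lemma exists_intCast_eq_of_isIntegral_of_fixed {L : Type*} [Field L] [NumberField L]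
    [IsGalois ℚ L] {α : L} (hα : IsIntegral ℤ α) (hfix : ∀ σ : Gal(L/ℚ), σ α = α) :
    ∃ n : ℤ, (n : L) = α := by
  obtain ⟨q, rfl⟩ := IntermediateField.mem_bot.1 (IsGalois.mem_bot_iff_fixed α |>.2 hfix)
  obtain ⟨n, rfl⟩ := IsIntegrallyClosed.isIntegral_iff.1
    ((isIntegral_algebraMap_iff (algebraMap ℚ L).injective).1 hα)
  exact ⟨n, by simp⟩

variable {m : ℕ} [NeZero m] {L : Type*} [Field L] [NumberField L] [IsCyclotomicExtension {m} ℚ L]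

variable (m L) in
lemma exists_primitive_addChar : ∃ ψ : AddChar (ZMod m) L, ψ.IsPrimitive :=
  ⟨_, AddChar.zmodChar_primitive_of_primitive_root m (IsCyclotomicExtension.zeta_spec m ℚ L)⟩

variable (ψ : AddChar (ZMod m) L)

lemma gal_addChar (σ : Gal(L/ℚ)) (i : ZMod m) : σ (ψ i) = ψ (galEquivZMod m L σ * i) := by
  have hi : ψ i ^ m = 1 := by rw [← AddChar.map_nsmul_eq_pow]; simp
  rw [IsCyclotomicExtension.Rat.galEquivZMod_apply_of_pow_eq m L σ hi, ← AddChar.map_nsmul_eq_pow]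
  simp

lemma gal_fourier (σ : Gal(L/ℚ)) (x : ZMod m → ℤ) (j : ZMod m) :
    σ (fourier ψ x j) = fourier ψ x (j * galEquivZMod m L σ) := by
  simp [fourier, gal_addChar, mul_assoc, mul_left_comm, mul_comm]

variable {U : Subgroup (ZMod m)ˣ} {x y : ZMod m → ℤ}

lemma exists_intCast_eq_fourier_mul_fourier_neg (hU : zpowers (-1) ⊔ U = ⊤)
    (hx : ∀ t ∈ U, ∀ i, x (t * i) = x i) (j : ZMod m) :
    ∃ n : ℤ, (n : L) = fourier ψ x j * fourier ψ x (-j) := by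
  have := IsCyclotomicExtension.isGalois {m} ℚ L
  refine exists_intCast_eq_of_isIntegral_of_fixed
    ((isIntegral_fourier ψ x j).mul (isIntegral_fourier ψ x (-j))) fun σ => ?_
  rw [map_mul, gal_fourier, gal_fourier, neg_mul, fourier_mul_fourier_neg_of_invariant ψ hU hx]

/-
Each `fourier ψ x j * fourier ψ x (-j)` is zero or an invertible integer, so by Parseval the sum of
the squares of the values of `x` is at most one.
-/
theorem eq_zero_or_eq_single_of_fourier_mul_eq_one {ψ : AddChar (ZMod m) L} (hψ : ψ.IsPrimitive)
    (hU : zpowers (-1) ⊔ U = ⊤) (hx : ∀ t ∈ U, ∀ i, x (t * i) = x i)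
    (hy : ∀ t ∈ U, ∀ i, y (t * i) = y i)
    (hxy : ∀ j, fourier ψ x j = 0 ∨ fourier ψ x j * fourier ψ y j = 1) :
    x = 0 ∨ ∃ i e, (e = 1 ∨ e = -1) ∧ x = Pi.single i e := by
  apply eq_zero_or_eq_single_of_sum_sq_le_one
  choose n hn using exists_intCast_eq_fourier_mul_fourier_neg ψ hU hx
  choose k hk using exists_intCast_eq_fourier_mul_fourier_neg ψ hU hy
  have n_le_one : ∀ j, n j ≤ 1 := by
    intro j
    have hnk : n j = 0 ∨ n j * k j = 1 := by
      suffices (n j : L) = 0 ∨ (n j * k j : L) = 1 from mod_cast this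
      rw [hn, hk, mul_mul_mul_comm]
      rcases hxy j with h | h <;> rcases hxy (-j) with h' | h' <;> simp [h, h']
    rcases hnk with h | h
    · omega
    · rcases Int.isUnit_iff.1 (.of_mul_eq_one _ h) with h | h <;> omega
  have parseval : ∑ j, n j = m * ∑ i, x i ^ 2 := by
    have := sum_fourier_mul_fourier_neg hψ x
    simp only [← hn, ZMod.card] at this
    exact_mod_cast this
  have hm : (0 : ℤ) < m := by exact_mod_cast NeZero.pos m
  refine le_of_mul_le_mul_left ?_ hm
  calc m * ∑ i, x i ^ 2
    _ = ∑ j, n j := parseval.symm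
    _ ≤ ∑ _j : ZMod m, 1 := Finset.sum_le_sum fun j _ => n_le_one j
    _ = m * 1 := by simp

end Cyclotomic

section Sufficiency

open Multiplicative (ofAdd)

section

variable {R K H : Type*} [CommRing R] [CommRing K] [Group H]
  {φ : H →* Rˣ} (ψ : AddChar R K) {u v : MonoidAlgebra ℤ (UnitsSemidirect φ)}

lemma exists_fiberFourier_eq_single [Fintype R] [IsDomain K] [TwoUniqueProds H]
    (hu : u ∈ Subring.center (MonoidAlgebra ℤ (UnitsSemidirect φ))) (huv : u * v = 1) (j : R) :
    ∃ h a, fiberFourier ψ j u = single h a ∧ a * fourier ψ (slice v h⁻¹) j = 1 := by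
  simp only [← coeff_fiberFourier]
  apply exists_eq_single_of_mul_eq_one
  rw [← fiberFourier_mul_of_mem_center ψ hu, huv, fiberFourier_one]

lemma mem_center_of_fiberFourier_zero_eq_single [Finite R]
    (hu : u ∈ Subring.center (MonoidAlgebra ℤ (UnitsSemidirect φ))) {h : H} {a : K} (ha : a ≠ 0)
    (hua : fiberFourier ψ 0 u = single h a) : h ∈ center H := by
  cases nonempty_fintype R
  rw [mem_center_iff]
  intro k
  have hcoeff : (fiberFourier ψ 0 u).coeff (k * h * k⁻¹) = (fiberFourier ψ 0 u).coeff h := by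
    rw [coeff_fiberFourier, coeff_fiberFourier,
      ← fourier_mul_unit ψ (slice_conj_of_mem_center hu k h), zero_mul]
  rw [hua] at hcoeff
  by_contra hne
  have : h ≠ k * h * k⁻¹ := fun h' => hne (eq_mul_inv_iff_mul_eq.1 h').symm
  simp [this, ha.symm] at hcoeff

end

variable {m : ℕ} [NeZero m] {H : Type*} [Group H] [TwoUniqueProds H] {φ : H →* (ZMod m)ˣ}

/-
At the frequencies `j` where the transform of `u` is supported at another element than `h`, the
Fourier transform of `slice u h` vanishes.
-/
theorem exists_slice_eq_single {L : Type*} [Field L] [NumberField L]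
    [IsCyclotomicExtension {m} ℚ L] {ψ : AddChar (ZMod m) L} (hψ : ψ.IsPrimitive)
    (hφ : zpowers (-1) ⊔ φ.range = ⊤) {u v : MonoidAlgebra ℤ (UnitsSemidirect φ)}
    (hu : u ∈ Subring.center (MonoidAlgebra ℤ (UnitsSemidirect φ)))
    (hv : v ∈ Subring.center (MonoidAlgebra ℤ (UnitsSemidirect φ))) (huv : u * v = 1) :
    ∃ h i e, (e = 1 ∨ e = -1) ∧ slice u h = Pi.single i e := by
  classical
  obtain ⟨h, a, hua, hav⟩ := exists_fiberFourier_eq_single ψ hu huv 0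
  have ha : a ≠ 0 := left_ne_zero_of_mul_eq_one hav
  have central : h ∈ center H := mem_center_of_fiberFourier_zero_eq_single ψ hu ha hua
  have hslice : slice u h = 0 ∨ ∃ i e, (e = 1 ∨ e = -1) ∧ slice u h = Pi.single i e := by
    refine eq_zero_or_eq_single_of_fourier_mul_eq_one hψ hφ (y := slice v h⁻¹) ?_ ?_ fun j => ?_
    · rintro _ ⟨k, rfl⟩ i
      exact slice_mul_of_mem_center hu central k i
    · rintro _ ⟨k, rfl⟩ i
      exact slice_mul_of_mem_center hv (inv_mem central) k i
    · obtain ⟨k, b, hub, hbv⟩ := exists_fiberFourier_eq_single ψ hu huv j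
      rw [fourier_slice_of_fiberFourier_eq_single ψ hub]
      split_ifs with hkh
      · exact .inr (hkh ▸ hbv)
      · exact .inl rfl
  refine ⟨h, hslice.resolve_left fun hzero => ha ?_⟩
  have := fourier_slice_of_fiberFourier_eq_single ψ hua h
  simpa [hzero, fourier] using this.symm

theorem isCutGroup_of_sup_range_eq_top (hφ : zpowers (-1) ⊔ φ.range = ⊤) :
    IsCutGroup (UnitsSemidirect φ) := by
  classical
  refine isCutGroup_iff_eq_single.2 fun u hu => ?_
  have : IsCyclotomicExtension {m} ℚ (CyclotomicField m ℚ) :=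
    CyclotomicField.isCyclotomicExtension m ℚ
  obtain ⟨ψ, hψ⟩ := exists_primitive_addChar m (CyclotomicField m ℚ)
  obtain ⟨h, i, e, he, hslice⟩ :=
    exists_slice_eq_single hψ hφ hu (Set.units_inv_mem_center hu) u.mul_inv
  refine ⟨⟨ofAdd i, h⟩, e, he, eq_of_fiberFourier_eq hψ fun j => ?_⟩
  obtain ⟨k, a, hua, -⟩ := exists_fiberFourier_eq_single ψ hu u.mul_inv j
  have fourier_eq := fourier_slice_of_fiberFourier_eq_single ψ hua h
  have fourier_ne_zero : (e * ψ (j * i) : CyclotomicField m ℚ) ≠ 0 := by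
    have he : e ≠ 0 := by rcases he with rfl | rfl <;> simp
    exact mul_ne_zero (mod_cast he) (ψ.val_isUnit _).ne_zero
  rw [hslice, fourier_single] at fourier_eq
  split_ifs at fourier_eq with hkh
  · rw [hua, fiberFourier_single, hkh, ← fourier_eq, toAdd_ofAdd]
  · exact absurd fourier_eq fourier_ne_zero

end Sufficiency

section UnitsOfNumberFields

lemma rank_pos_of_isTotallyReal {K : Type*} [Field K] [NumberField K] [IsTotallyReal K]
    (hK : 1 < Module.finrank ℚ K) : 0 < Units.rank K := by
  rw [Units.rank, InfinitePlace.card_eq_nrRealPlaces_add_nrComplexPlaces, ← IsTotallyReal.finrank K]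
  lia

lemma exists_unit_not_isOfFinOrder {K : Type*} [Field K] [NumberField K] (hK : 0 < Units.rank K) :
    ∃ w : (𝓞 K)ˣ, ¬ IsOfFinOrder w := by
  by_contra! htors
  rw [← Units.finrank_eq] at hK
  refine hK.ne' (Module.finrank_eq_zero_of_rank_eq_zero (rank_eq_zero_iff.2 fun w => ?_))
  obtain ⟨n, hn, hw⟩ := isOfFinOrder_iff_pow_eq_one.1 (htors w.toMul)
  exact ⟨n, mod_cast hn.ne', by rw [natCast_zsmul]; exact hw⟩

lemma exists_pow_sub_one_mem {R : Type*} [CommRing R] (I : Ideal R) [Finite (R ⧸ I)] (w : Rˣ) :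
    ∃ n, 0 < n ∧ ((w ^ n : Rˣ) - 1 : R) ∈ I := by
  obtain ⟨n, hn, hw⟩ := isOfFinOrder_iff_pow_eq_one.1
    (isOfFinOrder_of_finite (Units.map (Ideal.Quotient.mk I : R →* R ⧸ I) w))
  refine ⟨n, hn, Ideal.Quotient.eq.1 ?_⟩
  simpa using congrArg Units.val hw

lemma exists_unit_not_isOfFinOrder_and_dvd {K : Type*} [Field K] [NumberField K]
    (hK : 0 < Units.rank K) {a : 𝓞 K} (ha : a ≠ 0) :
    ∃ w : (𝓞 K)ˣ, ¬ IsOfFinOrder w ∧ a ∣ w - 1 := by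
  have := Ideal.finiteQuotientOfFreeOfNeBot (Ideal.span {a}) (by simpa using ha)
  obtain ⟨w, hw⟩ := exists_unit_not_isOfFinOrder hK
  obtain ⟨n, hn, hwn⟩ := exists_pow_sub_one_mem (Ideal.span {a}) w
  exact ⟨w ^ n, fun h => hw (h.of_pow hn.ne'), Ideal.mem_span_singleton.1 hwn⟩

end UnitsOfNumberFields

section FixedFields

open IsCyclotomicExtension.Rat (galEquivZMod)

variable {m : ℕ} [NeZero m] {L : Type*} [Field L] [NumberField L] [IsCyclotomicExtension {m} ℚ L]

lemma conj_ringHom_apply (Φ : L →+* ℂ) (x : L) :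
    starRingEnd ℂ (Φ x) = Φ ((galEquivZMod m L).symm (-1) x) := by
  have hζ := IsCyclotomicExtension.zeta_spec m ℚ L
  set ζ := IsCyclotomicExtension.zeta m ℚ L
  set σ := (galEquivZMod m L).symm (-1)
  let f : L →ₐ[ℚ] ℂ := ((starRingEnd ℂ).comp Φ).toRatAlgHom
  let g : L →ₐ[ℚ] ℂ := (Φ.comp (σ : L →+* L)).toRatAlgHom
  suffices f = g from DFunLike.congr_fun this x
  refine (hζ.powerBasis ℚ).algHom_ext ?_
  rw [IsPrimitiveRoot.powerBasis_gen]
  have hnorm : ‖Φ ζ‖ = 1 :=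
    Complex.norm_eq_one_of_pow_eq_one (by rw [← map_pow, hζ.pow_eq_one, map_one]) (NeZero.ne m)
  have hσ : σ ζ = ζ⁻¹ := by
    have hψ := gal_addChar (AddChar.zmodChar m hζ.pow_eq_one) σ 1
    rw [MulEquiv.apply_symm_apply, Units.val_neg, Units.val_one, neg_mul, one_mul,
      AddChar.map_neg_eq_inv] at hψ
    simpa [← Nat.cast_one (R := ZMod m), AddChar.zmodChar_apply', -Nat.cast_one] using hψ
  change starRingEnd ℂ (Φ ζ) = Φ (σ ζ)
  rw [hσ, map_inv₀, Complex.inv_eq_conj hnorm]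

variable (L) in
/-- The subfield of the `m`-th cyclotomic field fixed by a subgroup of `(ZMod m)ˣ`, identified with
the Galois group. -/
noncomputable abbrev fixedFieldOfUnits (U : Subgroup (ZMod m)ˣ) : IntermediateField ℚ L :=
  IntermediateField.fixedField (U.comap (galEquivZMod m L).toMonoidHom)

variable {U : Subgroup (ZMod m)ˣ}

lemma gal_apply_of_mem_fixedFieldOfUnits {σ : Gal(L/ℚ)} (hσ : galEquivZMod m L σ ∈ U) {x : L}
    (hx : x ∈ fixedFieldOfUnits L U) : σ x = x :=
  (IntermediateField.mem_fixedField_iff _ x).1 hx σ hσ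

lemma isTotallyReal_fixedFieldOfUnits (hU : -1 ∈ U) : IsTotallyReal (fixedFieldOfUnits L U) where
  isReal v := by
    obtain ⟨V, rfl⟩ : ∃ V : InfinitePlace L, V.comap (algebraMap _ L) = v :=
      InfinitePlace.comap_surjective v
    rw [← InfinitePlace.mk_embedding V, InfinitePlace.comap_mk, InfinitePlace.isReal_mk_iff,
      ComplexEmbedding.isReal_iff]
    ext x
    rw [ComplexEmbedding.conjugate_coe_eq, RingHom.comp_apply, conj_ringHom_apply (m := m)]
    exact congrArg _ <| gal_apply_of_mem_fixedFieldOfUnits (by rwa [MulEquiv.apply_symm_apply]) x.2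

lemma one_lt_finrank_fixedFieldOfUnits (hU : U ≠ ⊤) :
    1 < Module.finrank ℚ (fixedFieldOfUnits L U) := by
  have := IsCyclotomicExtension.isGalois {m} ℚ L
  have finrank_ne_one : Module.finrank ℚ (fixedFieldOfUnits L U) ≠ 1 := by
    rw [Ne, IntermediateField.finrank_eq_one_iff]
    intro hbot
    have hcomap : U.comap (galEquivZMod m L).toMonoidHom = ⊤ := by
      rw [← IntermediateField.fixingSubgroup_fixedField (U.comap _)]
      exact (congrArg _ hbot).trans IntermediateField.fixingSubgroup_bot
    refine hU (comap_injective (galEquivZMod m L).surjective ?_)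
    exact hcomap.trans (comap_top _).symm
  exact lt_of_le_of_ne Module.finrank_pos finrank_ne_one.symm

variable (L) in
theorem exists_unit_not_isOfFinOrder_and_gal_apply_eq (hneg : -1 ∈ U) (hU : U ≠ ⊤) :
    ∃ w : (𝓞 L)ˣ, ¬ IsOfFinOrder w ∧ (m : 𝓞 L) ∣ w - 1 ∧
      ∀ σ, galEquivZMod m L σ ∈ U → σ (w : L) = w := by
  let K := fixedFieldOfUnits L U
  have := isTotallyReal_fixedFieldOfUnits (L := L) hneg
  have rank_pos : 0 < Units.rank K :=
    rank_pos_of_isTotallyReal (one_lt_finrank_fixedFieldOfUnits hU)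
  obtain ⟨w, hw, hdvd⟩ := exists_unit_not_isOfFinOrder_and_dvd rank_pos (NeZero.ne (m : 𝓞 K))
  have hinj := Units.map_injective (f := (algebraMap (𝓞 K) (𝓞 L)).toMonoidHom)
    (RingOfIntegers.algebraMap.injective K L)
  refine ⟨Units.map (algebraMap (𝓞 K) (𝓞 L)).toMonoidHom w, ?_, ?_, fun σ hσ => ?_⟩
  · rwa [hinj.isOfFinOrder_iff]
  · simpa using map_dvd (algebraMap (𝓞 K) (𝓞 L)) hdvd
  · exact gal_apply_of_mem_fixedFieldOfUnits hσ (algebraMap (𝓞 K) K w).2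

end FixedFields

section TraceCoefficients

open IsCyclotomicExtension.Rat (galEquivZMod)

variable {m : ℕ} [NeZero m] {L : Type*} [Field L] [NumberField L] [IsCyclotomicExtension {m} ℚ L]
  {ψ : AddChar (ZMod m) L} {α : L} {c : ZMod m → ℤ}

variable (ψ) in
lemma exists_intCast_eq_sum_gal (hα : IsIntegral ℤ α) :
    ∃ c : ZMod m → ℤ, ∀ i, (c i : L) = ∑ σ : Gal(L/ℚ), σ (α * ψ (-i)) := by
  have := IsCyclotomicExtension.isGalois {m} ℚ L
  suffices h : ∀ i, ∃ n : ℤ, (n : L) = ∑ σ : Gal(L/ℚ), σ (α * ψ (-i)) by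
    choose c hc using h
    exact ⟨c, hc⟩
  intro i
  refine exists_intCast_eq_of_isIntegral_of_fixed ?_ fun τ => ?_
  · exact IsIntegral.sum _ fun σ _ =>
      (hα.mul (isIntegral_addChar ψ _)).map (σ.toAlgHom.restrictScalars ℤ)
  · rw [map_sum]
    exact Equiv.sum_comp (Equiv.mulLeft τ) fun σ : Gal(L/ℚ) => σ (α * ψ (-i))

lemma gal_mul_eq_of_eq_sum_gal (hc : ∀ i, (c i : L) = ∑ σ : Gal(L/ℚ), σ (α * ψ (-i)))
    {σ : Gal(L/ℚ)} (hσ : σ α = α) (i : ZMod m) : c (galEquivZMod m L σ * i) = c i := by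
  suffices (c (galEquivZMod m L σ * i) : L) = c i from mod_cast this
  rw [hc, hc, ← Equiv.sum_comp (Equiv.mulRight σ) fun τ : Gal(L/ℚ) => τ (α * ψ (-i))]
  simp [hσ, gal_addChar]

lemma fourier_of_eq_sum_gal (hψ : ψ.IsPrimitive)
    (hc : ∀ i, (c i : L) = ∑ σ : Gal(L/ℚ), σ (α * ψ (-i))) (j : ZMod m) :
    fourier ψ c j = m * ∑ σ : Gal(L/ℚ) with (galEquivZMod m L σ : ZMod m) = j, σ α := by
  calc fourier ψ c j
    _ = ∑ σ : Gal(L/ℚ), σ α * ∑ i, ψ (i * (j - galEquivZMod m L σ)) := by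
      simp only [fourier, hc, Finset.sum_mul, Finset.mul_sum]
      rw [Finset.sum_comm]
      refine Finset.sum_congr rfl fun σ _ => Finset.sum_congr rfl fun i _ => ?_
      rw [map_mul, gal_addChar, mul_assoc, ← AddChar.map_add_eq_mul]
      ring_nf
    _ = m * ∑ σ : Gal(L/ℚ) with (galEquivZMod m L σ : ZMod m) = j, σ α := by
      simp [AddChar.sum_mulShift _ hψ, sub_eq_zero, Finset.sum_filter, Finset.mul_sum, mul_comm,
        eq_comm (a := j)]

theorem exists_fourier_gal_eq (hψ : ψ.IsPrimitive) (hα : IsIntegral ℤ α) :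
    ∃ c : ZMod m → ℤ, (∀ σ, σ α = α → ∀ i, c (galEquivZMod m L σ * i) = c i) ∧
      (∀ σ, fourier ψ c (galEquivZMod m L σ) = m * σ α) ∧
      ∀ j, ¬ IsUnit j → fourier ψ c j = 0 := by
  obtain ⟨c, hc⟩ := exists_intCast_eq_sum_gal ψ hα
  refine ⟨c, fun σ => gal_mul_eq_of_eq_sum_gal hc, fun σ => ?_, fun j hj => ?_⟩
  · have filter_eq : Finset.univ.filter (fun τ : Gal(L/ℚ) =>
        (galEquivZMod m L τ : ZMod m) = galEquivZMod m L σ) = {σ} := by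
      ext τ
      rw [Finset.mem_filter_univ, Units.val_inj, EmbeddingLike.apply_eq_iff_eq,
        Finset.mem_singleton]
    rw [fourier_of_eq_sum_gal hψ hc, filter_eq, Finset.sum_singleton]
  · rw [fourier_of_eq_sum_gal hψ hc, Finset.filter_false_of_mem fun σ _ => ?_,
      Finset.sum_empty, mul_zero]
    rintro rfl
    exact hj (Units.isUnit _)

end TraceCoefficients

section Necessity

open IsCyclotomicExtension.Rat (galEquivZMod)

lemma pow_eq_one_of_fiberFourier_eq_single {R K H : Type*} [CommRing R] [Fintype R] [CommRing K]
    [Group H] {φ : H →* Rˣ} {ψ : AddChar R K} {g : UnitsSemidirect φ} {e : ℤ} (he : e = 1 ∨ e = -1)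
    {j : R} {a : K} (hg : fiberFourier ψ j (single g e) = single 1 a) (ha : a ≠ 0) :
    a ^ (2 * Fintype.card R) = 1 := by
  rw [fiberFourier_single, ← coeff_inj, coeff_single, coeff_single,
    Finsupp.single_eq_single_iff] at hg
  obtain ⟨-, rfl⟩ := hg.resolve_right fun h => ha h.2
  have he : (e : K) ^ 2 = 1 := mod_cast congrArg (Int.cast (R := K)) (sq_eq_one_iff.2 he)
  rw [mul_pow, pow_mul, he, one_pow, one_mul, ← AddChar.map_nsmul_eq_pow, mul_smul,
    card_nsmul_eq_zero, smul_zero, AddChar.map_zero_eq_one]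

variable {m : ℕ} [NeZero m] {L : Type*} [Field L] [NumberField L] [IsCyclotomicExtension {m} ℚ L]
  {H : Type*} [Group H] {φ : H →* (ZMod m)ˣ} {ψ : AddChar (ZMod m) L}

lemma exists_mem_center_fiberFourier_gal_eq (hψ : ψ.IsPrimitive) {a : 𝓞 L}
    (ha : (m : 𝓞 L) ∣ a - 1) (hfix : ∀ σ, galEquivZMod m L σ ∈ φ.range → σ (a : L) = a) :
    ∃ x ∈ Subring.center (MonoidAlgebra ℤ (UnitsSemidirect φ)),
      (∀ σ : Gal(L/ℚ), fiberFourier ψ (galEquivZMod m L σ) x = single 1 (σ a)) ∧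
      ∀ j, ¬ IsUnit j → fiberFourier ψ j x = 1 := by
  obtain ⟨b, hb⟩ := ha
  have a_eq : (a : L) = 1 + m * b := by
    rw [sub_eq_iff_eq_add'.1 hb]
    simp
  obtain ⟨c, c_invariant, fourier_gal, fourier_eq_zero⟩ :=
    exists_fourier_gal_eq hψ b.isIntegral_coe
  refine ⟨1 + ofCoeffs φ c, add_mem (one_mem _) (ofCoeffs_mem_center fun h i => ?_),
    fun σ => ?_, fun j hj => ?_⟩
  · obtain ⟨σ, hσ⟩ := (galEquivZMod m L).surjective (φ h)
    rw [← hσ]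
    refine c_invariant σ (mul_left_cancel₀ (NeZero.ne (m : L)) ?_) i
    have := hfix σ ⟨h, hσ.symm⟩
    simpa [a_eq] using this
  · rw [map_add, fiberFourier_one, fiberFourier_ofCoeffs, fourier_gal, one_def, ← single_add, a_eq]
    simp
  · rw [map_add, fiberFourier_one, fiberFourier_ofCoeffs, fourier_eq_zero j hj]
    simp

lemma exists_central_unit_fiberFourier_eq (hψ : ψ.IsPrimitive) {w : (𝓞 L)ˣ}
    (hw : (m : 𝓞 L) ∣ w - 1) (hfix : ∀ σ, galEquivZMod m L σ ∈ φ.range → σ (w : L) = w) :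
    ∃ u : (MonoidAlgebra ℤ (UnitsSemidirect φ))ˣ,
      u.val ∈ Subring.center (MonoidAlgebra ℤ (UnitsSemidirect φ)) ∧
      fiberFourier ψ 1 u.val = single 1 (w : L) := by
  have hw_inv : (m : 𝓞 L) ∣ (w⁻¹ : (𝓞 L)ˣ) - 1 := by
    have : ((w⁻¹ : (𝓞 L)ˣ) - 1 : 𝓞 L) = -(w⁻¹ : (𝓞 L)ˣ) * (w - 1) := by
      rw [mul_sub, neg_mul, neg_mul, w.inv_mul]
      ring
    exact this ▸ hw.mul_left _
  obtain ⟨x, hx, x_gal, x_nonunit⟩ := exists_mem_center_fiberFourier_gal_eq (φ := φ) hψ hw hfix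
  obtain ⟨y, -, y_gal, y_nonunit⟩ := exists_mem_center_fiberFourier_gal_eq (φ := φ) hψ hw_inv
    fun σ hσ => by simp [hfix σ hσ]
  have mul_eq_one : x * y = 1 := by
    refine eq_of_fiberFourier_eq hψ fun j => ?_
    rw [fiberFourier_mul_of_mem_center ψ hx, fiberFourier_one]
    by_cases hj : IsUnit j
    · obtain ⟨t, rfl⟩ := hj
      obtain ⟨σ, rfl⟩ := (galEquivZMod m L).surjective t
      rw [x_gal, y_gal, single_mul_single, ← map_mul, ← map_mul, w.mul_inv]
      simp [one_def]
    · rw [x_nonunit j hj, y_nonunit j hj, one_mul]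
  refine ⟨⟨x, y, mul_eq_one, (Subring.mem_center_iff.1 hx y).trans mul_eq_one⟩, hx, ?_⟩
  simpa using x_gal 1

variable (φ) in
theorem sup_range_eq_top_of_isCutGroup (hcut : IsCutGroup (UnitsSemidirect φ)) :
    zpowers (-1) ⊔ φ.range = ⊤ := by
  by_contra hU
  have : IsCyclotomicExtension {m} ℚ (CyclotomicField m ℚ) :=
    CyclotomicField.isCyclotomicExtension m ℚ
  obtain ⟨ψ, hψ⟩ := exists_primitive_addChar m (CyclotomicField m ℚ)
  obtain ⟨w, w_order, hw, hfix⟩ := exists_unit_not_isOfFinOrder_and_gal_apply_eq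
    (CyclotomicField m ℚ) (mem_sup_left (mem_zpowers (-1))) hU
  obtain ⟨u, hu, hw_u⟩ := exists_central_unit_fiberFourier_eq hψ hw
    fun σ hσ => hfix σ (mem_sup_right hσ)
  obtain ⟨g, e, he, hg⟩ := isCutGroup_iff_eq_single.1 hcut u hu
  have w_pow := pow_eq_one_of_fiberFourier_eq_single he (hg ▸ hw_u) (by simp)
  refine w_order (isOfFinOrder_iff_pow_eq_one.2 ⟨2 * Fintype.card (ZMod m), by positivity, ?_⟩)
  ext
  simpa using w_pow

end Necessity

section Presentation

open Multiplicative (ofAdd)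

lemma hom_ext_multiplicative_zmod {m : ℕ} {G : Type*} [Group G]
    {f g : Multiplicative (ZMod m) →* G} (h : f (ofAdd 1) = g (ofAdd 1)) : f = g := by
  have ofAdd_eq_zpow : ∀ x : ZMod m, ofAdd x = ofAdd (1 : ZMod m) ^ (x.cast : ℤ) := by
    intro x
    rw [← ofAdd_zsmul, zsmul_one, ZMod.intCast_zmod_cast]
  refine MonoidHom.ext fun x => ?_
  rw [← ofAdd_toAdd x, ofAdd_eq_zpow, map_zpow, map_zpow, h]

lemma exists_hom_multiplicative_zmod {m : ℕ} {G : Type*} [Group G] {a : G} (ha : a ^ m = 1) :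
    ∃ f : Multiplicative (ZMod m) →* G, ∀ n : ℕ, f (ofAdd (n : ZMod m)) = a ^ n := by
  let f := ZMod.lift m ⟨zmultiplesHom (Additive G) (.ofMul a), by simp [← ofMul_pow, ha]⟩
  refine ⟨AddMonoidHom.toMultiplicativeLeft f, fun n => ?_⟩
  have hf : f ((n : ℤ) : ZMod m) = Additive.ofMul (a ^ n) := by
    rw [ZMod.lift_coe]
    simp
  simpa using congrArg Additive.toMul hf

lemma conj_compat_of_closure_eq_top {N G H : Type*} [Group N] [Group G] [Group H]
    {φ : H →* MulAut N} {f : N →* G} {g : H →* G} {s : Set H} (hs : closure s = ⊤)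
    (hfg : ∀ h ∈ s, ∀ n, f (φ h n) = g h * f n * (g h)⁻¹) (h : H) :
    f.comp (φ h).toMonoidHom = (MulAut.conj (g h)).toMonoidHom.comp f := by
  suffices ∀ n, f (φ h n) = g h * f n * (g h)⁻¹ from MonoidHom.ext this
  induction (hs ▸ mem_top h : h ∈ closure s) using closure_induction with
  | mem h hh => exact hfg h hh
  | one => simp
  | mul h k _ _ hh hk => simp [hh, hk, mul_assoc]
  | inv h _ hh =>
    intro n
    have := hh ((φ h)⁻¹ n)
    rw [MulAut.apply_inv_self] at this
    simp [this, mul_assoc]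

lemma closure_multiplicative_int : Subgroup.closure {ofAdd (1 : ℤ)} = ⊤ := by
  rw [← zpowers_eq_closure, eq_top_iff']
  exact fun n => ⟨n.toAdd, by simp [← ofAdd_zsmul]⟩

variable {m : ℕ} [NeZero m] (r : (ZMod m)ˣ)

/-- The homomorphism `⟨a, b | aᵐ = 1, b a b⁻¹ = aʳ⟩ → ℤ/mℤ ⋊ ℤ` with `a ↦ (1, 0)` and
`b ↦ (0, 1)`. -/
def presentedToSemidirect : PresentedGroup (metacyclicRelsCmSemidirectZ m r) →*
    UnitsSemidirect (zpowersHom (ZMod m)ˣ r) :=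
  PresentedGroup.toGroup
    (f := fun | true => SemidirectProduct.inl (ofAdd 1) | false => SemidirectProduct.inr (ofAdd 1))
    <| by
    rintro _ (rfl | rfl)
    · simp only [map_pow, FreeGroup.lift_apply_of]
      simp [← map_pow, ← ofAdd_nsmul]
    · simp only [map_mul, map_inv, map_pow, FreeGroup.lift_apply_of]
      rw [← map_inv, ← SemidirectProduct.inl_aut, mul_inv_eq_one, ← map_pow, ← ofAdd_nsmul]
      congr 1
      apply Multiplicative.toAdd.injective
      simp

lemma exists_semidirectToPresented :
    ∃ f : UnitsSemidirect (zpowersHom (ZMod m)ˣ r) →*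
        PresentedGroup (metacyclicRelsCmSemidirectZ m r),
      f (SemidirectProduct.inl (ofAdd 1)) = PresentedGroup.of true ∧
      f (SemidirectProduct.inr (ofAdd 1)) = PresentedGroup.of false := by
  set a : PresentedGroup (metacyclicRelsCmSemidirectZ m r) := PresentedGroup.of true
  set b : PresentedGroup (metacyclicRelsCmSemidirectZ m r) := PresentedGroup.of false
  have pow_a : a ^ m = 1 := PresentedGroup.one_of_mem (Set.mem_insert _ _)
  have conj_a : b * a * b⁻¹ = a ^ (r : ZMod m).val :=
    PresentedGroup.mk_eq_mk_of_mul_inv_mem (Set.mem_insert_of_mem _ rfl)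
  obtain ⟨f, hf⟩ := exists_hom_multiplicative_zmod pow_a
  have f_one : f (ofAdd 1) = a := by simpa using hf 1
  have compat : f.comp (unitsMulAut (ZMod m) r).toMonoidHom =
      (MulAut.conj b).toMonoidHom.comp f := by
    apply hom_ext_multiplicative_zmod
    have hr : unitsMulAut (ZMod m) r (ofAdd 1) = ofAdd ((r : ZMod m).val : ZMod m) :=
      Multiplicative.toAdd.injective (by simp)
    change f (unitsMulAut (ZMod m) r (ofAdd 1)) = b * f (ofAdd 1) * b⁻¹
    rw [hr, hf, f_one, conj_a]
  refine ⟨SemidirectProduct.lift f (zpowersHom _ b)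
    (conj_compat_of_closure_eq_top closure_multiplicative_int ?_), ?_, ?_⟩
  · rintro _ rfl n
    simpa using DFunLike.congr_fun compat n
  · rw [SemidirectProduct.lift_inl, f_one]
  · simp

lemma nonempty_presentedGroup_mulEquiv :
    Nonempty (PresentedGroup (metacyclicRelsCmSemidirectZ m r) ≃*
      UnitsSemidirect (zpowersHom (ZMod m)ˣ r)) := by
  obtain ⟨f, f_inl, f_inr⟩ := exists_semidirectToPresented r
  refine ⟨MonoidHom.toMulEquiv (presentedToSemidirect r) f ?_ ?_⟩
  · ext (_ | _) <;> simp [presentedToSemidirect, f_inl, f_inr]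
  · apply SemidirectProduct.hom_ext
    · apply hom_ext_multiplicative_zmod
      simp [f_inl, presentedToSemidirect]
    · apply MonoidHom.ext_mint
      simp [f_inr, presentedToSemidirect]

end Presentation

end CutGroup

theorem isCutGroup_cm_semidirect_z_iff_general {m : ℕ} [NeZero m] {H : Type*} [Group H]
    [TwoUniqueProds H] (φ : H →* (ZMod m)ˣ) :
    IsCutGroup (CutGroup.UnitsSemidirect φ) ↔ Subgroup.zpowers (-1) ⊔ φ.range = ⊤ :=
  ⟨CutGroup.sup_range_eq_top_of_isCutGroup φ, CutGroup.isCutGroup_of_sup_range_eq_top⟩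

/-- For an integer `m ≥ 3` and a unit `r ≠ 1` of `ℤ/mℤ`, the group
`G = (ℤ/mℤ) ⋊ ℤ = ⟨a, b | aᵐ = 1, b a b⁻¹ = aʳ⟩` is a cut-group if and only if the unit
group `(ℤ/mℤ)ˣ` is generated by `{-1, r}`. -/
theorem isCutGroup_cm_semidirect_z_iff (m : ℕ) (hm : 3 ≤ m) (r : (ZMod m)ˣ) (hr : r ≠ 1) :
    IsCutGroup (PresentedGroup (metacyclicRelsCmSemidirectZ m r)) ↔
      Subgroup.closure ({-1, r} : Set (ZMod m)ˣ) = ⊤ := by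
  have : NeZero m := ⟨by lia⟩
  obtain ⟨e⟩ := CutGroup.nonempty_presentedGroup_mulEquiv r
  rw [CutGroup.isCutGroup_congr e, isCutGroup_cm_semidirect_z_iff_general,
    Subgroup.range_zpowersHom, Subgroup.zpowers_eq_closure, Subgroup.zpowers_eq_closure,
    ← Subgroup.closure_union, Set.singleton_union]
end

section
/- Let G be a finite p-group and A a nontrivial normal subgroup of G. Then A is an RS-subgroup of G if and only if one of the following holds: (i) p = 2 and for every a ∈ A, a³ is conjugate in G to a or to a⁻¹; (ii) p = 3 and for every a ∈ A, a² is conjugate in G to a⁻¹. -/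
/-!
The integers `c` with `x ^ c` conjugate to `x` or `x⁻¹` form a multiplicative monoid containing
`-1`. Modulo `p ^ n`, the powers of `1 + p ^ m * a` with `p ∤ a` exhaust the residues congruent to
`1` modulo `p ^ m` (for `m ≥ 1`, or `m ≥ 2` if `p = 2`). So if `x` has order `2 ^ n` and the monoid
contains `3`, hence `9`, it contains the full classes of `±1` and `±3` modulo `8`; if `x` has order
`3 ^ n` and the monoid contains `2`, hence `4`, it contains those of `1` and `2` modulo `3`.

Conversely, in a `p`-group `x ≠ 1` can only be conjugate to `x ^ c` when `c ≡ 1 [ZMOD p]`: a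
conjugating element of order `p ^ m` gives `c ^ p ^ m ≡ 1`, and `c ^ p ^ m ≡ c` by Fermat. Hence
`x ^ 2` is never conjugate to `x`, and is conjugate to `x⁻¹` only if `p = 3`.
-/

section PrincipalUnits

open Subgroup

variable {p : ℕ} [Fact p.Prime] {m : ℕ} {a : ℤ}

theorem card_ker_unitsMap_prime_pow (hm : m ≠ 0) (n : ℕ) :
    Nat.card (ZMod.unitsMap (pow_dvd_pow p (Nat.le_add_left m n))).ker = p ^ n := by
  have hp : p.Prime := Fact.out
  have hcard : p ^ n * Nat.totient (p ^ m) = Nat.totient (p ^ (n + m)) := by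
    rw [Nat.totient_prime_pow hp (by lia), Nat.totient_prime_pow hp (by lia), ← mul_assoc,
      ← pow_add, Nat.add_sub_assoc (by lia)]
  have hindex := card_mul_index (ZMod.unitsMap (pow_dvd_pow p (Nat.le_add_left m n))).ker
  rw [index_ker, MonoidHom.range_eq_top.2 (ZMod.unitsMap_surjective _), card_top,
    Nat.card_eq_fintype_card (α := (ZMod (p ^ m))ˣ), ZMod.card_units_eq_totient,
    Nat.card_eq_fintype_card (α := (ZMod (p ^ (n + m)))ˣ), ZMod.card_units_eq_totient,
    ← hcard] at hindex
  exact Nat.eq_of_mul_eq_mul_right (Nat.totient_pos.2 (pow_pos hp.pos m)) hindex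

theorem zpowers_eq_ker_unitsMap (hpm : m + 2 ≤ p * m) (ha : ¬(p : ℤ) ∣ a) {n : ℕ}
    {u : (ZMod (p ^ (n + m)))ˣ} (hu : (u : ZMod (p ^ (n + m))) = (1 + p ^ m * a : ℤ)) :
    zpowers u = (ZMod.unitsMap (pow_dvd_pow p (Nat.le_add_left m n))).ker := by
  have hm : m ≠ 0 := by rintro rfl; lia
  apply eq_of_le_of_card_ge
  · have hpm_zero : (p : ZMod (p ^ m)) ^ m = 0 := mod_cast ZMod.natCast_self (p ^ m)
    rw [zpowers_le, MonoidHom.mem_ker, Units.ext_iff, ZMod.unitsMap_val, hu,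
      ZMod.cast_intCast (pow_dvd_pow p (Nat.le_add_left m n))]
    simp [hpm_zero]
  · rw [card_ker_unitsMap_prime_pow hm, Nat.card_zpowers, ← orderOf_units, hu]
    push_cast
    rw [ZMod.orderOf_one_add_mul_prime_pow Fact.out m hm hpm a ha]

theorem exists_mul_one_add_pow_modEq (hpm : m + 2 ≤ p * m) (ha : ¬(p : ℤ) ∣ a) {i j : ℤ}
    (hi : ¬(p : ℤ) ∣ i) (hij : i ≡ j [ZMOD p ^ m]) (n : ℕ) :
    ∃ k : ℕ, i * (1 + p ^ m * a) ^ k ≡ j [ZMOD p ^ n] := by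
  have hp : Prime (p : ℤ) := Nat.prime_iff_prime_int.1 Fact.out
  have hdvd : (p : ℤ) ∣ p ^ m := dvd_pow_self _ (by rintro rfl; lia)
  have hunit {z : ℤ} (hz : ¬(p : ℤ) ∣ z) : IsUnit (z : ZMod (p ^ (n + m))) := by
    rw [ZMod.coe_int_isUnit_iff_isCoprime, Nat.cast_pow]
    exact (hp.coprime_iff_not_dvd.2 hz).pow_left
  have hj : ¬(p : ℤ) ∣ j := fun h ↦ hi ((hij.of_dvd hdvd).dvd_iff.2 h)
  have hc : ¬(p : ℤ) ∣ 1 + p ^ m * a := fun h ↦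
    hp.not_dvd_one ((dvd_add_left (hdvd.mul_right a)).1 h)
  obtain ⟨u, hu⟩ := hunit hi
  obtain ⟨v, hv⟩ := hunit hj
  obtain ⟨w, hw⟩ := hunit hc
  have hker : u⁻¹ * v ∈ (ZMod.unitsMap (pow_dvd_pow p (Nat.le_add_left m n))).ker := by
    rw [MonoidHom.mem_ker, map_mul, map_inv, inv_mul_eq_one, Units.ext_iff, ZMod.unitsMap_val,
      ZMod.unitsMap_val, hu, hv, ZMod.cast_intCast (pow_dvd_pow p (Nat.le_add_left m n)),
      ZMod.cast_intCast (pow_dvd_pow p (Nat.le_add_left m n)), ZMod.intCast_eq_intCast_iff]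
    exact mod_cast hij
  rw [← zpowers_eq_ker_unitsMap hpm ha hw, ← mem_powers_iff_mem_zpowers] at hker
  obtain ⟨k, hk : w ^ k = u⁻¹ * v⟩ := hker
  have hmod : i * (1 + p ^ m * a) ^ k ≡ j [ZMOD (p ^ (n + m) : ℕ)] := by
    rw [← ZMod.intCast_eq_intCast_iff, Int.cast_mul, Int.cast_pow, ← hu, ← hv, ← hw,
      ← Units.val_pow_eq_pow_val, ← Units.val_mul, hk, mul_inv_cancel_left]
  exact ⟨k, hmod.of_dvd (mod_cast pow_dvd_pow p (Nat.le_add_right n m))⟩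

end PrincipalUnits

section Exponents

variable {G : Type*} [Group G] {x y : G} {p n : ℕ}

theorem isConj_zpow (h : IsConj x y) (c : ℤ) : IsConj (x ^ c) (y ^ c) := by
  obtain ⟨g, rfl⟩ := isConj_iff.1 h
  exact isConj_iff.2 ⟨g, conj_zpow.symm⟩

theorem isConj_inv (h : IsConj x y) : IsConj x⁻¹ y⁻¹ := by
  simpa only [zpow_neg_one] using isConj_zpow h (-1)

/-- The multiplicative monoid of the integers `c` for which `x ^ c` is conjugate to `x` or to `x⁻¹`.
It lives in `ℤ` rather than in `ZMod (orderOf x)`, so that exponents can be compared modulo any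
number. -/
def conjOrInvExponents (x : G) : Submonoid ℤ where
  carrier := {c | IsConj (x ^ c) x ∨ IsConj (x ^ c) x⁻¹}
  one_mem' := .inl (by rw [zpow_one])
  mul_mem' := by
    rintro b c (hb | hb) hc
    · rw [Set.mem_ofPred_eq, zpow_mul]
      exact hc.imp (isConj_zpow hb c).trans (isConj_zpow hb c).trans
    · have hbc : IsConj (x ^ (b * c)) (x ^ c)⁻¹ := by
        simpa only [zpow_mul, inv_zpow] using isConj_zpow hb c
      rcases hc with hc | hc
      · exact .inr (hbc.trans (isConj_inv hc))
      · exact .inl (hbc.trans (by simpa only [inv_inv] using isConj_inv hc))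

theorem mem_conjOrInvExponents {c : ℤ} :
    c ∈ conjOrInvExponents x ↔ IsConj (x ^ c) x ∨ IsConj (x ^ c) x⁻¹ :=
  Iff.rfl

theorem neg_mem_conjOrInvExponents {c : ℤ} (hc : c ∈ conjOrInvExponents x) :
    -c ∈ conjOrInvExponents x := by
  have hneg_one : -1 ∈ conjOrInvExponents x := .inr (by rw [zpow_neg_one])
  simpa only [neg_one_mul] using mul_mem hneg_one hc

theorem mem_conjOrInvExponents_congr {c d : ℤ} (h : c ≡ d [ZMOD orderOf x]) :
    c ∈ conjOrInvExponents x ↔ d ∈ conjOrInvExponents x := by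
  rw [mem_conjOrInvExponents, mem_conjOrInvExponents, zpow_eq_zpow_iff_modEq.2 h]

theorem mem_conjOrInvExponents_of_modEq [Fact p.Prime] (hx : orderOf x = p ^ n) {m : ℕ}
    (hpm : m + 2 ≤ p * m) {a : ℤ} (ha : ¬(p : ℤ) ∣ a)
    (hc : 1 + p ^ m * a ∈ conjOrInvExponents x) {i j : ℤ} (hi : i ∈ conjOrInvExponents x)
    (hpi : ¬(p : ℤ) ∣ i) (hij : i ≡ j [ZMOD p ^ m]) : j ∈ conjOrInvExponents x := by
  obtain ⟨k, hk⟩ := exists_mul_one_add_pow_modEq hpm ha hpi hij n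
  rw [← Nat.cast_pow, ← hx] at hk
  exact (mem_conjOrInvExponents_congr hk).1 (mul_mem hi (pow_mem hc k))

theorem isRSElement_of_forall_mem_conjOrInvExponents [Fact p.Prime] (hx : orderOf x = p ^ n)
    (h : ∀ j : ℤ, ¬(p : ℤ) ∣ j → j ∈ conjOrInvExponents x) : IsRSElement x := by
  intro j _ hj
  obtain rfl | hn := eq_or_ne n 0
  · simp [orderOf_eq_one_iff.1 (hx.trans (pow_zero p))]
  · rw [hx, Nat.coprime_pow_right_iff (Nat.pos_of_ne_zero hn), Nat.coprime_comm,
      Nat.Prime.coprime_iff_not_dvd Fact.out] at hj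
    simpa only [mem_conjOrInvExponents, zpow_natCast] using h j (mod_cast hj)

theorem isRSElement_of_isConj_pow_three (hx : orderOf x = 2 ^ n)
    (h : IsConj (x ^ 3) x ∨ IsConj (x ^ 3) x⁻¹) : IsRSElement x := by
  have h_three : 3 ∈ conjOrInvExponents x := mem_conjOrInvExponents.2 (mod_cast h)
  have h_nine : 1 + ((2 : ℕ) : ℤ) ^ 3 * 1 ∈ conjOrInvExponents x := mul_mem h_three h_three
  refine isRSElement_of_forall_mem_conjOrInvExponents (p := 2) hx fun j hj ↦ ?_
  have hlift {i : ℤ} (hi : i ∈ conjOrInvExponents x) (hij : i ≡ j [ZMOD 8]) :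
      j ∈ conjOrInvExponents x :=
    mem_conjOrInvExponents_of_modEq hx (m := 3) (by norm_num) (by norm_num) h_nine hi
      (by unfold Int.ModEq at hij; lia) hij
  have hj8 : 1 ≡ j [ZMOD 8] ∨ 3 ≡ j [ZMOD 8] ∨ -3 ≡ j [ZMOD 8] ∨ -1 ≡ j [ZMOD 8] := by
    simp only [Int.ModEq]; lia
  rcases hj8 with h1 | h3 | h5 | h7
  · exact hlift (one_mem _) h1
  · exact hlift h_three h3
  · exact hlift (neg_mem_conjOrInvExponents h_three) h5
  · exact hlift (neg_mem_conjOrInvExponents (one_mem _)) h7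

theorem isRSElement_of_isConj_sq (hx : orderOf x = 3 ^ n)
    (h : IsConj (x ^ 2) x ∨ IsConj (x ^ 2) x⁻¹) : IsRSElement x := by
  have h_two : 2 ∈ conjOrInvExponents x := mem_conjOrInvExponents.2 (mod_cast h)
  have h_four : 1 + ((3 : ℕ) : ℤ) ^ 1 * 1 ∈ conjOrInvExponents x := mul_mem h_two h_two
  refine isRSElement_of_forall_mem_conjOrInvExponents (p := 3) hx fun j hj ↦ ?_
  have hlift {i : ℤ} (hi : i ∈ conjOrInvExponents x) (hij : i ≡ j [ZMOD 3]) :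
      j ∈ conjOrInvExponents x :=
    mem_conjOrInvExponents_of_modEq hx (m := 1) (by norm_num) (by norm_num) h_four hi
      (by unfold Int.ModEq at hij; lia) hij
  have hj3 : 1 ≡ j [ZMOD 3] ∨ 2 ≡ j [ZMOD 3] := by
    simp only [Int.ModEq]; lia
  exact hj3.elim (hlift (one_mem _)) (hlift h_two)

end Exponents

section PGroup

variable {p : ℕ} [Fact p.Prime] {G : Type*} [Group G] {x g : G}

theorem conj_pow_eq_zpow_pow {c : ℤ} (h : g * x * g⁻¹ = x ^ c) (n : ℕ) :
    g ^ n * x * (g ^ n)⁻¹ = x ^ c ^ n := by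
  induction n with
  | zero => simp
  | succ n ih =>
    calc g ^ (n + 1) * x * (g ^ (n + 1))⁻¹ = g * (g ^ n * x * (g ^ n)⁻¹) * g⁻¹ := by
          rw [pow_succ']; group
      _ = x ^ c ^ (n + 1) := by rw [ih, ← conj_zpow, h, ← zpow_mul, pow_succ']

theorem modEq_one_of_isConj_zpow (hG : IsPGroup p G) (hx : x ≠ 1) {c : ℤ} (h : IsConj x (x ^ c)) :
    c ≡ 1 [ZMOD p] := by
  obtain ⟨g, hg⟩ := isConj_iff.1 h
  obtain ⟨m, hm⟩ := hG g
  have hpow : x ^ c ^ p ^ m = x ^ (1 : ℤ) := by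
    simpa [hm] using (conj_pow_eq_zpow_pow hg (p ^ m)).symm
  have hmod : c ^ p ^ m ≡ 1 [ZMOD p] :=
    (zpow_eq_zpow_iff_modEq.1 hpow).of_dvd (mod_cast hG.dvd_orderOf hx)
  rw [← ZMod.intCast_eq_intCast_iff] at hmod ⊢
  simpa only [Int.cast_pow, ZMod.pow_card_pow] using hmod

theorem not_isConj_sq_self (hG : IsPGroup p G) (hx : x ≠ 1) : ¬IsConj (x ^ 2) x := by
  intro h
  have hmod : 2 ≡ 1 [ZMOD p] := modEq_one_of_isConj_zpow hG hx (mod_cast h.symm)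
  have hdvd : (p : ℤ) ∣ 1 := by simpa using hmod.symm.dvd
  exact (Fact.out : p.Prime).ne_one (Nat.dvd_one.1 (mod_cast hdvd))

theorem eq_three_of_isConj_sq_inv (hG : IsPGroup p G) (hx : x ≠ 1) (h : IsConj (x ^ 2) x⁻¹) :
    p = 3 := by
  have hconj : IsConj x (x ^ (-2 : ℤ)) := by
    simpa [zpow_neg] using (isConj_inv h).symm
  have hdvd : (p : ℤ) ∣ 3 := by simpa using (modEq_one_of_isConj_zpow hG hx hconj).dvd
  exact (Nat.prime_dvd_prime_iff_eq Fact.out Nat.prime_three).1 (mod_cast hdvd)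

theorem IsRSElement.isConj_sq_inv (hG : IsPGroup p G) (hp : p ≠ 2) (hx : IsRSElement x) :
    IsConj (x ^ 2) x⁻¹ := by
  obtain rfl | hx1 := eq_or_ne x 1
  · simp
  have hcop : p.Coprime 2 := (Nat.coprime_primes Fact.out Nat.prime_two).2 hp
  exact (hx 2 two_pos (hG.orderOf_coprime hcop x).symm).resolve_left (not_isConj_sq_self hG hx1)

end PGroup

theorem isRSSubgroup_iff_of_pGroup_general {p : ℕ} (hp : p.Prime) {G : Type*} [Group G]
    (hG : IsPGroup p G) (A : Subgroup G) (hA : A ≠ ⊥) :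
    IsRSSubgroup A ↔
      (p = 2 ∧ ∀ a ∈ A, IsConj (a ^ 3) a ∨ IsConj (a ^ 3) a⁻¹) ∨
      (p = 3 ∧ ∀ a ∈ A, IsConj (a ^ 2) a⁻¹) := by
  have : Fact p.Prime := ⟨hp⟩
  constructor
  · intro hRS
    have hRS' (a : G) (ha : a ∈ A) : IsRSElement a := hRS a ha (hG.isOfFinOrder hp.ne_zero a)
    obtain rfl | hp2 := eq_or_ne p 2
    · exact .inl ⟨rfl, fun a ha ↦
        hRS' a ha 3 three_pos (hG.orderOf_coprime (by norm_num) a).symm⟩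
    · have hsq (a : G) (ha : a ∈ A) : IsConj (a ^ 2) a⁻¹ := (hRS' a ha).isConj_sq_inv hG hp2
      obtain ⟨a, ha, ha1⟩ := A.bot_or_exists_ne_one.resolve_left hA
      exact .inr ⟨eq_three_of_isConj_sq_inv hG ha1 (hsq a ha), hsq⟩
  · rintro (⟨rfl, h⟩ | ⟨rfl, h⟩) a ha - <;> obtain ⟨n, hn⟩ := IsPGroup.iff_orderOf.1 hG a
    · exact isRSElement_of_isConj_pow_three hn (h a ha)
    · exact isRSElement_of_isConj_sq hn (.inr (h a ha))

/-- A nontrivial normal subgroup `A` of a finite `p`-group `G` is an RS-subgroup of `G` if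
and only if either `p = 2` and `a³ ∼ a^{±1}` for all `a ∈ A`, or `p = 3` and `a² ∼ a⁻¹`
for all `a ∈ A`. -/
theorem isRSSubgroup_iff_of_pGroup {p : ℕ} (hp : p.Prime) {G : Type*} [Group G] [Finite G]
    (hG : IsPGroup p G) (A : Subgroup G) [A.Normal] (hA : A ≠ ⊥) :
    IsRSSubgroup A ↔
      (p = 2 ∧ ∀ a ∈ A, IsConj (a ^ 3) a ∨ IsConj (a ^ 3) a⁻¹) ∨
      (p = 3 ∧ ∀ a ∈ A, IsConj (a ^ 2) a⁻¹) := by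
  exact isRSSubgroup_iff_of_pGroup_general hp hG A hA
end

section
/- Let G be a finite nilpotent group and A a normal subgroup of G which is an RS-subgroup of G. Then every prime dividing the order of A belongs to {2, 3}. -/
/-!
Let `x` be an RS-element of order coprime to `6`. Then `x ^ 2` is conjugate to `x ^ ε` with
`ε = ±1`. Conjugate elements of the `(n + 1)`-st term of the upper central series agree modulo the
`n`-th, so if `x` lies in the former then `x ^ (2 - ε)` lies in the latter, and hence so does `x`,
because `2 - ε ∈ {1, 3}` is coprime to its order. In a nilpotent group this descent forces `x = 1`.
An RS-subgroup of a nilpotent group therefore has no element of prime order `q ≥ 5`.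
-/

section

open scoped commutatorElement

variable {G : Type*} [Group G] {x : G}

theorem div_mem_upperCentralSeries_of_isConj {a b : G} {n : ℕ} (hab : IsConj a b)
    (ha : a ∈ Subgroup.upperCentralSeries G (n + 1)) :
    a / b ∈ Subgroup.upperCentralSeries G n := by
  obtain ⟨c, rfl⟩ := isConj_iff.1 hab
  have hcomm : ⁅a, c⁆ ∈ Subgroup.upperCentralSeries G n :=
    Subgroup.mem_upperCentralSeries_succ_iff.1 ha c
  have hdiv : a / (c * a * c⁻¹) = ⁅a, c⁆ := by
    simp [commutatorElement_def, div_eq_mul_inv, mul_assoc]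
  rwa [hdiv]

theorem mem_of_zpow_mem_of_isCoprime_orderOf {H : Subgroup G} {k : ℤ} (hxk : x ^ k ∈ H)
    (hk : IsCoprime k (orderOf x)) : x ∈ H :=
  Subgroup.zpowers_le.2 hxk (mem_zpowers_zpow_iff.2 (Int.isCoprime_iff_gcd_eq_one.1 hk))

theorem eq_one_of_isConj_zpow_zpow [Group.IsNilpotent G] {k l : ℤ} (hconj : IsConj (x ^ k) (x ^ l))
    (hcop : IsCoprime (k - l) (orderOf x)) : x = 1 := by
  have descent (n : ℕ) (hx : x ∈ Subgroup.upperCentralSeries G (n + 1)) :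
      x ∈ Subgroup.upperCentralSeries G n := by
    refine mem_of_zpow_mem_of_isCoprime_orderOf ?_ hcop
    rw [zpow_sub, ← div_eq_mul_inv]
    exact div_mem_upperCentralSeries_of_isConj hconj (zpow_mem hx k)
  have eq_one_of_mem (n : ℕ) (hx : x ∈ Subgroup.upperCentralSeries G n) : x = 1 := by
    induction n with
    | zero => simpa using hx
    | succ n ih => exact ih (descent n hx)
  obtain ⟨n, hn⟩ := Group.IsNilpotent.nilpotent G
  exact eq_one_of_mem n (hn ▸ Subgroup.mem_top x)

theorem IsRSElement.eq_one_of_coprime_six [Group.IsNilpotent G] (hx : IsRSElement x)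
    (h6 : Nat.Coprime 6 (orderOf x)) : x = 1 := by
  have h2 : Nat.Coprime 2 (orderOf x) := h6.coprime_dvd_left (by decide)
  have h3 : Nat.Coprime 3 (orderOf x) := h6.coprime_dvd_left (by decide)
  rcases hx 2 two_pos h2 with hconj | hconj
  · exact eq_one_of_isConj_zpow_zpow (k := 2) (l := 1) (by simpa using hconj) isCoprime_one_left
  · exact eq_one_of_isConj_zpow_zpow (k := 2) (l := -1) (by simpa using hconj)
      (by simpa using h3.isCoprime)

end

theorem primes_of_rsSubgroup_nilpotent_general {G : Type*} [Group G] [Group.IsNilpotent G]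
    {A : Subgroup G} (hA : IsRSSubgroup A) {a : G} (haA : a ∈ A) (ha : IsOfFinOrder a)
    {q : ℕ} (hq : q.Prime) (hqa : q ∣ orderOf a) : q ∈ ({2, 3} : Set ℕ) := by
  by_contra hq23
  obtain ⟨hq2, hq3⟩ : q ≠ 2 ∧ q ≠ 3 := by simpa using hq23
  have h6 : Nat.Coprime 6 q :=
    Nat.Coprime.mul_left (m := 2) (n := 3) ((Nat.coprime_primes Nat.prime_two hq).2 hq2.symm)
      ((Nat.coprime_primes Nat.prime_three hq).2 hq3.symm)
  set b := a ^ (orderOf a / q)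
  have hb : orderOf b = q := orderOf_pow_orderOf_div ha.orderOf_pos.ne' hqa
  have hbRS : IsRSElement b := hA b (pow_mem haA _) ha.pow
  have hb1 : b = 1 := hbRS.eq_one_of_coprime_six (hb.symm ▸ h6)
  exact hq.ne_one (by rw [← hb, hb1, orderOf_one])

/-- If `A` is a normal RS-subgroup of a finite nilpotent group `G`, then every prime
dividing the order of `A` belongs to `{2, 3}`. -/
theorem primes_of_rsSubgroup_nilpotent {G : Type*} [Group G] [Finite G]
    [Group.IsNilpotent G] (A : Subgroup G) [A.Normal] (hA : IsRSSubgroup A) :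
    ∀ q : ℕ, q.Prime → q ∣ Nat.card A → q ∈ ({2, 3} : Set ℕ) := by
  intro q hq hqA
  have : Fact q.Prime := ⟨hq⟩
  obtain ⟨a, ha⟩ := exists_prime_orderOf_dvd_card' (G := A) q hqA
  exact primes_of_rsSubgroup_nilpotent_general hA a.2 (isOfFinOrder_of_finite _) hq
    (by rw [Subgroup.orderOf_coe, ha])
end
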